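/- arXiv:2602.22181 — 2 statements merged into one kernel-verified Lean document; each statement's English description precedes it below -/
import Mathlib

section
/- Every finite 5-tuple regular graph is homogeneous. -/
/-- A graph is homogeneous if every isomorphism between finite induced subgraphs
extends to an automorphism. -/
def SimpleGraph.IsHomogeneous {V : Type*} (Γ : SimpleGraph V) : Prop :=
  ∀ (A : Finset V) (f : V → V), Set.InjOn f A →
    (∀ x ∈ A, ∀ y ∈ A, (Γ.Adj x y ↔ Γ.Adj (f x) (f y))) →
    ∃ g : Γ ≃g Γ, ∀ x ∈ A, g x = f x
/-- `t`-tuple regularity: for every `s ≤ t`, any two `s`-tuples of distinct vertices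
inducing isomorphic subgraphs have the same number of common neighbours. -/
def SimpleGraph.IsTupleRegular {V : Type*} (Γ : SimpleGraph V) (t : ℕ) : Prop :=
  ∀ s, s ≤ t → ∀ x y : Fin s → V, Function.Injective x → Function.Injective y →
    (∀ i j, Γ.Adj (x i) (x j) ↔ Γ.Adj (y i) (y j)) →
    Nat.card {z : V // ∀ i, Γ.Adj z (x i)} = Nat.card {z : V // ∀ i, Γ.Adj z (y i)}

namespace TupleRegular

section

open Classical Finset Function

variable {V : Type*}

/-- The strong form of `t`-tuple regularity, relative to a set `S` of vertices: tuples in `S`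
inducing isomorphic subgraphs have the same number of extensions in `S` of every type. -/
def Reg (G : SimpleGraph V) (S : Finset V) (t : ℕ) : Prop :=
  ∀ n ≤ t, ∀ x y : Fin n → V, (∀ i, x i ∈ S) → (∀ i, y i ∈ S) → Injective x → Injective y →
    (∀ i j, G.Adj (x i) (x j) ↔ G.Adj (y i) (y j)) → ∀ σ : Fin n → Prop,
    #{z ∈ S | ∀ i, z ≠ x i ∧ (G.Adj z (x i) ↔ σ i)} =
      #{z ∈ S | ∀ i, z ≠ y i ∧ (G.Adj z (y i) ↔ σ i)}

/-- The neighbours of `x` in `S`. -/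
noncomputable def nb (G : SimpleGraph V) (S : Finset V) (x : V) : Finset V := {z ∈ S | G.Adj x z}

/-- The vertices of `S` distinct from and not adjacent to `x`. -/
noncomputable def nn (G : SimpleGraph V) (S : Finset V) (x : V) : Finset V :=
  {z ∈ S | z ≠ x ∧ ¬ G.Adj x z}

variable {G : SimpleGraph V} {S : Finset V} {t : ℕ}

theorem mem_nb {x z : V} : z ∈ nb G S x ↔ z ∈ S ∧ G.Adj x z := by simp [nb]

theorem mem_nn {x z : V} : z ∈ nn G S x ↔ z ∈ S ∧ z ≠ x ∧ ¬ G.Adj x z := by simp [nn]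

theorem nb_compl (x : V) : nb Gᶜ S x = nn G S x := by
  ext z; simp [mem_nb, mem_nn, SimpleGraph.compl_adj, eq_comm]

theorem nn_compl (x : V) : nn Gᶜ S x = nb G S x := by
  ext z
  simp only [mem_nb, mem_nn, SimpleGraph.compl_adj, not_and, not_not]
  refine and_congr_right fun _ => ⟨fun h => h.2 (Ne.symm h.1), fun h => ⟨h.ne', fun _ => h⟩⟩

theorem Reg.mono {t' : ℕ} (h : Reg G S t) (ht : t' ≤ t) : Reg G S t' :=
  fun n hn => h n (hn.trans ht)

theorem Reg.compl (h : Reg G S t) : Reg Gᶜ S t := by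
  intro n hn x y hx hy ix iy hxy σ
  have key := h n hn x y hx hy ix iy (fun i j => by
    have := hxy i j
    simp only [SimpleGraph.compl_adj, ne_eq, ix.eq_iff, iy.eq_iff] at this
    by_cases hij : i = j
    · subst hij; simp
    · simpa [hij, not_iff_not] using this) (fun i => ¬ σ i)
  have e : ∀ (x : Fin n → V) (i : Fin n) (z : V), (z ≠ x i ∧ (Gᶜ.Adj z (x i) ↔ σ i)) ↔
      z ≠ x i ∧ (G.Adj z (x i) ↔ ¬ σ i) := by
    refine fun x i z => and_congr_right fun hz => ?_
    simp only [SimpleGraph.compl_adj, hz, ne_eq, not_false_eq_true, true_and]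
    tauto
  simp only [e]
  convert key

theorem Reg.of_cons {x₀ : V} {T : Finset V} {p : Prop} (h : Reg G S (t + 1)) (hx₀ : x₀ ∈ S)
    (hT : ∀ z, z ∈ T ↔ z ∈ S ∧ z ≠ x₀ ∧ (G.Adj z x₀ ↔ p)) : Reg G T t := by
  intro n hn x y hx hy ix iy hxy σ
  have hx' := fun i => (hT _).1 (hx i)
  have hy' := fun i => (hT _).1 (hy i)
  have key := h (n + 1) (by omega) (Fin.cons x₀ x) (Fin.cons x₀ y)
    (by simp [Fin.forall_fin_succ, hx₀, fun i => (hx' i).1])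
    (by simp [Fin.forall_fin_succ, hx₀, fun i => (hy' i).1])
    (by rw [Fin.cons_injective_iff]
        exact ⟨by rintro ⟨i, hi⟩; exact (hx' i).2.1 hi, ix⟩)
    (by rw [Fin.cons_injective_iff]
        exact ⟨by rintro ⟨i, hi⟩; exact (hy' i).2.1 hi, iy⟩)
    (by
      have a : ∀ i, (G.Adj (x i) x₀ ↔ G.Adj (y i) x₀) := fun i =>
        (hx' i).2.2.trans (hy' i).2.2.symm
      have b : ∀ i, (G.Adj x₀ (x i) ↔ G.Adj x₀ (y i)) := fun i => by
        simpa [G.adj_comm] using a i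
      simp [Fin.forall_fin_succ, hxy, a, b])
    (Fin.cons p σ)
  have e : ∀ x : Fin n → V, ({z ∈ T | ∀ i, z ≠ x i ∧ (G.Adj z (x i) ↔ σ i)} : Finset V) =
      {z ∈ S | ∀ i : Fin (n + 1), z ≠ (Fin.cons x₀ x : Fin (n + 1) → V) i ∧
        (G.Adj z ((Fin.cons x₀ x : Fin (n + 1) → V) i) ↔
          (Fin.cons p σ : Fin (n + 1) → Prop) i)} := by
    intro x
    ext z
    simp only [mem_filter, hT, Fin.forall_fin_succ, Fin.cons_zero, Fin.cons_succ]
    tauto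
  rw [e, e, key]

theorem Reg.restrict_nb {x₀ : V} (h : Reg G S (t + 1)) (hx₀ : x₀ ∈ S) : Reg G (nb G S x₀) t :=
  h.of_cons (p := True) hx₀ fun z => by
    simp only [mem_nb, iff_true, G.adj_comm z]
    exact ⟨fun h => ⟨h.1, h.2.ne', h.2⟩, fun h => ⟨h.1, h.2.2⟩⟩

theorem Reg.restrict_nn {x₀ : V} (h : Reg G S (t + 1)) (hx₀ : x₀ ∈ S) : Reg G (nn G S x₀) t :=
  h.of_cons (p := False) hx₀ fun z => by simp [mem_nn, G.adj_comm z]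

theorem reg_of_isTupleRegular [Fintype V] (h : G.IsTupleRegular t) : Reg G univ t := by
  intro n hn x y _ _ ix iy hxy σ
  have base : ∀ T : Finset (Fin n),
      #{z | ∀ i ∈ T, G.Adj z (x i)} = #{z | ∀ i ∈ T, G.Adj z (y i)} := by
    intro T
    have hT : #T ≤ t := (card_le_univ T).trans (by simpa using hn)
    have := h #T hT (x ∘ T.orderEmbOfFin rfl) (y ∘ T.orderEmbOfFin rfl)
      (ix.comp (T.orderEmbOfFin rfl).injective) (iy.comp (T.orderEmbOfFin rfl).injective)
      (fun i j => hxy _ _)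
    have e : ∀ x : Fin n → V, (∀ z, (∀ i, G.Adj z ((x ∘ T.orderEmbOfFin rfl) i)) ↔
        ∀ i ∈ T, G.Adj z (x i)) := by
      intro x z
      constructor
      · intro hz i hi
        have : i ∈ Set.range (T.orderEmbOfFin rfl) := by simpa using hi
        obtain ⟨j, rfl⟩ := this
        exact hz j
      · intro hz i
        exact hz _ (T.orderEmbOfFin_mem rfl i)
    simp only [e, Nat.card_eq_fintype_card, Fintype.card_subtype] at this
    exact this
  have step : ∀ U T : Finset (Fin n),
      #{z | (∀ i ∈ T, G.Adj z (x i)) ∧ ∀ i ∈ U, ¬ G.Adj z (x i)} =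
      #{z | (∀ i ∈ T, G.Adj z (y i)) ∧ ∀ i ∈ U, ¬ G.Adj z (y i)} := by
    intro U
    induction U using Finset.induction_on with
    | empty => intro T; simpa using base T
    | insert u U hu ih =>
      intro T
      have e : ∀ x : Fin n → V,
          #{z | (∀ i ∈ T, G.Adj z (x i)) ∧ ∀ i ∈ U, ¬ G.Adj z (x i)} =
          #{z | (∀ i ∈ insert u T, G.Adj z (x i)) ∧ ∀ i ∈ U, ¬ G.Adj z (x i)} +
          #{z | (∀ i ∈ T, G.Adj z (x i)) ∧ ∀ i ∈ insert u U, ¬ G.Adj z (x i)} := by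
        intro x
        rw [← card_filter_add_card_filter_not (s := {z | (∀ i ∈ T, G.Adj z (x i)) ∧
          ∀ i ∈ U, ¬ G.Adj z (x i)}) (fun z => G.Adj z (x u)), filter_filter, filter_filter]
        congr 2 <;> ext z <;> simp <;> tauto
      have h1 := e x
      have h2 := e y
      rw [ih T, ih (insert u T)] at h1
      omega
  have split : ∀ x : Fin n → V, Injective x →
      #{z | (∀ i ∈ ({i | σ i} : Finset (Fin n)), G.Adj z (x i)) ∧
        ∀ i ∈ ({i | ¬ σ i} : Finset (Fin n)), ¬ G.Adj z (x i)} =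
      #{z | ∀ i, z ≠ x i ∧ (G.Adj z (x i) ↔ σ i)} + #{j | ∀ i, G.Adj (x j) (x i) ↔ σ i} := by
    intro x ix
    have e1 : #{z | (∀ i ∈ ({i | σ i} : Finset (Fin n)), G.Adj z (x i)) ∧
        ∀ i ∈ ({i | ¬ σ i} : Finset (Fin n)), ¬ G.Adj z (x i)} =
        #{z | ∀ i, G.Adj z (x i) ↔ σ i} := by
      congr 1
      ext z
      simp only [mem_filter, mem_univ, true_and, ← forall_and]
      exact forall_congr' fun i => by tauto
    rw [e1, ← card_filter_add_card_filter_not (s := {z | ∀ i, G.Adj z (x i) ↔ σ i})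
      (fun z => ∀ i, z ≠ x i), filter_filter, filter_filter]
    congr 1
    · congr 1; ext z; simp [forall_and, and_comm]
    · rw [← card_image_of_injective _ ix]
      congr 1
      ext z
      simp only [mem_filter, mem_univ, true_and, mem_image, not_forall, not_not]
      constructor
      · rintro ⟨hz, i, rfl⟩; exact ⟨i, hz, rfl⟩
      · rintro ⟨i, hi, rfl⟩; exact ⟨hi, i, rfl⟩
  have h1 := split x ix
  have h2 := split y iy
  have h3 : #{j | ∀ i, G.Adj (x j) (x i) ↔ σ i} = #{j | ∀ i, G.Adj (y j) (y i) ↔ σ i} := by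
    congr 1; ext j; simp only [mem_filter, hxy]
  have h4 := step {i | ¬ σ i} {i | σ i}
  omega

theorem Reg.isTupleRegular [Fintype V] (h : Reg G univ t) : G.IsTupleRegular t := by
  intro n hn x y ix iy hxy
  have := h n hn x y (by simp) (by simp) ix iy hxy (fun _ => True)
  have e : ∀ x : Fin n → V, ∀ z, (∀ i, z ≠ x i ∧ (G.Adj z (x i) ↔ True)) ↔ ∀ i, G.Adj z (x i) := by
    intro x z
    exact forall_congr' fun i => by
      simp only [iff_true]; exact ⟨fun h => h.2, fun h => ⟨h.ne, h⟩⟩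
  simp only [e] at this
  simpa [Nat.card_eq_fintype_card, Fintype.card_subtype] using this

theorem Reg.extend (h : Reg G S t) {n : ℕ} (hn : n ≤ t) {x y : Fin n → V} (hx : ∀ i, x i ∈ S)
    (hy : ∀ i, y i ∈ S) (ix : Injective x) (iy : Injective y)
    (hxy : ∀ i j, G.Adj (x i) (x j) ↔ G.Adj (y i) (y j)) {z : V} (hz : z ∈ S) (hzx : ∀ i, z ≠ x i) :
    ∃ w ∈ S, ∀ i, w ≠ y i ∧ (G.Adj w (y i) ↔ G.Adj z (x i)) := by
  have := h n hn x y hx hy ix iy hxy fun i => G.Adj z (x i)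
  have hpos : 0 < #{w ∈ S | ∀ i, w ≠ y i ∧ (G.Adj w (y i) ↔ G.Adj z (x i))} := by
    rw [← this]
    exact card_pos.2 ⟨z, by simp [hz, hzx]⟩
  obtain ⟨w, hw⟩ := card_pos.1 hpos
  rw [mem_filter] at hw
  exact ⟨w, hw⟩

theorem isHomogeneous_of_forall_reg [Fintype V] (h : ∀ t, Reg G univ t) : G.IsHomogeneous := by
  intro A
  induction hc : #Aᶜ using Nat.strong_induction_on generalizing A with
  | _ c ih =>
  intro f hf hadj
  rcases eq_or_ne A univ with rfl | hA
  · have inj : Injective f := by simpa using hf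
    refine ⟨⟨Equiv.ofBijective f (Finite.injective_iff_bijective.1 inj), ?_⟩, fun x _ => rfl⟩
    intro a b
    exact (hadj a (mem_univ _) b (mem_univ _)).symm
  · obtain ⟨z, hz⟩ : ∃ z, z ∉ A := by
      by_contra hcon
      push Not at hcon
      exact hA (eq_univ_iff_forall.2 hcon)
    have memA : ∀ i : Fin #A, ((A.equivFin.symm i : A) : V) ∈ A := fun i => (A.equivFin.symm i).2
    obtain ⟨w, -, hw⟩ := (h #A).extend le_rfl (x := fun i => ((A.equivFin.symm i : A) : V))
      (y := fun i => f ((A.equivFin.symm i : A) : V)) (by simp) (by simp)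
      (Subtype.val_injective.comp A.equivFin.symm.injective)
      (fun i j hij => A.equivFin.symm.injective (Subtype.val_injective (hf (memA i) (memA j) hij)))
      (fun i j => hadj _ (memA i) _ (memA j)) (mem_univ z)
      (fun i hi => hz (hi ▸ memA i))
    have hw' : ∀ a ∈ A, w ≠ f a ∧ (G.Adj w (f a) ↔ G.Adj z a) := by
      intro a ha
      simpa using hw (A.equivFin ⟨a, ha⟩)
    have hne : ∀ a ∈ A, a ≠ z := fun a ha hza => hz (hza ▸ ha)
    obtain ⟨g, hg⟩ := ih #(insert z A)ᶜ (by
        rw [← hc]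
        refine card_lt_card ⟨compl_subset_compl.2 (subset_insert _ _), fun hsub => ?_⟩
        have := hsub (mem_compl.2 hz)
        simp at this) (insert z A) rfl (Function.update f z w) (by
        intro a ha b hb hab
        simp only [coe_insert, Set.mem_insert_iff, mem_coe] at ha hb
        rcases ha with rfl | ha <;> rcases hb with rfl | hb
        · rfl
        · rw [update_self, update_of_ne (hne b hb)] at hab
          exact absurd hab (hw' b hb).1
        · rw [update_self, update_of_ne (hne a ha)] at hab
          exact absurd hab.symm (hw' a ha).1
        · rw [update_of_ne (hne a ha), update_of_ne (hne b hb)] at hab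
          exact hf ha hb hab) (by
        intro a ha b hb
        rw [mem_insert] at ha hb
        rcases ha with rfl | ha <;> rcases hb with rfl | hb
        · simp
        · rw [update_self, update_of_ne (hne b hb), (hw' b hb).2]
        · rw [update_self, update_of_ne (hne a ha), G.adj_comm, G.adj_comm (f a), (hw' a ha).2]
        · rw [update_of_ne (hne a ha), update_of_ne (hne b hb)]
          exact hadj a ha b hb)
    refine ⟨g, fun a ha => ?_⟩
    rw [hg a (mem_insert_of_mem ha), update_of_ne (hne a ha)]

theorem isHomogeneous_of_compl (h : Gᶜ.IsHomogeneous) : G.IsHomogeneous := by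
  intro A f hf hadj
  obtain ⟨g, hg⟩ := h A f hf (by
    intro a ha b hb
    simp only [SimpleGraph.compl_adj, ne_eq, hadj a ha b hb, hf.eq_iff ha hb])
  refine ⟨⟨g.toEquiv, ?_⟩, hg⟩
  intro a b
  have := g.map_rel_iff (a := a) (b := b)
  simp only [SimpleGraph.compl_adj, ne_eq, g.injective.eq_iff] at this
  by_cases hab : a = b
  · subst hab; simp
  · simpa [hab, not_iff_not] using this

/-- A regular graph of small valency has no large tuples with common neighbours. -/
theorem isHomogeneous_of_card_nb_le [Fintype V] (h : Reg G univ t) (hk : ∀ x, #(nb G univ x) ≤ t) :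
    G.IsHomogeneous := by
  refine isHomogeneous_of_forall_reg fun s => reg_of_isTupleRegular ?_
  intro n hn x y ix iy hxy
  rcases le_or_gt n t with hnt | hnt
  · exact h.isTupleRegular n hnt x y ix iy hxy
  · have : ∀ x : Fin n → V, Injective x → Nat.card {z : V // ∀ i, G.Adj z (x i)} = 0 := by
      intro x ix
      have : IsEmpty {z : V // ∀ i, G.Adj z (x i)} := ⟨fun ⟨z, hz⟩ => by
        have h1 : univ.image x ⊆ TupleRegular.nb G univ z := by
          intro w hw
          obtain ⟨i, -, rfl⟩ := mem_image.1 hw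
          exact mem_nb.2 ⟨mem_univ _, hz i⟩
        have h2 := (card_le_card h1).trans (hk z)
        rw [card_image_of_injective _ ix, card_univ, Fintype.card_fin] at h2
        omega⟩
      simp
    rw [this x ix, this y iy]

/-- A regular graph in which adjacency is transitive is homogeneous. -/
theorem isHomogeneous_of_trans [Fintype V] (h : Reg G univ t) (ht : 1 ≤ t)
    (hG : ∀ a b c, G.Adj a b → G.Adj a c → b ≠ c → G.Adj b c) : G.IsHomogeneous := by
  refine isHomogeneous_of_forall_reg fun s => reg_of_isTupleRegular ?_
  have reg : ∀ a b, #(nb G univ a) = #(nb G univ b) := by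
    intro a b
    have := h 1 ht ![a] ![b] (by simp) (by simp) (injective_of_subsingleton _)
      (injective_of_subsingleton _) (by simp) (fun _ => True)
    convert this using 2 <;> ext z <;> simp [mem_nb, G.adj_comm z] <;>
      exact fun h => h.ne'
  intro n hn x y ix iy hxy
  rcases n with _ | n
  · simp
  by_cases hcl : ∀ i j, i ≠ j → G.Adj (x i) (x j)
  · have : ∀ x : Fin (n + 1) → V, Injective x → (∀ i j, i ≠ j → G.Adj (x i) (x j)) →
        Nat.card {z : V // ∀ i, G.Adj z (x i)} + n = #(nb G univ (x 0)) := by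
      intro x ix hx
      rw [Nat.card_eq_fintype_card, Fintype.card_subtype]
      have : nb G univ (x 0) = ({z | ∀ i, G.Adj z (x i)} : Finset V) ∪
          univ.image (fun i : Fin n => x i.succ) := by
        ext z
        simp only [mem_nb, mem_univ, true_and, mem_union, mem_filter, mem_image]
        constructor
        · intro hz
          by_cases hzx : ∃ i : Fin n, x i.succ = z
          · exact Or.inr hzx
          · refine Or.inl fun i => ?_
            refine Fin.cases hz.symm (fun i => ?_) i
            exact hG (x 0) z (x i.succ) hz (hx _ _ (Fin.succ_ne_zero i).symm)
              fun hzi => hzx ⟨i, hzi.symm⟩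
        · rintro (hz | ⟨i, rfl⟩)
          · exact (hz 0).symm
          · exact hx _ _ (Fin.succ_ne_zero i).symm
      rw [this, card_union_of_disjoint, card_image_of_injective]
      · simp
      · exact fun i j hij => Fin.succ_injective _ (ix hij)
      · rw [disjoint_left]
        intro z hz hz'
        obtain ⟨i, -, rfl⟩ := mem_image.1 hz'
        exact G.irrefl ((mem_filter.1 hz).2 i.succ)
    have h1 := this x ix hcl
    have h2 := this y iy fun i j hij => (hxy i j).1 (hcl i j hij)
    have := reg (x 0) (y 0)
    omega
  · push Not at hcl
    obtain ⟨i, j, hij, hn⟩ := hcl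
    have : ∀ x : Fin (n + 1) → V, Injective x → ¬ G.Adj (x i) (x j) →
        Nat.card {z : V // ∀ i, G.Adj z (x i)} = 0 := by
      intro x ix hx
      have : IsEmpty {z : V // ∀ i, G.Adj z (x i)} :=
        ⟨fun ⟨z, hz⟩ => hx (hG z _ _ (hz i) (hz j) fun h => hij (ix h))⟩
      simp
    rw [this x ix hn, this y iy fun h => hn ((hxy i j).2 h)]

end

section

open Classical Finset Function

variable {V : Type*} {G : SimpleGraph V} {S : Finset V} {t : ℕ}

/-- The number of common neighbours of `u` and `w` in `T`. -/
noncomputable def cn (G : SimpleGraph V) (T : Finset V) (u w : V) : ℕ := #(nb G (nb G T u) w)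

/-- The vertices of `S` of type `τ` over the tuple `b`. -/
noncomputable def fib (G : SimpleGraph V) (S : Finset V) {m : ℕ} (b : Fin m → V)
    (τ : Fin m → Prop) : Finset V :=
  {z ∈ S | ∀ i, z ≠ b i ∧ (G.Adj z (b i) ↔ τ i)}

theorem mem_fib {m : ℕ} {b : Fin m → V} {τ : Fin m → Prop} {z : V} :
    z ∈ fib G S b τ ↔ z ∈ S ∧ ∀ i, z ≠ b i ∧ (G.Adj z (b i) ↔ τ i) := by
  simp [fib]

theorem cn_self (T : Finset V) (u : V) : cn G T u u = #(nb G T u) := by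
  unfold cn; congr 1; ext z; simp [mem_nb]

theorem cn_comm (T : Finset V) (u w : V) : cn G T u w = cn G T w u := by
  unfold cn; congr 1; ext z; simp [mem_nb]; tauto

theorem exists_const {ι β : Type*} [Inhabited β] (P : ι → Prop) (f : ι → β)
    (h : ∀ i j, P i → P j → f i = f j) : ∃ c, ∀ i, P i → f i = c := by
  by_cases hP : ∃ i, P i
  · obtain ⟨i, hi⟩ := hP
    exact ⟨f i, fun j hj => h j i hj hi⟩
  · exact ⟨default, fun i hi => absurd ⟨i, hi⟩ hP⟩

theorem Reg.cn_fib_eq {m : ℕ} (h : Reg G S t) (hm : m + 2 ≤ t) {b b' : Fin m → V}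
    (hb : ∀ i, b i ∈ S) (hb' : ∀ i, b' i ∈ S) (ib : Injective b) (ib' : Injective b')
    (hbb : ∀ i j, G.Adj (b i) (b j) ↔ G.Adj (b' i) (b' j)) (τ : Fin m → Prop)
    {τ₁ τ₂ : Fin m → Prop} {u w u' w' : V} (hu : u ∈ fib G S b τ₁) (hw : w ∈ fib G S b τ₂)
    (hu' : u' ∈ fib G S b' τ₁) (hw' : w' ∈ fib G S b' τ₂) (huw : u = w ↔ u' = w')
    (adj : G.Adj u w ↔ G.Adj u' w') :
    cn G (fib G S b τ) u w = cn G (fib G S b' τ) u' w' := by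
  rw [mem_fib] at hu hw hu' hw'
  by_cases e : u = w
  · obtain rfl := e
    obtain rfl := huw.1 rfl
    have key := h (m + 1) (by omega) (Fin.cons u b) (Fin.cons u' b')
      (by simp [Fin.forall_fin_succ, hu.1, hb]) (by simp [Fin.forall_fin_succ, hu'.1, hb'])
      (by rw [Fin.cons_injective_iff]; exact ⟨by rintro ⟨i, hi⟩; exact (hu.2 i).1 hi.symm, ib⟩)
      (by rw [Fin.cons_injective_iff]; exact ⟨by rintro ⟨i, hi⟩; exact (hu'.2 i).1 hi.symm, ib'⟩)
      (by simp [Fin.forall_fin_succ, hbb, fun i => G.adj_comm (b i) u,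
            fun i => G.adj_comm (b' i) u', fun i => (hu.2 i).2, fun i => (hu'.2 i).2])
      (Fin.cons True τ)
    have conv : ∀ (u : V) (b : Fin m → V), cn G (fib G S b τ) u u = #{z ∈ S | ∀ i : Fin (m + 1),
        z ≠ (Fin.cons u b : Fin (m + 1) → V) i ∧ (G.Adj z ((Fin.cons u b : Fin (m + 1) → V) i) ↔
          (Fin.cons True τ : Fin (m + 1) → Prop) i)} := by
      intro u b
      rw [cn_self]
      congr 1
      ext z
      simp only [mem_nb, mem_fib, mem_filter, Fin.forall_fin_succ, Fin.cons_zero, Fin.cons_succ,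
        iff_true, G.adj_comm z u]
      exact ⟨fun hz => ⟨hz.1.1, ⟨hz.2.ne', hz.2⟩, hz.1.2⟩, fun hz => ⟨⟨hz.1, hz.2.2⟩, hz.2.1.2⟩⟩
    rw [conv, conv, key]
  · have e' : u' ≠ w' := fun h => e (huw.2 h)
    have key := h (m + 2) hm (Fin.cons u (Fin.cons w b)) (Fin.cons u' (Fin.cons w' b'))
      (by simp [Fin.forall_fin_succ, hu.1, hw.1, hb])
      (by simp [Fin.forall_fin_succ, hu'.1, hw'.1, hb'])
      (by
        rw [Fin.cons_injective_iff, Fin.cons_injective_iff]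
        refine ⟨?_, by rintro ⟨i, hi⟩; exact (hw.2 i).1 hi.symm, ib⟩
        rintro ⟨i, hi⟩
        refine Fin.cases (fun hi => e hi.symm) (fun i hi => (hu.2 i).1 hi.symm) i hi)
      (by
        rw [Fin.cons_injective_iff, Fin.cons_injective_iff]
        refine ⟨?_, by rintro ⟨i, hi⟩; exact (hw'.2 i).1 hi.symm, ib'⟩
        rintro ⟨i, hi⟩
        refine Fin.cases (fun hi => e' hi.symm) (fun i hi => (hu'.2 i).1 hi.symm) i hi)
      (by simp [Fin.forall_fin_succ, hbb, fun i => G.adj_comm (b i) u, fun i => G.adj_comm (b i) w,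
            fun i => G.adj_comm (b' i) u', fun i => G.adj_comm (b' i) w', fun i => (hu.2 i).2,
            fun i => (hu'.2 i).2,
            fun i => (hw.2 i).2, fun i => (hw'.2 i).2, adj, G.adj_comm w u, G.adj_comm w' u'])
      (Fin.cons True (Fin.cons True τ))
    have conv : ∀ (u w : V) (b : Fin m → V), cn G (fib G S b τ) u w =
        #{z ∈ S | ∀ i : Fin (m + 2), z ≠ (Fin.cons u (Fin.cons w b) : Fin (m + 2) → V) i ∧
          (G.Adj z ((Fin.cons u (Fin.cons w b) : Fin (m + 2) → V) i) ↔
          (Fin.cons True (Fin.cons True τ) : Fin (m + 2) → Prop) i)} := by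
      intro u w b
      unfold cn
      congr 1
      ext z
      simp only [mem_nb, mem_fib, mem_filter, Fin.forall_fin_succ (n := m + 1),
        Fin.forall_fin_succ (n := m), Fin.cons_zero, Fin.cons_succ,
        iff_true, G.adj_comm z u, G.adj_comm z w]
      exact ⟨fun hz => ⟨hz.1.1.1, ⟨hz.1.2.ne', hz.1.2⟩, ⟨hz.2.ne', hz.2⟩, hz.1.1.2⟩,
        fun hz => ⟨⟨⟨hz.1, hz.2.2.2⟩, hz.2.1.2⟩, hz.2.2.1.2⟩⟩
    rw [conv, conv, key]

/-- Common neighbour counts within fibres depend only on types. -/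
theorem Reg.coh {m : ℕ} (h : Reg G S t) (hm : m + 2 ≤ t) (b : Fin m → V) (τ τ₁ τ₂ : Fin m → Prop) :
    ∃ α β γ : ℕ, ∀ b' : Fin m → V, (∀ i, b' i ∈ S) → Injective b' →
      (∀ i j, G.Adj (b' i) (b' j) ↔ G.Adj (b i) (b j)) →
      ∀ u ∈ fib G S b' τ₁, ∀ w ∈ fib G S b' τ₂,
        cn G (fib G S b' τ) u w = if u = w then γ else if G.Adj u w then α else β := by
  have key : ∀ p q : Prop, ∃ c, ∀ i : (Fin m → V) × V × V,
      ((∀ j, i.1 j ∈ S) ∧ Injective i.1 ∧ (∀ j k, G.Adj (i.1 j) (i.1 k) ↔ G.Adj (b j) (b k)) ∧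
      i.2.1 ∈ fib G S i.1 τ₁ ∧ i.2.2 ∈ fib G S i.1 τ₂ ∧ (i.2.1 = i.2.2 ↔ p) ∧
      (G.Adj i.2.1 i.2.2 ↔ q)) → cn G (fib G S i.1 τ) i.2.1 i.2.2 = c := by
    intro p q
    refine exists_const _ _ ?_
    rintro ⟨b₁, u, w⟩ ⟨b₂, u', w'⟩ ⟨h1, h2, h3, h4, h5, h6, h7⟩ ⟨h1', h2', h3', h4', h5', h6', h7'⟩
    exact h.cn_fib_eq hm h1 h1' h2 h2' (fun i j => (h3 i j).trans (h3' i j).symm) τ h4 h5 h4' h5'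
      (h6.trans h6'.symm) (h7.trans h7'.symm)
  obtain ⟨α, hα⟩ := key False True
  obtain ⟨β, hβ⟩ := key False False
  obtain ⟨γ, hγ⟩ := key True False
  refine ⟨α, β, γ, fun b' h1 h2 h3 u hu w hw => ?_⟩
  split_ifs with c1 c2
  · exact hγ (b', u, w) ⟨h1, h2, h3, hu, hw, by simpa using c1, by simp [c1]⟩
  · exact hα (b', u, w) ⟨h1, h2, h3, hu, hw, by simpa using c1, by simpa using c2⟩
  · exact hβ (b', u, w) ⟨h1, h2, h3, hu, hw, by simpa using c1, by simpa using c2⟩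

/-! ### Matrices attached to pairs of fibres -/

/-- The adjacency matrix. -/
noncomputable def A (G : SimpleGraph V) : Matrix V V ℝ :=
  Matrix.of fun u w => if G.Adj u w then 1 else 0

/-- The projection onto functions supported on `T` of total sum zero. -/
noncomputable def E (T : Finset V) : Matrix V V ℝ :=
  Matrix.of fun u w => if u ∈ T ∧ w ∈ T then (if u = w then 1 else 0) - (#T : ℝ)⁻¹ else 0

theorem E_transpose (T : Finset V) : (E T).transpose = E T := by
  ext u w
  simp only [E, Matrix.transpose_apply, Matrix.of_apply, and_comm, eq_comm]

theorem A_transpose : (A G).transpose = A G := by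
  ext u w
  simp only [A, Matrix.transpose_apply, Matrix.of_apply, G.adj_comm]

theorem sum_A_right (T : Finset V) (u : V) : ∑ z ∈ T, A G u z = #(nb G T u) := by
  simp [A, nb]

theorem sum_A_left (T : Finset V) (u : V) : ∑ z ∈ T, A G z u = #(nb G T u) := by
  simp [A, nb, G.adj_comm]

theorem sum_A_mul_A (T : Finset V) (u w : V) : ∑ z ∈ T, A G u z * A G z w = cn G T u w := by
  simp [A, nb, cn, filter_filter, ← ite_and, G.adj_comm w, and_comm]

variable [Fintype V]

/-- The centred adjacency matrix between `S` and `T`. -/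
noncomputable def B (G : SimpleGraph V) (S T : Finset V) : Matrix V V ℝ := E S * A G * E T

theorem E_mul_apply (T : Finset V) (M : Matrix V V ℝ) (u w : V) :
    (E T * M) u w = if u ∈ T then M u w - (#T : ℝ)⁻¹ * ∑ z ∈ T, M z w else 0 := by
  rw [Matrix.mul_apply]
  split_ifs with hu
  · have : ∀ z, E T u z * M z w = (if u = z then M z w else 0) -
        (if z ∈ T then (#T : ℝ)⁻¹ * M z w else 0) := by
      intro z
      by_cases hz : z ∈ T
      · by_cases h : u = z <;> simp [E, hu, hz, h, sub_mul]
      · have : u ≠ z := fun h => hz (h ▸ hu)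
        simp [E, hz, this]
    simp only [this, sum_sub_distrib, sum_ite_eq, mem_univ, if_true, ← sum_filter, mul_sum]
    simp
  · simp [E, hu]

theorem B_transpose (S T : Finset V) : (B G S T).transpose = B G T S := by
  rw [B, B, Matrix.transpose_mul, Matrix.transpose_mul, E_transpose, E_transpose, A_transpose,
    mul_assoc]

theorem mul_E_apply (T : Finset V) (M : Matrix V V ℝ) (u w : V) :
    (M * E T) u w = if w ∈ T then M u w - (#T : ℝ)⁻¹ * ∑ z ∈ T, M u z else 0 := by
  have := E_mul_apply T M.transpose w u
  rw [← E_transpose T, ← Matrix.transpose_mul] at this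
  simpa [E_transpose] using this

theorem E_mul_eq_zero {T : Finset V} {M : Matrix V V ℝ} {f : V → ℝ}
    (h : ∀ u ∈ T, ∀ w, M u w = f w) :
    E T * M = 0 := by
  ext u w
  rw [E_mul_apply]
  split_ifs with hu
  · have : (#T : ℝ) ≠ 0 := by exact_mod_cast (card_pos.2 ⟨u, hu⟩).ne'
    rw [h u hu, sum_congr rfl fun z hz => h z hz w]
    simp [this]
  · rfl

theorem E_mul_E_self (T : Finset V) : E T * E T = E T := by
  ext u w
  rw [E_mul_apply]
  split_ifs with hu
  · have : (#T : ℝ) ≠ 0 := by exact_mod_cast (card_pos.2 ⟨u, hu⟩).ne'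
    by_cases hw : w ∈ T
    · rw [show ∑ z ∈ T, E T z w = 0 by
        rw [sum_congr rfl (g := fun z => (if z = w then 1 else 0) - (#T : ℝ)⁻¹)
          fun z hz => by simp [E, hz, hw]]
        simp [this, hw]]
      simp
    · simp [E, hw]
  · simp [E, hu]

theorem E_mul_E_of_disjoint {S T : Finset V} (h : Disjoint S T) : E S * E T = 0 := by
  rw [disjoint_left] at h
  ext u w
  rw [Matrix.mul_apply]
  refine sum_eq_zero fun z _ => ?_
  by_cases hz : z ∈ S
  · simp [E, h hz]
  · simp [E, hz]

theorem E_mul_B (S T : Finset V) : E S * B G S T = B G S T := by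
  rw [B, ← mul_assoc, ← mul_assoc, E_mul_E_self]

theorem B_mul_E (S T : Finset V) : B G S T * E T = B G S T := by
  rw [B, mul_assoc, E_mul_E_self]

theorem E_mul_mul_congr {S T : Finset V} {M N : Matrix V V ℝ}
    (h : ∀ u ∈ S, ∀ w ∈ T, M u w = N u w) :
    E S * M * E T = E S * N * E T := by
  ext u w
  rw [mul_E_apply, mul_E_apply]
  split_ifs with hw
  · have : ∀ w ∈ T, (E S * M) u w = (E S * N) u w := by
      intro w hw
      rw [E_mul_apply, E_mul_apply, sum_congr rfl fun z hz => h z hz w hw]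
      split_ifs with hu
      · rw [h u hu w hw]
      · rfl
    rw [this w hw, sum_congr rfl this]
  · rfl

theorem A_E_A_apply (T : Finset V) (u w : V) :
    (A G * E T * A G) u w = cn G T u w - (#T : ℝ)⁻¹ * #(nb G T u) * #(nb G T w) := by
  rw [mul_assoc, Matrix.mul_apply]
  simp only [E_mul_apply, mul_ite, mul_zero, ← sum_filter, filter_mem_eq_inter, univ_inter,
    mul_sub, sum_sub_distrib, sum_A_mul_A, sum_A_left, ← sum_mul, sum_A_right]
  ring

/-- The basic product rule. -/
theorem B_mul_B_add {S T₁ T₂ U : Finset V} {α β γ : ℝ} {c₁ c₂ : ℕ} (h₁ : ∀ u ∈ S, #(nb G T₁ u) = c₁)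
    (h₂ : ∀ u ∈ S, #(nb G T₂ u) = c₂)
    (h : ∀ u ∈ S, ∀ w ∈ U, (cn G T₁ u w + cn G T₂ u w : ℝ) =
      if u = w then γ else if G.Adj u w then α else β) :
    B G S T₁ * B G T₁ U + B G S T₂ * B G T₂ U =
      (α - β) • B G S U + (γ - β) • (E S * E U) := by
  have e : ∀ T, B G S T * B G T U = E S * (A G * E T * A G) * E U := by
    intro T
    conv_rhs => rw [← E_mul_E_self T]
    simp only [B, mul_assoc]
  rw [e, e, ← add_mul, ← mul_add]
  rw [E_mul_mul_congr (N := (α - β) • A G + (γ - β) • (1 : Matrix V V ℝ) +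
    Matrix.of fun u w => β - (#T₁ : ℝ)⁻¹ * c₁ * #(nb G T₁ w) - (#T₂ : ℝ)⁻¹ * c₂ * #(nb G T₂ w))]
  · rw [mul_add, add_mul, E_mul_eq_zero (M := Matrix.of _) (fun u hu w => rfl)]
    simp [mul_add, add_mul, B]
  · intro u hu w hw
    have := h u hu w hw
    rw [Matrix.add_apply, A_E_A_apply, A_E_A_apply, h₁ u hu, h₂ u hu]
    by_cases e : u = w
    · subst e
      simp [A] at this ⊢
      linarith
    · by_cases ad : G.Adj u w
      · simp [A, e, ad] at this ⊢
        linarith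
      · simp [A, e, ad] at this ⊢
        linarith

theorem B_empty_right : B G S ∅ = 0 := by
  have : E (∅ : Finset V) = 0 := by ext; simp [E]
  simp [B, this]

theorem B_mul_B {S T U : Finset V} {α β γ : ℝ} {c : ℕ} (h₁ : ∀ u ∈ S, #(nb G T u) = c)
    (h : ∀ u ∈ S, ∀ w ∈ U, (cn G T u w : ℝ) = if u = w then γ else if G.Adj u w then α else β) :
    B G S T * B G T U = (α - β) • B G S U + (γ - β) • (E S * E U) := by
  have := B_mul_B_add (T₂ := ∅) (c₂ := 0) (U := U) h₁ (by simp [nb])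
    (fun u hu w hw => by rw [← h u hu w hw]; simp [cn, nb])
  simpa [B_empty_right] using this

theorem B_apply {S T : Finset V} {c d : ℕ} (hc : ∀ u ∈ S, #(nb G T u) = c)
    (hd : ∀ w ∈ T, #(nb G S w) = d) :
    ∃ x : ℝ, ∀ u ∈ S, ∀ w ∈ T, B G S T u w = A G u w - x := by
  have e : ∀ u ∈ S, ∀ w ∈ T, (E S * A G) u w = A G u w - (#S : ℝ)⁻¹ * d := by
    intro u hu w hw
    rw [E_mul_apply, if_pos hu, sum_A_left, hd w hw]
  refine ⟨(#S : ℝ)⁻¹ * d + (#T : ℝ)⁻¹ * (c - #T * ((#S : ℝ)⁻¹ * d)), fun u hu w hw => ?_⟩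
  rw [B, mul_E_apply, if_pos hw, e u hu w hw, sum_congr rfl (e u hu), sum_sub_distrib,
    sum_A_right, hc u hu, sum_const, nsmul_eq_mul]
  ring

end

section

open Classical Finset Function

variable {V : Type*} {G : SimpleGraph V} {S : Finset V} {t : ℕ}

/-- `G` restricted to `S` is strongly regular, possibly degenerate. -/
def IsSRG (G : SimpleGraph V) (S : Finset V) (k lam mu : ℕ) : Prop :=
  ∀ u ∈ S, ∀ w ∈ S, cn G S u w = if u = w then k else if G.Adj u w then lam else mu

/-- `S` contains a triangle. -/
def HasK3 (G : SimpleGraph V) (S : Finset V) : Prop :=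
  ∃ a ∈ S, ∃ b ∈ S, ∃ c ∈ S, G.Adj a b ∧ G.Adj a c ∧ G.Adj b c

/-- `S` contains an induced path with two edges. -/
def HasP3 (G : SimpleGraph V) (S : Finset V) : Prop :=
  ∃ a ∈ S, ∃ b ∈ S, ∃ c ∈ S, G.Adj a b ∧ G.Adj a c ∧ b ≠ c ∧ ¬ G.Adj b c

/-- `S` contains every graph on three vertices. -/
def Good (G : SimpleGraph V) (S : Finset V) : Prop :=
  HasK3 G S ∧ HasP3 G S ∧ HasK3 Gᶜ S ∧ HasP3 Gᶜ S

theorem Good.compl (h : Good G S) : Good Gᶜ S :=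
  ⟨h.2.2.1, h.2.2.2, by rw [compl_compl]; exact h.1, by rw [compl_compl]; exact h.2.1⟩

theorem nb_subset (x : V) : nb G S x ⊆ S := filter_subset _ _

theorem nn_subset (x : V) : nn G S x ⊆ S := filter_subset _ _

theorem disjoint_nb_nn (x : V) : Disjoint (nb G S x) (nn G S x) := by
  rw [disjoint_left]; intro z; rw [mem_nb, mem_nn]; tauto

theorem Reg.move (h : Reg G S t) (ht : 2 ≤ t) {a b c x : V} (ha : a ∈ S) (hb : b ∈ S) (hc : c ∈ S)
    (hx : x ∈ S) (hab : b ≠ a) (hac : c ≠ a) (hbc : c ≠ b) :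
    ∃ b' ∈ S, ∃ c' ∈ S, b' ≠ x ∧ c' ≠ x ∧ c' ≠ b' ∧ (G.Adj b' x ↔ G.Adj b a) ∧
      (G.Adj c' x ↔ G.Adj c a) ∧ (G.Adj c' b' ↔ G.Adj c b) := by
  obtain ⟨b', hb', h1⟩ := h.extend (n := 1) (by omega) (x := ![a]) (y := ![x]) (z := b)
    (by simpa) (by simpa) (injective_of_subsingleton _) (injective_of_subsingleton _)
    (by simp) hb (by simpa)
  simp only [Fin.forall_fin_one, Matrix.cons_val_zero] at h1
  obtain ⟨c', hc', h2⟩ := h.extend (n := 2) (by omega) (x := ![a, b]) (y := ![x, b']) (z := c)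
    (by simp [Fin.forall_fin_two, ha, hb]) (by simp [Fin.forall_fin_two, hx, hb'])
    (by simp [Injective, Fin.forall_fin_two, hab, hab.symm])
    (by simp [Injective, Fin.forall_fin_two, h1.1, h1.1.symm])
    (by simp [Fin.forall_fin_two, h1.2, G.adj_comm a b, G.adj_comm x b'])
    hc (by simp [Fin.forall_fin_two, hac, hbc])
  simp only [Fin.forall_fin_two, Matrix.cons_val_zero, Matrix.cons_val_one] at h2
  exact ⟨b', hb', c', hc', h1.1, h2.1.1, h2.2.1, h1.2, h2.1.2, h2.2.2⟩

theorem Reg.edge_nb (h : Reg G S t) (ht : 2 ≤ t) (hG : HasK3 G S) {x : V} (hx : x ∈ S) :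
    ∃ u ∈ nb G S x, ∃ v ∈ nb G S x, G.Adj u v := by
  obtain ⟨a, ha, b, hb, c, hc, hab, hac, hbc⟩ := hG
  obtain ⟨b', hb', c', hc', -, -, -, h1, h2, h3⟩ :=
    h.move ht ha hb hc hx hab.ne' hac.ne' hbc.ne'
  exact ⟨b', mem_nb.2 ⟨hb', (h1.2 hab.symm).symm⟩, c', mem_nb.2 ⟨hc', (h2.2 hac.symm).symm⟩,
    (h3.2 hbc.symm).symm⟩

theorem Reg.nonedge_nb (h : Reg G S t) (ht : 2 ≤ t) (hG : HasP3 G S) {x : V} (hx : x ∈ S) :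
    ∃ u ∈ nb G S x, ∃ v ∈ nb G S x, u ≠ v ∧ ¬ G.Adj u v := by
  obtain ⟨a, ha, b, hb, c, hc, hab, hac, hbc, hn⟩ := hG
  obtain ⟨b', hb', c', hc', -, -, h0, h1, h2, h3⟩ :=
    h.move ht ha hb hc hx hab.ne' hac.ne' hbc.symm
  exact ⟨b', mem_nb.2 ⟨hb', (h1.2 hab.symm).symm⟩, c', mem_nb.2 ⟨hc', (h2.2 hac.symm).symm⟩,
    h0.symm, fun e => hn (h3.1 e.symm).symm⟩

theorem Reg.edge_across (h : Reg G S t) (ht : 2 ≤ t) (hG : HasP3 G S) {x : V} (hx : x ∈ S) :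
    ∃ u ∈ nb G S x, ∃ v ∈ nn G S x, G.Adj u v := by
  obtain ⟨a, ha, b, hb, c, hc, hab, hac, hbc, hn⟩ := hG
  obtain ⟨b', hb', c', hc', -, g, -, h1, h2, h3⟩ :=
    h.move ht hb ha hc hx hab.ne hbc.symm hac.ne'
  exact ⟨b', mem_nb.2 ⟨hb', (h1.2 hab).symm⟩, c',
    mem_nn.2 ⟨hc', g, fun e => hn (h2.1 e.symm).symm⟩, (h3.2 hac.symm).symm⟩

theorem compl_adj' {a b : V} : Gᶜ.Adj a b ↔ a ≠ b ∧ ¬ G.Adj a b := SimpleGraph.compl_adj ..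

theorem Reg.nonedge_across (h : Reg G S t) (ht : 2 ≤ t) (hG : HasP3 Gᶜ S) {x : V} (hx : x ∈ S) :
    ∃ u ∈ nb G S x, ∃ v ∈ nn G S x, ¬ G.Adj u v := by
  obtain ⟨u, hu, v, hv, huv⟩ := h.compl.edge_across ht hG hx
  rw [nb_compl] at hu
  rw [nn_compl] at hv
  exact ⟨v, hv, u, hu, fun e => (compl_adj'.1 huv).2 e.symm⟩

theorem Reg.edge_nn (h : Reg G S t) (ht : 2 ≤ t) (hG : HasP3 Gᶜ S) {x : V} (hx : x ∈ S) :
    ∃ u ∈ nn G S x, ∃ v ∈ nn G S x, G.Adj u v := by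
  obtain ⟨u, hu, v, hv, huv, hn⟩ := h.compl.nonedge_nb ht hG hx
  rw [nb_compl] at hu hv
  exact ⟨u, hu, v, hv, by rw [compl_adj'] at hn; tauto⟩

theorem Reg.nonedge_nn (h : Reg G S t) (ht : 2 ≤ t) (hG : HasK3 Gᶜ S) {x : V} (hx : x ∈ S) :
    ∃ u ∈ nn G S x, ∃ v ∈ nn G S x, u ≠ v ∧ ¬ G.Adj u v := by
  obtain ⟨u, hu, v, hv, huv⟩ := h.compl.edge_nb ht hG hx
  rw [nb_compl] at hu hv
  exact ⟨u, hu, v, hv, compl_adj'.1 huv⟩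

theorem card_partition {x : V} (hx : x ∈ S) (p : V → Prop) :
    #{z ∈ S | p z} = #{z ∈ nb G S x | p z} + #{z ∈ nn G S x | p z} + if p x then 1 else 0 := by
  have : S = insert x (nb G S x ∪ nn G S x) := by
    ext z
    simp only [mem_insert, mem_union, mem_nb, mem_nn]
    constructor
    · tauto
    · rintro (rfl | h | h)
      exacts [hx, h.1, h.1]
  have hn : x ∉ nb G S x ∪ nn G S x := by simp [mem_nb, mem_nn]
  conv_lhs => rw [this]
  rw [filter_insert]
  split_ifs with hp
  · rw [card_insert_of_notMem (by simp [hn]), filter_union,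
      card_union_of_disjoint (disjoint_filter_filter (disjoint_nb_nn x))]
  · rw [filter_union, card_union_of_disjoint (disjoint_filter_filter (disjoint_nb_nn x)), add_zero]

theorem card_eq {x : V} (hx : x ∈ S) : #S = #(nb G S x) + #(nn G S x) + 1 := by
  simpa using card_partition (G := G) hx fun _ => True

theorem dg_partition {x : V} (hx : x ∈ S) (u : V) :
    #(nb G S u) = #(nb G (nb G S x) u) + #(nb G (nn G S x) u) + if G.Adj u x then 1 else 0 :=
  card_partition hx _

theorem cn_eq_card (T : Finset V) (u w : V) : cn G T u w = #{z ∈ T | G.Adj u z ∧ G.Adj w z} := by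
  simp [cn, nb, filter_filter]

theorem cn_partition {x : V} (hx : x ∈ S) (u w : V) :
    cn G S u w = cn G (nb G S x) u w + cn G (nn G S x) u w +
      if G.Adj u x ∧ G.Adj w x then 1 else 0 := by
  simp only [cn_eq_card]
  convert card_partition hx fun z => G.Adj u z ∧ G.Adj w z

theorem fib_true (x : V) : fib G S ![x] ![True] = nb G S x := by
  ext z
  simp only [mem_fib, mem_nb, Fin.forall_fin_one, Matrix.cons_val_zero, iff_true, G.adj_comm z]
  exact ⟨fun h => ⟨h.1, h.2.2⟩, fun h => ⟨h.1, h.2.ne', h.2⟩⟩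

theorem fib_false (x : V) : fib G S ![x] ![False] = nn G S x := by
  ext z
  simp [mem_fib, mem_nn, G.adj_comm z]

theorem Reg.srg (h : Reg G S 2) : ∃ k lam mu, IsSRG G S k lam mu := by
  obtain ⟨α, β, γ, hc⟩ := h.coh (m := 0) (by omega) ![] ![] ![] ![]
  have : fib G S (![] : Fin 0 → V) ![] = S := by ext; simp [mem_fib]
  exact ⟨γ, α, β, by
    simpa [this, IsSRG] using hc ![] (by simp) (injective_of_subsingleton _) (by simp)⟩

theorem Reg.coh_one (h : Reg G S 3) {x : V} (hx : x ∈ S) (τ τ₁ τ₂ : Prop) : ∃ α β γ : ℕ,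
    ∀ u ∈ fib G S ![x] ![τ₁], ∀ w ∈ fib G S ![x] ![τ₂],
      cn G (fib G S ![x] ![τ]) u w = if u = w then γ else if G.Adj u w then α else β := by
  obtain ⟨α, β, γ, hc⟩ := h.coh (m := 1) (by omega) ![x] ![τ] ![τ₁] ![τ₂]
  exact ⟨α, β, γ, hc ![x] (by simpa) (injective_of_subsingleton _) (by simp)⟩

theorem IsSRG.card_nb {k lam mu : ℕ} (h : IsSRG G S k lam mu) {x : V} (hx : x ∈ S) :
    #(nb G S x) = k := by
  rw [← cn_self, h x hx x hx, if_pos rfl]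

theorem IsSRG.card_nb_nb {k lam mu : ℕ} (h : IsSRG G S k lam mu) {x u : V} (hx : x ∈ S)
    (hu : u ∈ nb G S x) : #(nb G (nb G S x) u) = lam := by
  rw [mem_nb] at hu
  have := h x hx u hu.1
  rwa [if_neg hu.2.ne, if_pos hu.2] at this

theorem IsSRG.card_nb_nn {k lam mu : ℕ} (h : IsSRG G S k lam mu) {x u : V} (hx : x ∈ S)
    (hu : u ∈ nn G S x) : #(nb G (nb G S x) u) = mu := by
  rw [mem_nn] at hu
  have := h x hx u hu.1
  rwa [if_neg hu.2.1.symm, if_neg hu.2.2] at this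

theorem IsSRG.card_nn_nb {k lam mu : ℕ} (h : IsSRG G S k lam mu) {x u : V} (hx : x ∈ S)
    (hu : u ∈ nb G S x) : #(nb G (nn G S x) u) + lam + 1 = k := by
  have := dg_partition (G := G) hx u
  rw [h.card_nb (mem_nb.1 hu).1, h.card_nb_nb hx hu, if_pos (mem_nb.1 hu).2.symm] at this
  omega

theorem IsSRG.card_nn_nn {k lam mu : ℕ} (h : IsSRG G S k lam mu) {x u : V} (hx : x ∈ S)
    (hu : u ∈ nn G S x) : #(nb G (nn G S x) u) + mu = k := by
  have := dg_partition (G := G) hx u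
  rw [h.card_nb (mem_nn.1 hu).1, h.card_nb_nn hx hu,
    if_neg fun e => (mem_nn.1 hu).2.2 e.symm] at this
  omega

theorem card_mul_nb {P Q : Finset V} {c d : ℕ} (hc : ∀ u ∈ P, #(nb G Q u) = c)
    (hd : ∀ w ∈ Q, #(nb G P w) = d) : #P * c = #Q * d := by
  refine card_mul_eq_card_mul G.Adj (fun u hu => ?_) fun w hw => ?_
  · rw [← hc u hu]; rfl
  · rw [← hd w hw]; congr 1; ext z; simp [bipartiteBelow, mem_nb, G.adj_comm]

theorem IsSRG.identity {k lam mu : ℕ} (h : IsSRG G S k lam mu) {x : V} (hx : x ∈ S) :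
    (k : ℝ) * (k - 1 - lam) = (#S - 1 - k) * mu := by
  have h1 : #(nb G S x) * (k - 1 - lam) = #(nn G S x) * mu :=
    card_mul_nb (fun u hu => by have := h.card_nn_nb hx hu; omega)
      fun w hw => h.card_nb_nn hx hw
  have h2 := card_eq (G := G) hx
  rw [h.card_nb hx] at h1 h2
  rcases Nat.eq_zero_or_pos k with hk | hk
  · subst hk
    have : (#(nn G S x) : ℝ) * mu = 0 := by exact_mod_cast by simpa using h1.symm
    rw [h2]; push_cast; linarith
  · obtain ⟨u, hu⟩ := card_pos.1 ((h.card_nb hx).symm ▸ hk)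
    have h3 := h.card_nn_nb hx hu
    have h4 : (k - 1 - lam) = #(nb G (nn G S x) u) := by omega
    rw [h4] at h1
    rw [h2]
    have h1' : (k : ℝ) * #(nb G (nn G S x) u) = #(nn G S x) * mu := by exact_mod_cast h1
    have h3' : (#(nb G (nn G S x) u) : ℝ) + lam + 1 = k := by exact_mod_cast h3
    push_cast
    rw [show (k : ℝ) - 1 - lam = #(nb G (nn G S x) u) by linarith]
    linarith

theorem split_alg {R : Type*} [Ring R] [Algebra ℝ R] {M E X Y : R} {π τ a p₀ t₀ : ℝ}
    (hME : M * E = M) (hEX : E * X = X) (hEE : E * E = E)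
    (h1 : M * M = π • M + τ • E) (h2 : M * X = a • X) (h3 : M * M + X * Y = p₀ • M + t₀ • E)
    (hX : X ≠ 0) (hM : M - a • E ≠ 0) (hEM : E * M = M) :
    a * (π - a) = - τ ∧ (π - a) ^ 2 = p₀ * (π - a) + t₀ := by
  have e1 : (a * a - π * a - τ) • X = 0 := by
    have : M * M * X = (a * a) • X := by rw [mul_assoc, h2, mul_smul_comm, h2, smul_smul]
    rw [h1, add_mul, smul_mul_assoc, smul_mul_assoc, hEX, h2] at this
    rw [sub_smul, sub_smul, ← this, smul_smul]
    abel
  have e1' := (smul_eq_zero.1 e1).resolve_right hX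
  refine ⟨by linarith, ?_⟩
  have e2 : (M - a • E) * (X * Y) = 0 := by
    rw [← mul_assoc, sub_mul, h2, smul_mul_assoc, hEX, sub_self, zero_mul]
  have e3 : X * Y = (p₀ - π) • M + (t₀ - τ) • E := by
    rw [h1] at h3
    rw [sub_smul, sub_smul, ← sub_eq_zero]
    rw [← sub_eq_zero] at h3
    rw [← h3]; abel
  rw [e3, sub_mul, mul_add, mul_smul_comm, mul_smul_comm, h1, hME, smul_mul_assoc, mul_add,
    mul_smul_comm, mul_smul_comm, hEM, hEE] at e2
  have e4 : ((p₀ - π) * (π - a) + (t₀ - τ)) • (M - a • E) = 0 := by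
    rw [← e2]
    have : τ = a * a - π * a := by linarith
    rw [this]
    module
  have e4' := (smul_eq_zero.1 e4).resolve_right hM
  nlinarith

variable [Fintype V]

theorem B_sub_smul_E_ne_zero {T : Finset V} {d : ℕ} (hd : ∀ u ∈ T, #(nb G T u) = d)
    (h1 : ∃ u ∈ T, ∃ v ∈ T, G.Adj u v) (h2 : ∃ u ∈ T, ∃ v ∈ T, u ≠ v ∧ ¬ G.Adj u v) (c : ℝ) :
    B G T T - c • E T ≠ 0 := by
  intro h0
  obtain ⟨x, hx⟩ := B_apply hd hd
  obtain ⟨u, hu, v, hv, huv⟩ := h1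
  obtain ⟨u', hu', v', hv', hne, huv'⟩ := h2
  have e1 := congrFun (congrFun h0 u) v
  have e2 := congrFun (congrFun h0 u') v'
  simp [hx u hu v hv, hx u' hu' v' hv', A, E, hu, hv, hu', hv', huv, huv', huv.ne, hne] at e1 e2
  linarith

theorem B_ne_zero {S T : Finset V} {c d : ℕ} (hc : ∀ u ∈ S, #(nb G T u) = c)
    (hd : ∀ w ∈ T, #(nb G S w) = d)
    (h1 : ∃ u ∈ S, ∃ v ∈ T, G.Adj u v) (h2 : ∃ u ∈ S, ∃ v ∈ T, ¬ G.Adj u v) :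
    B G S T ≠ 0 := by
  intro h0
  obtain ⟨x, hx⟩ := B_apply hc hd
  obtain ⟨u, hu, v, hv, huv⟩ := h1
  obtain ⟨u', hu', v', hv', huv'⟩ := h2
  have e1 := congrFun (congrFun h0 u) v
  have e2 := congrFun (congrFun h0 u') v'
  simp [hx u hu v hv, hx u' hu' v' hv', A, huv, huv'] at e1 e2
  linarith

end

section

open Classical Finset Function

variable {V : Type*} {G : SimpleGraph V} {S : Finset V} {t : ℕ}

/-- The parameters of a `3`-tuple regular graph and of its two subconstituents at `x`. -/
structure Split (G : SimpleGraph V) (S : Finset V) (x : V) where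
  (k lam mu n₃ n₂ kQ lamQ muQ αP βP αQ βQ : ℕ)
  (a b p q : ℝ)
  srg : IsSRG G S k lam mu
  srg_nb : IsSRG G (nb G S x) lam n₃ n₂
  srg_nn : IsSRG G (nn G S x) kQ lamQ muQ
  cross_nb : ∀ u ∈ nb G S x, ∀ w ∈ nn G S x,
    cn G (nb G S x) u w = if G.Adj u w then αP else βP
  cross_nn : ∀ u ∈ nb G S x, ∀ w ∈ nn G S x,
    cn G (nn G S x) u w = if G.Adj u w then αQ else βQ
  a_eq : a = αP - βP
  b_eq : b = αQ - βQ
  a_add_b : a + b = lam - mu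
  kQ_eq : kQ + mu = k
  a_add_p : a + p = n₃ - n₂
  a_mul_p : a * p = n₂ - lam
  b_add_q : b + q = lamQ - muQ
  b_mul_q : b * q = muQ - kQ
  p_root : p ^ 2 = (lam - mu) * p + (k - mu)
  q_root : q ^ 2 = (lam - mu) * q + (k - mu)
  lam_pos : 0 < lam
  mu_pos : 0 < mu
  mu_lt : mu < k
  lam_lt : lam + 1 < k
  identity : (k : ℝ) * (k - 1 - lam) = (#S - 1 - k) * mu
  identity_nb : (lam : ℝ) * (lam - 1 - n₃) = (k - 1 - lam) * n₂
  identity_nn : (kQ : ℝ) * (kQ - 1 - lamQ) = (#S - 1 - k - 1 - kQ) * muQ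

theorem Reg.nonempty_split [Fintype V] (h : Reg G S 3) (hG : Good G S) {x : V} (hx : x ∈ S) :
    Nonempty (Split G S x) := by
  obtain ⟨g1, g2, g3, g4⟩ := hG
  obtain ⟨u₁, hu₁, v₁, hv₁, huv₁⟩ := h.edge_nb (by omega) g1 hx
  obtain ⟨u₂, hu₂, v₂, hv₂, huv₂, hn₂⟩ := h.nonedge_nb (by omega) g2 hx
  obtain ⟨u₃, hu₃, v₃, hv₃, huv₃⟩ := h.edge_nn (by omega) g4 hx
  obtain ⟨u₄, hu₄, v₄, hv₄, huv₄, hn₄⟩ := h.nonedge_nn (by omega) g3 hx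
  obtain ⟨u₅, hu₅, v₅, hv₅, huv₅⟩ := h.edge_across (by omega) g2 hx
  obtain ⟨u₆, hu₆, v₆, hv₆, huv₆⟩ := h.nonedge_across (by omega) g4 hx
  obtain ⟨k, lam, mu, srg⟩ := (h.mono (by omega : 2 ≤ 3)).srg
  obtain ⟨lam', n₃, n₂, srgP⟩ := (h.restrict_nb hx).srg
  obtain ⟨kQ, lamQ, muQ, srgQ⟩ := (h.restrict_nn hx).srg
  obtain ⟨αP, βP, _, hP⟩ := h.coh_one hx True True False
  obtain ⟨αQ, βQ, _, hQ⟩ := h.coh_one hx False True False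
  simp only [fib_true, fib_false] at hP hQ
  obtain rfl : lam' = lam := by rw [← srgP.card_nb hu₁, srg.card_nb_nb hx hu₁]
  have ne : ∀ u ∈ nb G S x, ∀ w ∈ nn G S x, u ≠ w := fun u hu w hw e =>
    disjoint_left.1 (disjoint_nb_nn x) hu (e ▸ hw)
  replace hP : ∀ u ∈ nb G S x, ∀ w ∈ nn G S x,
      cn G (nb G S x) u w = if G.Adj u w then αP else βP := fun u hu w hw => by
    rw [hP u hu w hw, if_neg (ne u hu w hw)]
  replace hQ : ∀ u ∈ nb G S x, ∀ w ∈ nn G S x,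
      cn G (nn G S x) u w = if G.Adj u w then αQ else βQ := fun u hu w hw => by
    rw [hQ u hu w hw, if_neg (ne u hu w hw)]
  have sumPQ : ∀ u ∈ nb G S x, ∀ w ∈ nn G S x,
      cn G (nb G S x) u w + cn G (nn G S x) u w = if G.Adj u w then lam' else mu := by
    intro u hu w hw
    have := cn_partition (G := G) hx u w
    rw [if_neg fun e => (mem_nn.1 hw).2.2 e.2.symm, srg u (nb_subset x hu) w (nn_subset x hw),
      if_neg (ne u hu w hw)] at this
    exact this.symm
  have s1 : αP + αQ = lam' := by
    have := sumPQ u₅ hu₅ v₅ hv₅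
    rwa [hP _ hu₅ _ hv₅, hQ _ hu₅ _ hv₅, if_pos huv₅, if_pos huv₅, if_pos huv₅] at this
  have s2 : βP + βQ = mu := by
    have := sumPQ u₆ hu₆ v₆ hv₆
    rwa [hP _ hu₆ _ hv₆, hQ _ hu₆ _ hv₆, if_neg huv₆, if_neg huv₆, if_neg huv₆] at this
  have kQ_eq : kQ + mu = k := by rw [← srgQ.card_nb hu₃, srg.card_nn_nn hx hu₃]
  have hPP : ∀ u ∈ nb G S x, #(nb G (nb G S x) u) = lam' := fun u hu => srgP.card_nb hu
  have hQQ : ∀ u ∈ nn G S x, #(nb G (nn G S x) u) = kQ := fun u hu => srgQ.card_nb hu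
  have hPQ : ∀ u ∈ nb G S x, #(nb G (nn G S x) u) = k - 1 - lam' := fun u hu => by
    have := srg.card_nn_nb hx hu; omega
  have hQP : ∀ u ∈ nn G S x, #(nb G (nb G S x) u) = mu := fun u hu => srg.card_nb_nn hx hu
  set P := nb G S x with hPdef
  set Q := nn G S x with hQdef
  have dis : E P * E Q = 0 := E_mul_E_of_disjoint (disjoint_nb_nn x)
  have dis' : E Q * E P = 0 := E_mul_E_of_disjoint (disjoint_nb_nn x).symm
  have r1 : B G P P * B G P P = (n₃ - n₂ : ℝ) • B G P P + (lam' - n₂ : ℝ) • E P := by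
    rw [B_mul_B hPP (α := n₃) (β := n₂) (γ := lam') (fun u hu w hw => by
      rw [srgP u hu w hw]; split_ifs <;> rfl), E_mul_E_self]
  have r1' : B G Q Q * B G Q Q = (lamQ - muQ : ℝ) • B G Q Q + (kQ - muQ : ℝ) • E Q := by
    rw [B_mul_B hQQ (α := lamQ) (β := muQ) (γ := kQ) (fun u hu w hw => by
      rw [srgQ u hu w hw]; split_ifs <;> rfl), E_mul_E_self]
  have r2 : B G P P * B G P Q = (αP - βP : ℝ) • B G P Q := by
    rw [B_mul_B hPP (α := αP) (β := βP) (γ := 0) (fun u hu w hw => by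
      rw [hP u hu w hw, if_neg (ne u hu w hw)]; split_ifs <;> rfl), dis]
    simp
  have r2' : B G Q Q * B G Q P = (αQ - βQ : ℝ) • B G Q P := by
    rw [B_mul_B hQQ (α := αQ) (β := βQ) (γ := 0) (fun u hu w hw => by
      rw [cn_comm, hQ w hw u hu, if_neg (ne w hw u hu).symm]
      simp only [G.adj_comm]
      split_ifs <;> rfl), dis']
    simp
  have r3 : B G P P * B G P P + B G P Q * B G Q P =
      (lam' - mu : ℝ) • B G P P + (k - mu : ℝ) • E P := by
    rw [B_mul_B_add hPP hPQ (α := lam' - 1) (β := mu - 1) (γ := k - 1) (fun u hu w hw => by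
      have := cn_partition (G := G) hx u w
      rw [if_pos ⟨(mem_nb.1 hu).2.symm, (mem_nb.1 hw).2.symm⟩,
        srg u (nb_subset x hu) w (nb_subset x hw)] at this
      have : (cn G P u w + cn G Q u w : ℝ) + 1 =
        ((if u = w then k else if G.Adj u w then lam' else mu : ℕ) : ℝ) := by
        rw [this]; push_cast; rfl
      split_ifs at this ⊢ <;> linarith), E_mul_E_self]
    congr 2 <;> ring
  have r3' : B G Q Q * B G Q Q + B G Q P * B G P Q =
      (lam' - mu : ℝ) • B G Q Q + (k - mu : ℝ) • E Q := by
    rw [B_mul_B_add hQQ hQP (α := lam') (β := mu) (γ := k) (fun u hu w hw => by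
      have := cn_partition (G := G) hx u w
      rw [if_neg fun e => (mem_nn.1 hu).2.2 e.1.symm,
        srg u (nn_subset x hu) w (nn_subset x hw)] at this
      have : (cn G P u w + cn G Q u w : ℝ)  =
        ((if u = w then k else if G.Adj u w then lam' else mu : ℕ) : ℝ) := by
        rw [this, add_zero]; push_cast; rfl
      rw [add_comm]
      split_ifs at this ⊢ <;> linarith), E_mul_E_self]
  have n1 : B G P Q ≠ 0 := B_ne_zero hPQ hQP ⟨u₅, hu₅, v₅, hv₅, huv₅⟩ ⟨u₆, hu₆, v₆, hv₆, huv₆⟩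
  have n2 : B G Q P ≠ 0 := B_ne_zero hQP hPQ ⟨v₅, hv₅, u₅, hu₅, huv₅.symm⟩
    ⟨v₆, hv₆, u₆, hu₆, fun e => huv₆ e.symm⟩
  have n3 := B_sub_smul_E_ne_zero hPP ⟨u₁, hu₁, v₁, hv₁, huv₁⟩ ⟨u₂, hu₂, v₂, hv₂, huv₂, hn₂⟩
  have n4 := B_sub_smul_E_ne_zero hQQ ⟨u₃, hu₃, v₃, hv₃, huv₃⟩ ⟨u₄, hu₄, v₄, hv₄, huv₄, hn₄⟩
  obtain ⟨c1, c2⟩ := split_alg (B_mul_E P P) (E_mul_B P Q) (E_mul_E_self P) r1 r2 r3 n1 (n3 _)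
    (E_mul_B P P)
  obtain ⟨c3, c4⟩ := split_alg (B_mul_E Q Q) (E_mul_B Q P) (E_mul_E_self Q) r1' r2' r3' n2 (n4 _)
    (E_mul_B Q Q)
  have i1 := srgP.identity hu₁
  have i2 := srgQ.identity hu₃
  have cS := card_eq (G := G) hx
  rw [srg.card_nb hx] at i1
  have cQ : (#Q : ℝ) = #S - 1 - k := by
    rw [cS, ← hPdef, srg.card_nb hx]; push_cast; ring
  rw [cQ] at i2
  refine ⟨⟨k, lam', mu, n₃, n₂, kQ, lamQ, muQ, αP, βP, αQ, βQ, _, _, _, _, srg, srgP, srgQ,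
    hP, hQ, rfl, rfl, ?_, kQ_eq, ?_, ?_, ?_, ?_, c2, c4, ?_, ?_, ?_, ?_, srg.identity hx, ?_, i2⟩⟩
  · rw [← s1, ← s2]; push_cast; ring
  · ring
  · linarith
  · ring
  · linarith
  · rw [← hPP u₁ hu₁]; exact card_pos.2 ⟨v₁, mem_nb.2 ⟨hv₁, huv₁⟩⟩
  · rw [← hQP v₅ hv₅]; exact card_pos.2 ⟨u₅, mem_nb.2 ⟨hu₅, huv₅.symm⟩⟩
  · have : 0 < kQ := by
      rw [← hQQ u₃ hu₃]; exact card_pos.2 ⟨v₃, mem_nb.2 ⟨hv₃, huv₃⟩⟩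
    omega
  · have : 0 < #(nb G Q u₅) := card_pos.2 ⟨v₅, mem_nb.2 ⟨hv₅, huv₅⟩⟩
    have := srg.card_nn_nb hx hu₅
    rw [← hQdef] at this
    omega
  · linarith

end

section

open Classical Finset Function

variable {V : Type*} {G : SimpleGraph V} {S : Finset V} {x : V}

/-- The eigenvalue of a `3`-tuple regular graph that need not be shared with the neighbourhood. -/
def Split.r (D : Split G S x) : ℝ := D.lam - D.mu - D.p

variable (D : Split G S x)

theorem Split.mu_eq : (D.mu : ℝ) = D.k + D.r * D.p := by
  have := D.p_root
  unfold Split.r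
  linarith

theorem Split.lam_eq : (D.lam : ℝ) = D.k + D.r + D.p + D.r * D.p := by
  have := D.mu_eq
  have h : D.r = D.lam - D.mu - D.p := rfl
  linarith

theorem Split.mul_neg : D.r * D.p < 0 := by
  have := D.mu_eq
  have h : (D.mu : ℝ) < D.k := by exact_mod_cast D.mu_lt
  linarith

theorem Split.one_add_mul_neg : (1 + D.r) * (1 + D.p) < 0 := by
  have := D.lam_eq
  have h : (D.lam : ℝ) + 1 < D.k := by exact_mod_cast D.lam_lt
  linarith

theorem Split.lam_pos' : (0 : ℝ) < D.lam := by exact_mod_cast D.lam_pos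

theorem Split.mu_pos' : (0 : ℝ) < D.mu := by exact_mod_cast D.mu_pos

theorem Split.k_pos : (0 : ℝ) < D.k := by
  have : (D.mu : ℝ) < D.k := by exact_mod_cast D.mu_lt
  linarith [D.mu_pos']

theorem Split.p_ne : D.p ≠ 0 := fun h => by have := D.mul_neg; simp [h] at this

theorem Split.r_ne : D.r ≠ 0 := fun h => by have := D.mul_neg; simp [h] at this

theorem Split.one_add_p_ne : 1 + D.p ≠ 0 := fun h => by have := D.one_add_mul_neg; simp [h] at this

theorem Split.one_add_r_ne : 1 + D.r ≠ 0 := fun h => by have := D.one_add_mul_neg; simp [h] at this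

theorem Split.q_eq : D.q = D.p ∨ D.q = D.r := by
  have h1 := D.p_root
  have h2 := D.q_root
  have : (D.q - D.p) * (D.q - D.r) = 0 := by unfold Split.r; linarith
  rcases mul_eq_zero.1 this with h | h
  · left; linarith
  · right; linarith

theorem Split.n₂_eq : (D.n₂ : ℝ) = D.lam + D.a * D.p := by linarith [D.a_mul_p]

theorem Split.n₃_eq : (D.n₃ : ℝ) = D.lam + D.a + D.p + D.a * D.p := by
  linarith [D.a_mul_p, D.a_add_p]

theorem Split.a_mul : D.a * (D.k + D.r) = D.r * D.lam := by
  have h1 := D.identity_nb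
  have h2 : (D.k : ℝ) - 1 - D.lam = -(1 + D.r) * (1 + D.p) := by rw [D.lam_eq]; ring
  rw [h2, D.n₂_eq, D.n₃_eq] at h1
  have h3 := mul_right_cancel₀ D.one_add_p_ne (a := D.lam * (1 + D.a))
    (c := (1 + D.r) * (D.lam + D.a * D.p)) (by linarith)
  have h4 := D.lam_eq
  linear_combination h3 - D.a * h4

theorem Split.k_add_r_ne : (D.k : ℝ) + D.r ≠ 0 := fun h => by
  have h1 := D.a_mul
  rw [h, mul_zero] at h1
  exact mul_ne_zero D.r_ne D.lam_pos'.ne' h1.symm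

theorem Split.b_eq' : D.b = D.r + D.p - D.a := by
  have := D.a_add_b
  unfold Split.r; linarith

theorem Split.kQ_eq' : (D.kQ : ℝ) = - (D.r * D.p) := by
  have := D.mu_eq
  have h : (D.kQ : ℝ) + D.mu = D.k := by exact_mod_cast D.kQ_eq
  linarith

theorem Split.identity_nn' : D.r * D.p * (1 + D.b) * (1 + D.q) =
    (#S - 1 - D.k - 1 + D.r * D.p) * (D.b * D.q - D.r * D.p) := by
  have h := D.identity_nn
  have h1 : (D.muQ : ℝ) = D.b * D.q - D.r * D.p := by linarith [D.b_mul_q, D.kQ_eq']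
  have h2 : (D.lamQ : ℝ) = D.muQ + D.b + D.q := by linarith [D.b_add_q]
  rw [h2, h1, D.kQ_eq'] at h
  linarith

theorem Split.identity' : (#S - 1 - D.k) * (D.k + D.r * D.p) =
    -(D.k * (1 + D.r) * (1 + D.p)) := by
  have h := D.identity
  rw [D.mu_eq, D.lam_eq] at h
  linarith

theorem Split.types :
    (D.q = D.p ∧ D.k * (D.r - D.p ^ 2 - 2 * D.p) = D.r * (D.p ^ 2 - 2 * D.r * D.p - D.r)) ∨
      (D.q = D.r ∧ D.k = -D.r * (D.p - D.r - 1)) := by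
  have h0 := D.a_mul
  have h1 := D.identity_nn'
  have h2 := D.identity'
  have h3 := D.b_eq'
  have h4 := D.lam_eq
  have hr := D.r_ne
  have hr1 := D.one_add_r_ne
  have hp := D.p_ne
  have hp1 := D.one_add_p_ne
  have hk := D.k_pos.ne'
  have hq := D.q_eq
  generalize D.r = r at *
  generalize D.p = p at *
  generalize D.q = q at *
  generalize D.a = a at *
  generalize D.b = b at *
  generalize (D.k : ℝ) = k at *
  generalize (#S : ℝ) = n at *
  generalize (D.lam : ℝ) = lam at *
  subst h3 h4
  have hb : (1 + (r + p - a)) * (k + r) = k + k * p + r - r ^ 2 * p := by linear_combination -h0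
  have sum : k * (n - 1 - k - 1) + r * p * (n - 1 - k - 1) =
      -k * (2 + r + p) + r * p * (r * p - 1) - r * p * (k + r * p) := by linear_combination h2
  rcases hq with rfl | rfl
  · refine Or.inl ⟨rfl, ?_⟩
    have e1 : (1 + (r + q - a)) * (n - 1 - k - 1 - r) = (1 + r) * (n - 1 - k - 1 + r * q) :=
      mul_left_cancel₀ hp (by linear_combination -h1)
    have e2 : (1 + (r + q - a)) * (2 * k + k * q + r * q) =
        k * (2 + r + q) - r * q * (r * q - 1) := mul_left_cancel₀ hr1 (by
      linear_combination -(k + r * q) * e1 + ((1 + (r + q - a)) - (1 + r)) * sum)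
    refine mul_left_cancel₀ hk ?_
    linear_combination (2 * k + k * q + r * q) * hb - (k + r) * e2
  · refine Or.inr ⟨rfl, ?_⟩
    have e1 : (1 + (q + p - a)) * (n - 1 - k - 1 - p) = (1 + p) * (n - 1 - k - 1 + q * p) :=
      mul_left_cancel₀ hr (by linear_combination -h1)
    have e2 : (1 + (q + p - a)) * (2 * k + k * q + q * p) =
        k * (2 + q + p) - q * p * (q * p - 1) := mul_left_cancel₀ hp1 (by
      linear_combination -(k + q * p) * e1 + ((1 + (q + p - a)) - (1 + p)) * sum)
    refine mul_left_cancel₀ (mul_ne_zero (mul_ne_zero hk hp) hr1) ?_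
    linear_combination -(2 * k + k * q + q * p) * hb + (k + q) * e2

end

section

open Classical Finset Function

variable {V : Type*} {G : SimpleGraph V} {S : Finset V} {t : ℕ}

/-- The common neighbours of `T` in `S`. -/
noncomputable def com (G : SimpleGraph V) (S T : Finset V) : Finset V :=
  {z ∈ S | ∀ a ∈ T, G.Adj z a}

/-- The vertices of `S \ T` with no neighbour in `T`. -/
noncomputable def far (G : SimpleGraph V) (S T : Finset V) : Finset V :=
  {z ∈ S | z ∉ T ∧ ∀ a ∈ T, ¬ G.Adj z a}

theorem mem_com {T : Finset V} {z : V} : z ∈ com G S T ↔ z ∈ S ∧ ∀ a ∈ T, G.Adj z a := by simp [com]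

theorem mem_far {T : Finset V} {z : V} :
    z ∈ far G S T ↔ z ∈ S ∧ z ∉ T ∧ ∀ a ∈ T, ¬ G.Adj z a := by simp [far]

theorem Reg.card_com (h : Reg G S t) (j : ℕ) (hj : j ≤ t) : ∃ c : ℕ, ∀ T : Finset V,
    (T ⊆ S ∧ #T = j ∧ ∀ a ∈ T, ∀ b ∈ T, ¬ G.Adj a b) → #(com G S T) = c := by
  refine exists_const _ _ ?_
  rintro T T' ⟨h1, rfl, h3⟩ ⟨h1', h2', h3'⟩
  have key := h #T hj (fun i => (T.equivFin.symm i : V))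
    (fun i => ((T'.equivFinOfCardEq h2').symm i : V))
    (fun i => h1 (T.equivFin.symm i).2) (fun i => h1' ((T'.equivFinOfCardEq h2').symm i).2)
    (Subtype.val_injective.comp (Equiv.injective _))
    (Subtype.val_injective.comp (Equiv.injective _))
    (fun i j => iff_of_false (h3 _ (T.equivFin.symm i).2 _ (T.equivFin.symm j).2)
      (h3' _ ((T'.equivFinOfCardEq h2').symm i).2 _ ((T'.equivFinOfCardEq h2').symm j).2))
    (fun _ => True)
  have conv : ∀ (T : Finset V) (n : ℕ) (e : T ≃ Fin n), com G S T =
      {z ∈ S | ∀ i, z ≠ (e.symm i : V) ∧ (G.Adj z (e.symm i : V) ↔ True)} := by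
    intro T n e
    ext z
    simp only [mem_com, mem_filter, iff_true]
    refine and_congr_right fun _ => ⟨fun hz i => ?_, fun hz a ha => ?_⟩
    · have := hz _ (e.symm i).2
      exact ⟨this.ne, this⟩
    · simpa using (hz (e ⟨a, ha⟩)).2
  rw [conv T _ T.equivFin, conv T' _ (T'.equivFinOfCardEq h2')]
  convert key

theorem card_mul_nb_real {P Q : Finset V} {c d : ℝ} (hc : ∀ u ∈ P, (#(nb G Q u) : ℝ) = c)
    (hd : ∀ w ∈ Q, (#(nb G P w) : ℝ) = d) : #P * c = #Q * d := by
  have : ∑ u ∈ P, #(nb G Q u) = ∑ w ∈ Q, #(nb G P w) := by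
    rw [show ∑ u ∈ P, #(nb G Q u) = ∑ u ∈ P, #(bipartiteAbove G.Adj Q u) from rfl,
      sum_card_bipartiteAbove_eq_sum_card_bipartiteBelow]
    refine sum_congr rfl fun w _ => ?_
    congr 1; ext z; simp [bipartiteBelow, mem_nb, G.adj_comm]
  have : ((∑ u ∈ P, #(nb G Q u) : ℕ) : ℝ) = ((∑ w ∈ Q, #(nb G P w) : ℕ) : ℝ) := by rw [this]
  push_cast at this
  rwa [sum_congr rfl hc, sum_congr rfl hd, sum_const, sum_const, nsmul_eq_mul, nsmul_eq_mul] at this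

section triangleFree

variable {k mu j c c' : ℕ} (hS : IsSRG G S k 0 mu)
  (hK : ∀ a ∈ S, ∀ b ∈ S, ∀ d ∈ S, G.Adj a b → G.Adj a d → ¬ G.Adj b d)
  (hc : ∀ T : Finset V, (T ⊆ S ∧ #T = j ∧ ∀ a ∈ T, ∀ b ∈ T, ¬ G.Adj a b) → #(com G S T) = c)
  (hc' : ∀ T : Finset V, (T ⊆ S ∧ #T = j + 1 ∧ ∀ a ∈ T, ∀ b ∈ T, ¬ G.Adj a b) →
    #(com G S T) = c')
  {T : Finset V} (hTS : T ⊆ S) (hT : #T = j) (hTi : ∀ a ∈ T, ∀ b ∈ T, ¬ G.Adj a b)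

include hc' hTS hT hTi in
theorem card_nb_com {w : V} (hw : w ∈ far G S T) : #(nb G (com G S T) w) = c' := by
  rw [mem_far] at hw
  rw [← hc' (insert w T)]
  · congr 1; ext z; simp only [mem_nb, mem_com, mem_insert, forall_eq_or_imp, G.adj_comm w]; tauto
  · refine ⟨insert_subset hw.1 hTS, by rw [card_insert_of_notMem hw.2.1, hT], ?_⟩
    intro a ha b hb
    rw [mem_insert] at ha hb
    rcases ha with rfl | ha <;> rcases hb with rfl | hb
    · exact G.irrefl
    · exact hw.2.2 b hb
    · exact fun e => hw.2.2 a ha e.symm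
    · exact hTi a ha b hb

include hS hK hTS hT in
theorem card_nb_far {m : V} (hm : m ∈ com G S T) : (#(nb G (far G S T) m) : ℝ) = k - j := by
  rw [mem_com] at hm
  have : nb G (far G S T) m = nb G S m \ T := by
    ext z
    simp only [mem_nb, mem_far, mem_sdiff]
    refine ⟨fun h => ⟨⟨h.1.1, h.2⟩, h.1.2.1⟩, fun h => ⟨⟨h.1.1, h.2, fun a ha => ?_⟩, h.1.2⟩⟩
    exact hK m hm.1 z h.1.1 a (hTS ha) h.1.2 (hm.2 a ha)
  have h2 : T ⊆ nb G S m := fun a ha => mem_nb.2 ⟨hTS ha, hm.2 a ha⟩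
  have h3 := card_sdiff_add_card_eq_card h2
  rw [this, ← hS.card_nb hm.1, ← h3, hT]
  push_cast; ring

include hS hK hc hc' hTS hT hTi in
theorem global_count : (#(far G S T) : ℝ) * c' = c * (k - j) := by
  rw [← hc T ⟨hTS, hT, hTi⟩]
  refine card_mul_nb_real (fun w hw => ?_) fun m hm => card_nb_far hS hK hTS hT hm
  rw [card_nb_com hc' hTS hT hTi hw]

include hS hK hc hc' hTS hT hTi in
theorem local_count (hj : 0 < j) {m : V} (hm : m ∈ com G S T) :
    (k - j : ℝ) * (c' - 1) = (c - 1) * (mu - j) := by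
  have e1 : #((com G S T).erase m) + 1 = c := by
    rw [card_erase_add_one hm, hc T ⟨hTS, hT, hTi⟩]
  have e1 : (#((com G S T).erase m) : ℝ) = c - 1 := by rw [← e1]; push_cast; ring
  rw [← card_nb_far hS hK hTS hT hm, ← e1]
  have hm' := mem_com.1 hm
  refine card_mul_nb_real (G := G) (fun w hw => ?_) fun m₂ hm₂ => ?_
  · rw [mem_nb] at hw
    have : nb G ((com G S T).erase m) w = (nb G (com G S T) w).erase m := by
      ext; simp only [mem_nb, mem_erase]; tauto
    rw [this, ← card_nb_com hc' hTS hT hTi hw.1,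
      ← card_erase_add_one (mem_nb.2 ⟨hm, hw.2.symm⟩ : m ∈ nb G (com G S T) w)]
    push_cast; ring
  · rw [mem_erase] at hm₂
    have hm₂' := mem_com.1 hm₂.2
    have : nb G (nb G (far G S T) m) m₂ = nb G (nb G S m) m₂ \ T := by
      ext z
      simp only [mem_nb, mem_far, mem_sdiff]
      refine ⟨fun h => ⟨⟨⟨h.1.1.1, h.1.2⟩, h.2⟩, h.1.1.2.1⟩,
        fun h => ⟨⟨⟨h.1.1.1, h.2, fun a ha => ?_⟩, h.1.1.2⟩, h.1.2⟩⟩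
      exact hK m hm'.1 z h.1.1.1 a (hTS ha) h.1.1.2 (hm'.2 a ha)
    have h2 : T ⊆ nb G (nb G S m) m₂ := fun a ha =>
      mem_nb.2 ⟨mem_nb.2 ⟨hTS ha, hm'.2 a ha⟩, hm₂'.2 a ha⟩
    have h3 := card_sdiff_add_card_eq_card h2
    have h4 : #(nb G (nb G S m) m₂) = mu := by
      obtain ⟨a, ha⟩ := card_pos.1 (hT ▸ hj)
      have := hS m hm'.1 m₂ hm₂'.1
      rwa [if_neg hm₂.1.symm, if_neg (hK a (hTS ha) m hm'.1 m₂ hm₂'.1 (hm'.2 a ha).symm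
        (hm₂'.2 a ha).symm)] at this
    rw [this, ← h4, ← h3, hT]
    push_cast; ring

end triangleFree

theorem triangleFree_numerics {k mu l n m : ℕ} (hmu : 0 < mu) (hlt : mu < k) (hk : 3 ≤ k)
    (h0 : (k : ℝ) * (k - 1) = l * mu)
    (h1 : ((k : ℝ) - 2) * (n - 1) = (mu - 1) * (mu - 2))
    (h2 : ((l : ℝ) - 1 - k + mu) * n = mu * (k - 2))
    (h3 : ((k : ℝ) - 3) * (m - 1) = (n - 1) * (mu - 3))
    (h4 : ((l : ℝ) - 1 - k + mu - 1 - (k - 2 * mu + n)) * m = n * (k - 3)) : False := by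
  have hk' : (3 : ℝ) ≤ k := by exact_mod_cast hk
  have hlt' : (mu : ℝ) + 1 ≤ k := by exact_mod_cast hlt
  obtain hmu1 | hmu1 | hmu1 : mu = 1 ∨ mu = 2 ∨ 3 ≤ mu := by omega
  · subst hmu1
    have : (n : ℝ) = 1 := by
      have : ((k : ℝ) - 2) * (n - 1) = 0 := by rw [h1]; norm_num
      rcases mul_eq_zero.1 this with h | h <;> linarith
    rw [this] at h2
    push_cast at *
    nlinarith
  · subst hmu1
    have hn : (n : ℝ) = 1 := by
      have : ((k : ℝ) - 2) * (n - 1) = 0 := by rw [h1]; norm_num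
      rcases mul_eq_zero.1 this with h | h <;> linarith
    rw [hn] at h2 h4 h3
    push_cast at *
    have h5 : ((k : ℝ) - 2) * (k - 5) = 0 := by nlinarith
    have h6 : (k : ℝ) = 5 := by rcases mul_eq_zero.1 h5 with h | h <;> linarith
    rw [h6] at h3 h4 h0
    have : (m : ℝ) = 1 := by linarith
    rw [this] at h4
    linarith
  · have hmu' : (3 : ℝ) ≤ mu := by exact_mod_cast hmu1
    obtain ⟨L, hL⟩ : ∃ L : ℝ, L = n - 1 := ⟨_, rfl⟩
    obtain ⟨K, hK⟩ : ∃ K : ℝ, K = mu - 1 := ⟨_, rfl⟩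
    obtain ⟨x, hx⟩ : ∃ x : ℝ, x = k - 2 := ⟨_, rfl⟩
    have hn : (n : ℝ) = L + 1 := by linarith
    have hm : (mu : ℝ) = K + 1 := by linarith
    have hkk : (k : ℝ) = x + 2 := by linarith
    rw [hn, hm, hkk] at h1 h2 h3
    rw [hm, hkk] at h0
    have hK2 : 2 ≤ K := by linarith
    have h1' : x * L = K * (K - 1) := by linarith
    have hLpos : 0 < L := by
      have : 0 < x * L := by rw [h1']; nlinarith
      exact pos_of_mul_pos_right this (by linarith)
    have hL1 : 1 ≤ L := by
      have : (1 : ℝ) < n := by linarith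
      have : (2 : ℝ) ≤ n := by exact_mod_cast this
      linarith
    have key : (K - L) * (K - 3 * L - 1 - L ^ 2) = 0 := by
      have e1 : (x + 2) * (x + 1) * (L + 1) + (K + 1) * (K - x - 2) * (L + 1) =
          (K + 1) ^ 2 * x := by
        linear_combination (L + 1) * h0 + (K + 1) * h2
      have hKK : K * (K - 1) ≠ 0 := by nlinarith
      have e2 : K * (K - 1) * ((K - L) * (K - 3 * L - 1 - L ^ 2)) = 0 := by
        have e3 : (x * L + 2 * L) * (x * L + L) * (L + 1) +
            (K + 1) * (K * L - x * L - 2 * L) * L * (L + 1) = (K + 1) ^ 2 * (x * L) * L := by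
          linear_combination L ^ 2 * e1
        rw [h1'] at e3
        linear_combination e3
      exact (mul_eq_zero.1 e2).resolve_left hKK
    rcases mul_eq_zero.1 key with h | h
    · have : x = L - 1 := by
        have : L * (x - (L - 1)) = 0 := by rw [show K = L by linarith] at h1'; linarith
        rcases mul_eq_zero.1 this with h | h <;> linarith
      linarith
    · have hK' : K = L ^ 2 + 3 * L + 1 := by linarith
      have hxe : x = (L ^ 2 + 3 * L + 1) * (L + 3) := by
        have : L * (x - (L ^ 2 + 3 * L + 1) * (L + 3)) = 0 := by rw [hK'] at h1'; linarith
        rcases mul_eq_zero.1 this with h | h <;> linarith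
      have h3' : (x - 1) * (m - 1) = L * (L ^ 2 + 3 * L - 1) := by
        rw [hK'] at h3; linarith
      have hpos : 0 < L * (L ^ 2 + 3 * L - 1) := by nlinarith
      have hx1 : x - 1 = L ^ 3 + 6 * L ^ 2 + 10 * L + 2 := by rw [hxe]; ring
      have hx0 : 0 < x - 1 := by rw [hx1]; positivity
      rw [← h3'] at hpos
      have hm1 : (1 : ℝ) < m := by linarith [pos_of_mul_pos_right hpos hx0.le]
      have hm2 : (2 : ℝ) ≤ m := by exact_mod_cast hm1
      have := le_mul_of_one_le_right hx0.le (by linarith : (1 : ℝ) ≤ m - 1)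
      rw [h3', hx1] at this
      nlinarith [sq_nonneg L]

/-- A triangle-free `4`-tuple regular graph which is neither a disjoint union of complete graphs
nor complete multipartite is a pentagon. -/
theorem Reg.card_eq_five (h : Reg G S 4) (h1 : ¬ HasK3 G S) (h2 : HasP3 G S) (h3 : HasP3 Gᶜ S) :
    #S = 5 := by
  have hK : ∀ a ∈ S, ∀ b ∈ S, ∀ d ∈ S, G.Adj a b → G.Adj a d → ¬ G.Adj b d :=
    fun a ha b hb d hd e1 e2 e3 => h1 ⟨a, ha, b, hb, d, hd, e1, e2, e3⟩
  obtain ⟨k, lam, mu, srg⟩ := (h.mono (by omega : 2 ≤ 4)).srg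
  obtain ⟨m, hm, b, hb, c, hc, hmb, hmc, hbc, hn⟩ := id h2
  obtain rfl : lam = 0 := by
    rw [← srg.card_nb_nb hm (mem_nb.2 ⟨hb, hmb⟩), card_eq_zero, eq_empty_iff_forall_notMem]
    intro z hz
    simp only [mem_nb] at hz
    exact hK m hm b hb z hz.1.1 hmb hz.1.2 hz.2
  have hmu : 0 < mu := by
    rw [← srg.card_nb_nn hb (mem_nn.2 ⟨hc, hbc.symm, hn⟩)]
    exact card_pos.2 ⟨m, mem_nb.2 ⟨mem_nb.2 ⟨hm, hmb.symm⟩, hmc.symm⟩⟩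
  have hlt : mu < k := by
    obtain ⟨u, hu, v, hv, huv⟩ := h.edge_nn (by omega) h3 hm
    have := srg.card_nn_nn hm hu
    have : 0 < #(nb G (nn G S m) u) := card_pos.2 ⟨v, mem_nb.2 ⟨hv, huv⟩⟩
    omega
  have id0 := srg.identity hm
  by_cases hk : k = 2
  · obtain rfl : mu = 1 := by omega
    subst hk
    have : (#S : ℝ) = 5 := by push_cast at id0; linarith
    exact_mod_cast this
  exfalso
  obtain ⟨T, hT, hT3⟩ := exists_subset_card_eq (s := nb G S m) (n := 3)
    (by rw [srg.card_nb hm]; omega)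
  obtain ⟨a, b, d, hab, had, hbd, rfl⟩ := card_eq_three.1 hT3
  have ha := mem_nb.1 (hT (by simp : a ∈ _))
  have hb := mem_nb.1 (hT (by simp : b ∈ _))
  have hd := mem_nb.1 (hT (by simp : d ∈ _))
  have nab := hK m hm a ha.1 b hb.1 ha.2 hb.2
  have nad := hK m hm a ha.1 d hd.1 ha.2 hd.2
  have nbd := hK m hm b hb.1 d hd.1 hb.2 hd.2
  obtain ⟨c₂, hc₂⟩ := h.card_com 2 (by omega)
  obtain ⟨n, hc₃⟩ := h.card_com 3 (by omega)
  obtain ⟨c₄, hc₄⟩ := h.card_com 4 (by omega)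
  have hi2 : ∀ u ∈ ({a, b} : Finset V), ∀ v ∈ ({a, b} : Finset V), ¬ G.Adj u v := by
    simp [nab, G.adj_comm b]
  have hi3 : ∀ u ∈ ({a, b, d} : Finset V), ∀ v ∈ ({a, b, d} : Finset V), ¬ G.Adj u v := by
    simp [nab, nad, nbd, G.adj_comm b a, G.adj_comm d]
  have hs2 : ({a, b} : Finset V) ⊆ S := by simp [insert_subset_iff, ha.1, hb.1]
  have hs3 : ({a, b, d} : Finset V) ⊆ S := by simp [insert_subset_iff, ha.1, hb.1, hd.1]
  have hca2 : #({a, b} : Finset V) = 2 := card_pair hab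
  have hm2 : m ∈ com G S {a, b} := by simp [mem_com, hm, ha.2, hb.2]
  have hm3 : m ∈ com G S {a, b, d} := by simp [mem_com, hm, ha.2, hb.2, hd.2]
  have hbN : b ∈ nn G S a := mem_nn.2 ⟨hb.1, hab.symm, nab⟩
  have hdN : d ∈ nn G S a := mem_nn.2 ⟨hd.1, had.symm, nad⟩
  have hdN2 : d ∈ nn G (nn G S a) b := mem_nn.2 ⟨hdN, hbd.symm, nbd⟩
  obtain rfl : c₂ = mu := by
    rw [← hc₂ _ ⟨hs2, hca2, hi2⟩, ← srg.card_nb_nn ha.1 hbN]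
    congr 1; ext z; simp [mem_com, mem_nb, G.adj_comm z]; tauto
  have l2 := local_count srg hK hc₂ hc₃ hs2 hca2 hi2 (by omega) hm2
  have l3 := local_count srg hK hc₃ hc₄ hs3 hT3 hi3 (by omega) hm3
  have g2 := global_count srg hK hc₂ hc₃ hs2 hca2 hi2
  have g3 := global_count srg hK hc₃ hc₄ hs3 hT3 hi3
  have f2 : far G S {a, b} = nn G (nn G S a) b := by
    ext z; simp [mem_far, mem_nn, G.adj_comm z]; tauto
  have f3 : far G S {a, b, d} = nn G (nn G (nn G S a) b) d := by
    ext z; simp [mem_far, mem_nn, G.adj_comm z]; tauto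
  rw [f2] at g2
  rw [f3] at g3
  have p1 := card_eq (G := G) ha.1
  have p2 := card_eq (G := G) hbN
  have p3 := card_eq (G := G) hdN2
  have q1 := srg.card_nn_nn ha.1 hbN
  have q2 := srg.card_nn_nn ha.1 hdN
  have q3 := dg_partition (G := G) hbN d
  have q4 := cn_partition (G := G) ha.1 b d
  have q5 : cn G (nb G S a) b d = n := by
    rw [← hc₃ _ ⟨hs3, hT3, hi3⟩, cn]
    congr 1; ext z; simp [mem_com, mem_nb, G.adj_comm z]; tauto
  have q6 : cn G (nn G S a) b d = #(nb G (nb G (nn G S a) b) d) := rfl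
  rw [srg.card_nb ha.1] at p1
  rw [if_neg fun e => nbd e.symm] at q3
  rw [srg b hb.1 d hd.1, if_neg hbd, if_neg nbd, if_neg fun e => nab e.1.symm] at q4
  have r1 : (#S : ℝ) - 1 - k = #(nn G S a) := by rw [p1]; push_cast; ring
  have r2 : (#(nn G (nn G S a) b) : ℝ) = (#(nn G S a) : ℝ) - 1 - k + c₂ := by
    rw [p2, ← q1]; push_cast; ring
  have r3 : (#(nn G (nn G (nn G S a) b) d) : ℝ) =
      (#(nn G S a) : ℝ) - 1 - k + c₂ - 1 - (k - 2 * c₂ + n) := by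
    rw [← r2, p3]
    have : #(nb G (nn G (nn G S a) b) d) + c₂ + c₂ = k + n := by omega
    have : (#(nb G (nn G (nn G S a) b) d) + c₂ + c₂ : ℝ) = k + n := by exact_mod_cast this
    push_cast; linarith
  rw [r2] at g2
  rw [r3] at g3
  rw [r1] at id0
  push_cast at id0 l2 l3 g2 g3
  exact triangleFree_numerics (m := c₄) hmu hlt (by omega) (by linarith) l2 g2 l3 g3

end

section

open Classical Finset Function

variable {V : Type*} {G : SimpleGraph V} {S : Finset V} {t : ℕ} {x : V}

theorem cn_eq_zero_of_not_hasP3 {P : Finset V} (h : ¬ HasP3 G P) {u w : V} (hu : u ∈ P)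
    (hw : w ∈ P) (huw : u ≠ w) (hn : ¬ G.Adj u w) : cn G P u w = 0 := by
  rw [cn_eq_card, card_eq_zero, eq_empty_iff_forall_notMem]
  intro z hz
  rw [mem_filter] at hz
  exact h ⟨z, hz.1, u, hu, w, hw, hz.2.1.symm, hz.2.2.symm, huw, hn⟩

theorem not_hasP3_of_cn_eq_zero {P : Finset V}
    (h : ∀ u ∈ P, ∀ w ∈ P, u ≠ w → ¬ G.Adj u w → cn G P u w = 0) : ¬ HasP3 G P := by
  rintro ⟨a, ha, b, hb, c, hc, hab, hac, hbc, hn⟩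
  have := h b hb c hc hbc hn
  rw [cn_eq_card, card_eq_zero, eq_empty_iff_forall_notMem] at this
  exact this a (mem_filter.2 ⟨ha, hab.symm, hac.symm⟩)

theorem Reg.not_hasP3_nb (h : Reg G S 3) (hS : HasP3 G S) (hx : x ∈ S)
    (hP : ¬ HasP3 G (nb G S x)) {v : V} (hv : v ∈ S) : ¬ HasP3 G (nb G S v) := by
  obtain ⟨α, β, γ, hc⟩ := h.coh (m := 1) (by omega) ![x] ![True] ![True] ![True]
  have hc' : ∀ v ∈ S, ∀ u ∈ nb G S v, ∀ w ∈ nb G S v,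
      cn G (nb G S v) u w = if u = w then γ else if G.Adj u w then α else β := by
    intro v hv
    simpa only [fib_true] using hc ![v] (by simpa) (injective_of_subsingleton _) (by simp)
  obtain ⟨u, hu, w, hw, huw, hn⟩ := h.nonedge_nb (by omega) hS hx
  have h0 := hc' x hx u hu w hw
  rw [cn_eq_zero_of_not_hasP3 hP hu hw huw hn, if_neg huw, if_neg hn] at h0
  refine not_hasP3_of_cn_eq_zero fun u hu w hw huw hn => ?_
  rw [hc' v hv u hu w hw, if_neg huw, if_neg hn, h0]

/-- The subconstituents are not complete multipartite. -/
theorem Reg.hasP3_compl_nb [Fintype V] (h : Reg G S 3) (hG : Good G S) (hx : x ∈ S) :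
    HasP3 Gᶜ (nb G S x) := by
  by_contra hP
  obtain ⟨D⟩ := h.nonempty_split hG hx
  obtain ⟨u, hu, w, hw, huw, hn⟩ := h.nonedge_nb (by omega) hG.2.1 hx
  have h1 := D.srg_nb u hu w hw
  rw [if_neg huw, if_neg hn] at h1
  have h2 : nb G (nb G (nb G S x) u) w = nb G (nb G S x) u := by
    ext z
    simp only [mem_nb (S := nb G (nb G S x) u), and_iff_left_iff_imp]
    intro hz
    by_contra hwz
    have hz' := mem_nb.1 hz
    refine hP ⟨w, hw, u, hu, z, hz'.1, compl_adj'.2 ⟨huw.symm, fun e => hn e.symm⟩,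
      compl_adj'.2 ⟨?_, hwz⟩, hz'.2.ne, fun e => (compl_adj'.1 e).2 hz'.2⟩
    rintro rfl
    exact hn hz'.2
  rw [cn, h2, D.srg_nb.card_nb hu] at h1
  have h3 := D.a_mul_p
  rw [← h1, sub_self] at h3
  have h4 := D.a_mul
  rw [(mul_eq_zero.1 h3).resolve_right D.p_ne, zero_mul] at h4
  exact mul_ne_zero D.r_ne D.lam_pos'.ne' h4.symm

/-- If no two adjacent vertices have two non-adjacent common neighbours, then the maximal cliques
are triangles. -/
theorem Reg.lam_le_one (h : Reg G S 4) (hx : x ∈ S) (hP : ∀ v ∈ S, ¬ HasP3 G (nb G S v))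
    {k lam mu : ℕ}
    (srg : IsSRG G S k lam mu) (hmu : 2 ≤ mu) (hk : lam + 1 < k) : lam ≤ 1 := by
  by_contra! hlam
  have key : ∀ v ∈ S, ∀ a ∈ S, ∀ b ∈ S, ∀ c ∈ S, G.Adj v a → G.Adj v b → G.Adj v c →
      G.Adj a b → G.Adj a c → b ≠ c → G.Adj b c := by
    intro v hv a ha b hb c hc hva hvb hvc hab hac hbc
    by_contra hn
    exact hP v hv ⟨a, mem_nb.2 ⟨ha, hva⟩, b, mem_nb.2 ⟨hb, hvb⟩, c, mem_nb.2 ⟨hc, hvc⟩,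
      hab, hac, hbc, hn⟩
  have cnt : ∀ u ∈ S, ∀ w ∈ S, ∀ z ∈ S, u ≠ w → ∃ c ∈ S, G.Adj u c ∧ G.Adj w c ∧ c ≠ z := by
    intro u hu w hw z hz huw
    have h1 := srg u hu w hw
    have h2 : 1 < cn G S u w := by rw [h1, if_neg huw]; split_ifs <;> omega
    rw [cn_eq_card] at h2
    obtain ⟨c, hc, hcz⟩ := exists_mem_ne h2 z
    rw [mem_filter] at hc
    exact ⟨c, hc.1, hc.2.1, hc.2.2, hcz⟩
  obtain ⟨y, hy⟩ := card_pos.1 (by rw [srg.card_nb hx]; omega : 0 < #(nb G S x))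
  obtain ⟨hy, hxy⟩ := mem_nb.1 hy
  obtain ⟨z, hz, hxz, hyz, -⟩ := cnt x hx y hy x hx hxy.ne
  obtain ⟨z', hz', hxz', hyz', hzz'⟩ := cnt x hx y hy z hz hxy.ne
  have azz' := key x hx y hy z hz z' hz' hxy hxz hxz' hyz hyz' hzz'.symm
  obtain ⟨u, hu⟩ := card_pos.1 (by have := srg.card_nn_nb hx (mem_nb.2 ⟨hz, hxz⟩); omega :
    0 < #(nb G (nn G S x) z))
  simp only [mem_nb, mem_nn] at hu
  obtain ⟨⟨hu, hux, nxu⟩, hzu⟩ := hu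
  have nyu : ¬ G.Adj y u := fun e =>
    nxu (key z hz y hy x hx u hu hyz.symm hxz.symm hzu hxy.symm e hux.symm)
  have nz'u : ¬ G.Adj z' u := fun e =>
    nxu (key z hz z' hz' x hx u hu azz' hxz.symm hzu hxz'.symm e hux.symm)
  obtain ⟨u', hu', hzu', huu', -⟩ := cnt z hz u hu z hz hzu.ne
  have hu'x : u' ≠ x := by rintro rfl; exact nxu huu'.symm
  have hu'y : u' ≠ y := by rintro rfl; exact nyu huu'.symm
  have nxu' : ¬ G.Adj x u' := fun e =>
    nxu (key z hz u' hu' x hx u hu hzu' hxz.symm hzu e.symm huu'.symm hux.symm)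
  have huy : u ≠ y := by rintro rfl; exact nxu hxy
  have nyu' : ¬ G.Adj y u' := fun e =>
    nyu (key z hz u' hu' y hy u hu hzu' hyz.symm hzu e.symm huu'.symm huy.symm)
  have huz' : u ≠ z' := by rintro rfl; exact nxu hxz'
  obtain ⟨w, hw, huw, hz'w, hwz⟩ := cnt u hu z' hz' z hz huz'
  have nzw : ¬ G.Adj z w := fun e =>
    nz'u (key z hz w hw z' hz' u hu e azz' hzu hz'w.symm huw.symm huz'.symm)
  have hwx : w ≠ x := by rintro rfl; exact nxu huw.symm
  have hwy : w ≠ y := by rintro rfl; exact nyu huw.symm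
  have nxw : ¬ G.Adj x w := fun e =>
    nzw (key z' hz' x hx z hz w hw hxz'.symm azz'.symm hz'w hxz e hwz.symm)
  have nyw : ¬ G.Adj y w := fun e =>
    nzw (key z' hz' y hy z hz w hw hyz'.symm azz'.symm hz'w hyz e hwz.symm)
  obtain ⟨q, hq, hq'⟩ := h.extend (n := 4) le_rfl (x := ![x, y, u, u']) (y := ![x, y, u, w])
    (z := z) (by simp [Fin.forall_fin_succ, *]) (by simp [Fin.forall_fin_succ, *])
    (by
      simp [Injective, Fin.forall_fin_succ, hxy.ne, hxy.ne', hux, hux.symm, hu'x, hu'x.symm, huy,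
        huy.symm, hu'y, hu'y.symm, huu'.ne, huu'.ne'])
    (by
      simp [Injective, Fin.forall_fin_succ, hxy.ne, hxy.ne', hux, hux.symm, hwx, hwx.symm, huy,
        huy.symm, hwy, hwy.symm, huw.ne, huw.ne'])
    (by
      simp [Fin.forall_fin_succ, nxu, nxu', nyu, nyu', nxw, nyw, huu', huw, G.adj_comm u x,
        G.adj_comm u y, G.adj_comm u' x, G.adj_comm u' y, G.adj_comm w x, G.adj_comm w y,
        huu'.symm, huw.symm])
    hz (by simp [Fin.forall_fin_succ, hxz.ne', hyz.ne', hzu.ne, hzu'.ne])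
  simp [Fin.forall_fin_succ, hxz.symm, hyz.symm, hzu, hzu'] at hq'
  obtain ⟨⟨-, hqx⟩, ⟨-, hqy⟩, ⟨-, hqu⟩, ⟨-, hqw⟩⟩ := hq'
  rcases eq_or_ne q z with rfl | hqz
  · exact nzw hqw
  · have aqz := key x hx y hy q hq z hz hxy hqx.symm hxz hqy.symm hyz hqz
    exact nxu (key z hz q hq x hx u hu aqz.symm hxz.symm hzu hqx hqu hux.symm)

theorem Split.n₂_eq_zero (D : Split G S x) (h : Reg G S 2) (hS : HasP3 G S) (hx : x ∈ S)
    (hP : ¬ HasP3 G (nb G S x)) : D.n₂ = 0 := by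
  obtain ⟨u, hu, w, hw, huw, hn⟩ := h.nonedge_nb le_rfl hS hx
  have := D.srg_nb u hu w hw
  rwa [if_neg huw, if_neg hn, cn_eq_zero_of_not_hasP3 hP hu hw huw hn, eq_comm] at this

/-- The case where the neighbourhoods are disjoint unions of complete graphs. -/
theorem Split.of_not_hasP3_nb (D : Split G S x) (h : Reg G S 4) (hS : HasP3 G S) (hx : x ∈ S)
    (hP : ¬ HasP3 G (nb G S x)) :
    D.lam = 1 ∧ (D.k = 4 ∨ D.k = 10 ∧ #S = 27 ∧ ¬ HasK3 G (nn G S x)) := by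
  have hn₂ := D.n₂_eq_zero (h.mono (by omega)) hS hx hP
  have h1 := D.n₂_eq
  rw [hn₂, Nat.cast_zero] at h1
  have h2 : D.a = -1 := by
    have h3 := D.identity_nb
    rw [hn₂, D.n₃_eq, Nat.cast_zero, mul_zero] at h3
    have h4 := (mul_eq_zero.1 h3).resolve_left D.lam_pos'.ne'
    have h5 : (1 + D.a) * (1 + D.p) = D.a * D.p + D.lam := by linarith
    have h5 : (1 + D.a) * (1 + D.p) = 0 := by linarith
    linarith [(mul_eq_zero.1 h5).resolve_right D.one_add_p_ne]
  have hp : D.p = D.lam := by rw [h2] at h1; linarith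
  have hk := D.a_mul
  rw [h2] at hk
  have hmu : (D.mu : ℝ) = -D.r := by
    have := D.mu_eq
    rw [hp] at this
    linarith
  have hr : D.r < -1 := by
    have := D.one_add_mul_neg
    have h0 := D.lam_pos'
    rw [hp] at this
    nlinarith
  have hmu2 : 2 ≤ D.mu := by
    have : (1 : ℝ) < D.mu := by linarith
    exact_mod_cast this
  have hlam : D.lam = 1 := by
    have := h.lam_le_one hx (fun v hv => (h.mono (by omega : 3 ≤ 4)).not_hasP3_nb hS hx hP hv) D.srg
      hmu2 D.lam_lt
    have := D.lam_pos
    omega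
  refine ⟨hlam, ?_⟩
  rw [hlam, Nat.cast_one] at hp
  rw [hlam] at hk
  have hk : (D.k : ℝ) = -2 * D.r := by push_cast at hk; linarith
  rcases D.types with ⟨hq, h3⟩ | ⟨hq, h3⟩
  · right
    rw [hp, hk] at h3
    have hr5 : D.r = -5 := by
      have : D.r * (D.r + 5) = 0 := by linarith
      linarith [(mul_eq_zero.1 this).resolve_left D.r_ne]
    have hk10 : (D.k : ℝ) = 10 := by rw [hk, hr5]; norm_num
    refine ⟨by exact_mod_cast hk10, ?_, ?_⟩
    · have := D.identity'
      rw [hk10, hr5, hp] at this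
      have : (#S : ℝ) = 27 := by linarith
      exact_mod_cast this
    · have e1 := D.b_eq'
      have e2 := D.kQ_eq'
      have e3 := D.b_mul_q
      have e4 := D.b_add_q
      rw [hp, hr5] at e2
      rw [hp, hr5, h2] at e1
      rw [hq, hp, e1] at e3 e4
      have e5 : (D.lamQ : ℝ) = 0 := by linarith
      have e5 : D.lamQ = 0 := by exact_mod_cast e5
      rintro ⟨a, ha, b, hb, c, hc, hab, hac, hbc⟩
      have := D.srg_nn a ha b hb
      rw [if_neg hab.ne, if_pos hab, e5, cn_eq_card, card_eq_zero,
        eq_empty_iff_forall_notMem] at this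
      exact this c (mem_filter.2 ⟨hc, hac, hbc⟩)
  · left
    rw [hp, hk] at h3
    have hr2 : D.r = -2 := by
      have : D.r * (D.r + 2) = 0 := by linarith
      linarith [(mul_eq_zero.1 this).resolve_left D.r_ne]
    have : (D.k : ℝ) = 4 := by rw [hk, hr2]; norm_num
    exact_mod_cast this

end

section

open Matrix

variable {ι V : Type*} [Fintype V]

/-- The blocks of a symmetric matrix with respect to a partition, all of whose products are
combinations of the blocks. -/
structure IsBlockAlgebra (M : ι → ι → Matrix V V ℝ) (I : ι → Matrix V V ℝ) : Prop where
  transpose : ∀ i j, (M i j)ᵀ = M j i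
  I_mul : ∀ i j, I i * M i j = M i j
  mul_I : ∀ i j, M i j * I j = M i j
  coh : ∀ i j l, i ≠ l → ∃ c : ℝ, M i j * M j l = c • M i l
  coh_self : ∀ i j, ∃ c d : ℝ, M i j * M j i = c • M i i + d • I i

variable {M : ι → ι → Matrix V V ℝ} {I : ι → Matrix V V ℝ} (hM : IsBlockAlgebra M I)

namespace IsBlockAlgebra

section

include hM

theorem ne_symm {i j : ι} (h : M i j ≠ 0) : M j i ≠ 0 := fun h0 =>
  h (by rw [← hM.transpose, h0, transpose_zero])

theorem mul_ne_zero {i j : ι} (h : M i j ≠ 0) : M j i * M i j ≠ 0 := fun h0 => h <| by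
  rw [← hM.transpose i j, ← conjTranspose_eq_transpose_of_trivial] at h0
  exact conjTranspose_mul_self_eq_zero.1 h0

theorem mul_mul_ne_zero {i j : ι} (h : M i j ≠ 0) : M i j * M j i * M i j ≠ 0 := fun h0 => by
  have h1 : (M j i * M i j)ᴴ * (M j i * M i j) = 0 := by
    rw [conjTranspose_eq_transpose_of_trivial, transpose_mul, hM.transpose, hM.transpose,
      mul_assoc, ← mul_assoc (M i j), h0, mul_zero]
  exact hM.mul_ne_zero h (conjTranspose_mul_self_eq_zero.1 h1)

theorem eig {i j : ι} (h : i ≠ j) : ∃ c : ℝ, M i i * M i j = c • M i j := hM.coh i i j h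

theorem eig_symm {i j : ι} {c : ℝ} (h : M i i * M i j = c • M i j) :
    M j i * M i i = c • M j i := by
  have := congrArg Matrix.transpose h
  rwa [transpose_mul, transpose_smul, hM.transpose, hM.transpose] at this

theorem mul_eq_zero_symm {i j l : ι} (h : M i j * M j l = 0) : M l j * M j i = 0 := by
  have := congrArg Matrix.transpose h
  rwa [transpose_mul, transpose_zero, hM.transpose, hM.transpose] at this

theorem mul_eq_zero_of_ne {i j l : ι} {c d : ℝ} (h1 : M i i * M i j = c • M i j)
    (h2 : M i i * M i l = d • M i l) (hcd : c ≠ d) : M j i * M i l = 0 := by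
  have h : M j i * (M i i * M i l) = c • (M j i * M i l) := by
    rw [← mul_assoc, hM.eig_symm h1, smul_mul_assoc]
  rw [h2, mul_smul_comm, ← sub_eq_zero, ← sub_smul] at h
  exact (smul_eq_zero.1 h).resolve_left (sub_ne_zero.2 hcd.symm)

theorem mul_ne_zero_of_eig {i j l : ι} {c : ℝ} (h1 : M i i * M i j = c • M i j)
    (h2 : M i i * M i l = c • M i l) (hj : M i j ≠ 0) (hl : M i l ≠ 0) : M j i * M i l ≠ 0 := by
  intro h0
  obtain ⟨x, y, hxy⟩ := hM.coh_self i l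
  have e1 : (x * c + y) • M j i = 0 := by
    have : M j i * (M i l * M l i) = 0 := by rw [← mul_assoc, h0, zero_mul]
    rw [hxy, mul_add, mul_smul_comm, mul_smul_comm, hM.eig_symm h1, hM.mul_I, smul_smul,
      ← add_smul] at this
    exact this
  have e2 := (smul_eq_zero.1 e1).resolve_right (hM.ne_symm hj)
  refine hM.mul_mul_ne_zero hl ?_
  rw [hxy, add_mul, smul_mul_assoc, smul_mul_assoc, h2, hM.I_mul, smul_smul, ← add_smul, e2,
    zero_smul]

/-- An eigenvalue on another block is a root of the quadratic relation. -/
theorem eig_root {i j : ι} {c e f : ℝ} (hsq : M i i * M i i = (e + f) • M i i - (e * f) • I i)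
    (h : M i i * M i j = c • M i j) (hj : M i j ≠ 0) (hc : c ≠ e) : c = f := by
  have h1 : M i i * M i i * M i j = (c * c) • M i j := by
    rw [mul_assoc, h, mul_smul_comm, h, smul_smul]
  rw [hsq, sub_mul, smul_mul_assoc, smul_mul_assoc, h, hM.I_mul, smul_smul, ← sub_smul,
    ← sub_eq_zero, ← sub_smul] at h1
  have h2 : (c - e) * (c - f) = 0 := by
    linarith [(smul_eq_zero.1 h1).resolve_right hj]
  exact sub_eq_zero.1 ((mul_eq_zero.1 h2).resolve_left (sub_ne_zero.2 hc))

/-- Multiplying the relation `X j * Xᵀ j + X l * Xᵀ l = s (M i i - p)` by `M i i - e`. -/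
theorem sub_eig_mul {i j l : ι} {c d e a p s : ℝ}
    (hsq : M i i * M i i = (e + a) • M i i - (e * a) • I i)
    (hj : M i i * M i j = c • M i j) (hl : M i i * M i l = d • M i l)
    (h : M i j * M j i + M i l * M l i = s • (M i i - p • I i)) :
    (c - e) • (M i j * M j i) + (d - e) • (M i l * M l i) = (s * (a - p)) • (M i i - e • I i) := by
  have h1 := congrArg (M i i * ·) h
  simp only [mul_add, ← mul_assoc, hj, hl, smul_mul_assoc, mul_smul_comm, mul_sub, hsq, hM.mul_I]
    at h1
  rw [sub_smul, sub_smul, sub_add_sub_comm, h1, ← smul_add, h]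
  module

end

end IsBlockAlgebra

theorem eig_unique {i j : ι} {c d : ℝ} (h : M i i * M i j = c • M i j)
    (h' : M i i * M i j = d • M i j) (hj : M i j ≠ 0) : c = d := by
  rw [h, ← sub_eq_zero, ← sub_smul] at h'
  exact sub_eq_zero.1 ((smul_eq_zero.1 h').resolve_right hj)

theorem eq_of_isBlockAlgebra_aux {M : Fin 4 → Fin 4 → Matrix V V ℝ} {I : Fin 4 → Matrix V V ℝ}
    (hM : IsBlockAlgebra M I)
    {e a p s : ℝ} (e01 : M 0 0 * M 0 1 = e • M 0 1) (e02 : M 0 0 * M 0 2 = e • M 0 2)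
    (sq0 : M 0 0 * M 0 0 = (e + a) • M 0 0 - (e * a) • I 0)
    (c02 : M 0 0 * M 0 2 + M 0 1 * M 1 2 = a • M 0 2)
    (c03 : M 0 0 * M 0 3 + M 0 1 * M 1 3 = a • M 0 3)
    (q0 : M 0 2 * M 2 0 + M 0 3 * M 3 0 = s • (M 0 0 - p • I 0)) (hs : s ≠ 0)
    (n01 : M 0 1 ≠ 0) (n02 : M 0 2 ≠ 0) (n13 : M 1 3 ≠ 0) (n23 : M 2 3 ≠ 0)
    (n0 : M 0 0 - e • I 0 ≠ 0) : a = p := by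
  by_contra hap
  obtain ⟨x, e03⟩ := hM.eig (show (0 : Fin 4) ≠ 3 by decide)
  have h1 := hM.sub_eig_mul sq0 e02 e03 q0
  rw [sub_self, zero_smul, zero_add] at h1
  have h2 : (x - e) • (M 0 3 * M 3 0) ≠ 0 := by
    rw [h1]; exact smul_ne_zero (mul_ne_zero hs (sub_ne_zero.2 hap)) n0
  obtain ⟨hxe, h3⟩ := smul_ne_zero_iff.1 h2
  have hxe := sub_ne_zero.1 hxe
  have n03 : M 0 3 ≠ 0 := left_ne_zero_of_mul h3
  obtain rfl := hM.eig_root sq0 e03 n03 hxe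
  have z1 : M 0 1 * M 1 3 = 0 := by rwa [e03, add_eq_left] at c03
  have z2 : M 1 0 * M 0 3 = 0 := hM.mul_eq_zero_of_ne e01 e03 hxe.symm
  have z3 : M 2 0 * M 0 3 = 0 := hM.mul_eq_zero_of_ne e02 e03 hxe.symm
  have z : ∀ j, 0 ≠ j → M 0 j ≠ 0 → M j 0 * M 0 3 = 0 → M j 3 * M 3 0 = 0 := by
    intro j hj nj zj
    obtain ⟨c, hc⟩ := hM.coh 0 3 j hj
    have h4 : M j 0 * (M 0 3 * M 3 j) = 0 := by rw [← mul_assoc, zj, zero_mul]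
    rw [hc, mul_smul_comm] at h4
    rw [(smul_eq_zero.1 h4).resolve_right (hM.mul_ne_zero nj), zero_smul] at hc
    exact hM.mul_eq_zero_symm hc
  have z4 := z 1 (by decide) n01 z2
  have z5 := z 2 (by decide) n02 z3
  obtain ⟨f, g, hfg⟩ := hM.coh_self 3 0
  have n30 := hM.mul_ne_zero n03
  have eq3 : ∀ j c, M 3 3 * M 3 j = c • M 3 j → M j 3 ≠ 0 → M j 3 * M 3 0 = 0 → f * c + g = 0 := by
    intro j c hc nj zj
    have h4 : M j 3 * (M 3 0 * M 0 3) = 0 := by rw [← mul_assoc, zj, zero_mul]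
    rw [hfg, mul_add, mul_smul_comm, mul_smul_comm, hM.eig_symm hc, hM.mul_I, smul_smul,
      ← add_smul] at h4
    exact (smul_eq_zero.1 h4).resolve_right nj
  obtain ⟨y, e31⟩ := hM.eig (show (3 : Fin 4) ≠ 1 by decide)
  obtain ⟨y', e32⟩ := hM.eig (show (3 : Fin 4) ≠ 2 by decide)
  have hy := eq3 1 y e31 n13 z4
  have hy' := eq3 2 y' e32 n23 z5
  have hf : f ≠ 0 := by
    rintro rfl
    rw [zero_mul, zero_add] at hy
    exact n30 (by rw [hfg, hy, zero_smul, zero_smul, add_zero])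
  obtain rfl : y = y' := mul_left_cancel₀ hf (by linarith)
  have h5 := hM.mul_ne_zero_of_eig e31 e32 (hM.ne_symm n13) (hM.ne_symm n23)
  obtain ⟨c, hc⟩ := hM.coh 1 3 2 (by decide)
  have h6 : M 0 1 * (M 1 3 * M 3 2) = 0 := by rw [← mul_assoc, z1, zero_mul]
  rw [hc, mul_smul_comm] at h6
  have hc0 : c ≠ 0 := by rintro rfl; exact h5 (by rw [hc, zero_smul])
  rw [(smul_eq_zero.1 h6).resolve_left hc0, add_zero] at c02
  exact hxe (eig_unique c02 e02 n02)

theorem eq_of_isBlockAlgebra {M : Fin 4 → Fin 4 → Matrix V V ℝ} {I : Fin 4 → Matrix V V ℝ}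
    (hM : IsBlockAlgebra M I)
    {e e' a p p₁ p₂ s : ℝ} (e01 : M 0 0 * M 0 1 = e • M 0 1) (e02 : M 0 0 * M 0 2 = e • M 0 2)
    (e10 : M 1 1 * M 1 0 = e' • M 1 0)
    (sq0 : M 0 0 * M 0 0 = (e + p₁) • M 0 0 - (e * p₁) • I 0)
    (sq1 : M 1 1 * M 1 1 = (e' + p₂) • M 1 1 - (e' * p₂) • I 1)
    (c02 : M 0 0 * M 0 2 + M 0 1 * M 1 2 = a • M 0 2)
    (c03 : M 0 0 * M 0 3 + M 0 1 * M 1 3 = a • M 0 3)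
    (c12 : M 1 0 * M 0 2 + M 1 1 * M 1 2 = a • M 1 2)
    (c13 : M 1 0 * M 0 3 + M 1 1 * M 1 3 = a • M 1 3)
    (q0 : M 0 2 * M 2 0 + M 0 3 * M 3 0 = s • (M 0 0 - p • I 0))
    (q1 : M 1 2 * M 2 1 + M 1 3 * M 3 1 = s • (M 1 1 - p • I 1)) (hs : s ≠ 0)
    (n01 : M 0 1 ≠ 0) (n02 : M 0 2 ≠ 0) (n03 : M 0 3 ≠ 0) (n13 : M 1 3 ≠ 0) (n23 : M 2 3 ≠ 0)
    (n0 : M 0 0 - e • I 0 ≠ 0) (n1 : M 1 1 - e' • I 1 ≠ 0)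
    (h₁ : p₁ = a ∨ p₁ = p) (h₂ : p₂ = a ∨ p₂ = p) : p₁ = p ∧ p₂ = p := by
  obtain rfl : p₁ = p := by
    rcases h₁ with rfl | rfl
    · exact eq_of_isBlockAlgebra_aux hM e01 e02 sq0 c02 c03 q0 hs n01 n02 n13 n23 n0
    · rfl
  refine ⟨rfl, ?_⟩
  rcases h₂ with rfl | rfl
  swap
  · rfl
  by_contra hap
  obtain ⟨x, e12⟩ := hM.eig (show (1 : Fin 4) ≠ 2 by decide)
  obtain ⟨y, e13⟩ := hM.eig (show (1 : Fin 4) ≠ 3 by decide)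
  have h1 := hM.sub_eig_mul sq1 e12 e13 q1
  have h2 : (s * (p₂ - p₁)) • (M 1 1 - e' • I 1) ≠ 0 :=
    smul_ne_zero (mul_ne_zero hs (sub_ne_zero.2 hap)) n1
  rw [← h1] at h2
  have h3 : (x - e') • (M 1 2 * M 2 1) ≠ 0 ∨ (y - e') • (M 1 3 * M 3 1) ≠ 0 := by
    by_contra! h
    exact h2 (by rw [h.1, h.2, add_zero])
  rcases h3 with h3 | h3
  · obtain ⟨hx, h4⟩ := smul_ne_zero_iff.1 h3
    obtain rfl := hM.eig_root sq1 e12 (left_ne_zero_of_mul h4) (sub_ne_zero.1 hx)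
    rw [e12, add_eq_right] at c12
    exact hM.mul_ne_zero_of_eig e01 e02 n01 n02 c12
  · obtain ⟨hy, h4⟩ := smul_ne_zero_iff.1 h3
    have hy := sub_ne_zero.1 hy
    obtain rfl := hM.eig_root sq1 e13 (left_ne_zero_of_mul h4) hy
    rw [e13, add_eq_right] at c13
    rw [hM.mul_eq_zero_of_ne e10 e13 hy.symm, add_zero] at c03
    have hxe : y ≠ e := by
      rintro rfl
      exact hM.mul_ne_zero_of_eig e01 c03 n01 n03 c13
    exact hap (hM.eig_root sq0 c03 n03 hxe)

end

section

open Classical Finset Function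

variable {V : Type*} {G : SimpleGraph V} {S : Finset V} {t : ℕ} {x : V}

theorem IsSRG.unique {k lam mu k' lam' mu' : ℕ} (h : IsSRG G S k lam mu)
    (h' : IsSRG G S k' lam' mu') (h1 : ∃ u ∈ S, ∃ v ∈ S, G.Adj u v)
    (h2 : ∃ u ∈ S, ∃ v ∈ S, u ≠ v ∧ ¬ G.Adj u v) : k = k' ∧ lam = lam' ∧ mu = mu' := by
  obtain ⟨u, hu, v, hv, huv⟩ := h1
  obtain ⟨u', hu', v', hv', hne, hn⟩ := h2
  have e1 := h u hu v hv
  have e2 := h u' hu' v' hv'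
  rw [h' u hu v hv] at e1
  rw [h' u' hu' v' hv'] at e2
  simp only [huv.ne, huv, hne, hn, if_true, if_false] at e1 e2
  exact ⟨by rw [← h.card_nb hu, h'.card_nb hu], e1.symm, e2.symm⟩

theorem Reg.move_of_adj (h : Reg G S t) (ht : 3 ≤ t) {a b c d x y : V} (ha : a ∈ S) (hb : b ∈ S)
    (hc : c ∈ S) (hd : d ∈ S) (hx : x ∈ S) (hy : y ∈ S) (hab : G.Adj a b) (hxy : G.Adj x y)
    (hca : c ≠ a) (hcb : c ≠ b) (hda : d ≠ a) (hdb : d ≠ b) (hdc : d ≠ c) :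
    ∃ c' ∈ S, ∃ d' ∈ S, c' ≠ x ∧ c' ≠ y ∧ d' ≠ x ∧ d' ≠ y ∧ (G.Adj c' x ↔ G.Adj c a) ∧
      (G.Adj c' y ↔ G.Adj c b) ∧ (G.Adj d' x ↔ G.Adj d a) ∧ (G.Adj d' y ↔ G.Adj d b) ∧
      (G.Adj d' c' ↔ G.Adj d c) := by
  obtain ⟨c', hc', h1⟩ := h.extend (n := 2) (by omega) (x := ![a, b]) (y := ![x, y]) (z := c)
    (by simp [Fin.forall_fin_two, ha, hb]) (by simp [Fin.forall_fin_two, hx, hy])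
    (by simp [Injective, Fin.forall_fin_two, hab.ne, hab.ne'])
    (by simp [Injective, Fin.forall_fin_two, hxy.ne, hxy.ne'])
    (by simp [Fin.forall_fin_two, hab, hab.symm, hxy, hxy.symm])
    hc (by simp [Fin.forall_fin_two, hca, hcb])
  simp only [Fin.forall_fin_two, Matrix.cons_val_zero, Matrix.cons_val_one] at h1
  obtain ⟨⟨h1, h2⟩, h3, h4⟩ := h1
  obtain ⟨d', hd', h5⟩ := h.extend (n := 3) (by omega) (x := ![a, b, c]) (y := ![x, y, c']) (z := d)
    (by simp [Fin.forall_fin_succ, ha, hb, hc]) (by simp [Fin.forall_fin_succ, hx, hy, hc'])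
    (by simp [Injective, Fin.forall_fin_succ, hab.ne, hab.ne', hca, hcb, hca.symm, hcb.symm])
    (by simp [Injective, Fin.forall_fin_succ, hxy.ne, hxy.ne', h1, h3, h1.symm, h3.symm])
    (by simp [Fin.forall_fin_succ, hab, hab.symm, hxy, hxy.symm, h2, h4, G.adj_comm _ c,
      G.adj_comm _ c'])
    hd (by simp [Fin.forall_fin_succ, hda, hdb, hdc])
  simp only [Fin.forall_fin_succ, Matrix.cons_val_zero, Matrix.cons_val_succ, IsEmpty.forall_iff,
    and_true] at h5
  obtain ⟨⟨h5, h6⟩, ⟨h7, h8⟩, h9, h10⟩ := h5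
  exact ⟨c', hc', d', hd', h1, h3, h5, h7, h2, h4, h6, h8, h10⟩

theorem cn_partition' (T : Finset V) (y u w : V) :
    cn G T u w = cn G (nb G T y) u w + cn G (nn G T y) u w +
      if y ∈ T ∧ G.Adj u y ∧ G.Adj w y then 1 else 0 := by
  by_cases hy : y ∈ T
  · simp only [hy, true_and]; exact cn_partition hy u w
  · simp only [hy, false_and, if_false, add_zero, cn_eq_card]
    rw [← card_union_of_disjoint (disjoint_filter_filter (disjoint_nb_nn y)), ← filter_union]
    congr 2
    ext z
    simp only [mem_union, mem_nb, mem_nn]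
    have : z ∈ T → z ≠ y := by rintro h rfl; exact hy h
    tauto

section fibres

variable {ι : Type*} {m : ℕ} {b : Fin m → V}

theorem Reg.card_nb_fib (h : Reg G S t) (hm : m + 2 ≤ t) (hb : ∀ i, b i ∈ S) (ib : Injective b)
    (τ τ' : Fin m → Prop) : ∃ c, ∀ u ∈ fib G S b τ', #(nb G (fib G S b τ) u) = c := by
  obtain ⟨α, β, γ, hc⟩ := h.coh hm b τ τ' τ'
  exact ⟨γ, fun u hu => by rw [← cn_self, hc b hb ib (by simp) u hu u hu, if_pos rfl]⟩

theorem Reg.B_mul_B_fib [Fintype V] (h : Reg G S t) (hm : m + 2 ≤ t)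
    (τ τ₁ τ₂ : Fin m → Prop) : ∃ c d : ℝ, ∀ b' : Fin m → V, (∀ i, b' i ∈ S) → Injective b' →
      (∀ i j, G.Adj (b' i) (b' j) ↔ G.Adj (b i) (b j)) →
      B G (fib G S b' τ₁) (fib G S b' τ) * B G (fib G S b' τ) (fib G S b' τ₂) =
        c • B G (fib G S b' τ₁) (fib G S b' τ₂) +
          d • (E (fib G S b' τ₁) * E (fib G S b' τ₂)) := by
  obtain ⟨α, β, γ, hc⟩ := h.coh hm b τ τ₁ τ₂
  refine ⟨α - β, γ - β, fun b' hb ib hb' => ?_⟩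
  obtain ⟨n, hn⟩ := h.card_nb_fib hm hb ib τ τ₁
  exact B_mul_B hn fun u hu w hw => by rw [hc b' hb ib hb' u hu w hw]; split_ifs <;> rfl

theorem Reg.isBlockAlgebra [Fintype V] (h : Reg G S t) (hm : m + 2 ≤ t) (hb : ∀ i, b i ∈ S)
    (ib : Injective b) {σ : ι → Fin m → Prop}
    (hσ : ∀ i j, i ≠ j → Disjoint (fib G S b (σ i)) (fib G S b (σ j))) :
    IsBlockAlgebra (fun i j => B G (fib G S b (σ i)) (fib G S b (σ j)))
      (fun i => E (fib G S b (σ i))) where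
  transpose _ _ := B_transpose _ _
  I_mul _ _ := E_mul_B _ _
  mul_I _ _ := B_mul_E _ _
  coh i j l hil := by
    obtain ⟨c, d, hcd⟩ := h.B_mul_B_fib hm (b := b) (σ j) (σ i) (σ l)
    exact ⟨c, by rw [hcd b hb ib (by simp), E_mul_E_of_disjoint (hσ i l hil), smul_zero, add_zero]⟩
  coh_self i j := by
    obtain ⟨c, d, hcd⟩ := h.B_mul_B_fib hm (b := b) (σ j) (σ i) (σ i)
    exact ⟨c, d, by rw [hcd b hb ib (by simp), E_mul_E_self]⟩

end fibres

/-- There is an induced path with three edges. -/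
theorem Reg.exists_path [Fintype V] (h : Reg G S 3) (hG : Good G S) (hx : x ∈ S) :
    ∃ u ∈ nb G S x, ∃ v ∈ nb G S x, ∃ w ∈ nn G S x, u ≠ v ∧ ¬ G.Adj u v ∧ G.Adj w u ∧
      ¬ G.Adj w v := by
  by_contra! hno
  obtain ⟨D⟩ := h.nonempty_split hG hx
  obtain ⟨w, hw, -⟩ := h.edge_nn (by omega) hG.2.2.2 hx
  have h1 := D.srg.card_nb_nn hx hw
  have h2 := D.srg.card_nb hx
  have h3 := D.mu_pos
  have h4 := D.mu_lt
  obtain ⟨u, hu⟩ := card_pos.1 (h1.symm ▸ h3)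
  rw [← h1, ← h2] at h4
  obtain ⟨v, hv, hv'⟩ := exists_mem_notMem_of_card_lt_card h4
  have hwv : ¬ G.Adj w v := fun e => hv' (mem_nb.2 ⟨hv, e⟩)
  obtain ⟨hu, hwu⟩ := mem_nb.1 hu
  have key : ∀ u ∈ nb G S x, ∀ v ∈ nb G S x, G.Adj w u → ¬ G.Adj w v → G.Adj u v := by
    intro u hu v hv h1 h2
    by_contra h3
    exact h2 (hno u hu v hv w hw (by rintro rfl; exact h2 h1) h3 h1)
  obtain ⟨k', lam', mu', srg'⟩ := (h.restrict_nb hx).compl.srg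
  have huv := key u hu v hv hwu hwv
  have h5 := srg' u hu v hv
  rw [if_neg huv.ne, if_neg fun e => (compl_adj'.1 e).2 huv, cn_eq_card, eq_comm,
    card_eq_zero.2] at h5
  · refine not_hasP3_of_cn_eq_zero (fun a ha b hb hab hn => ?_) (h.hasP3_compl_nb hG hx)
    rw [srg' a ha b hb, if_neg hab, if_neg hn, h5]
  · rw [eq_empty_iff_forall_notMem]
    intro z hz
    simp only [mem_filter, compl_adj'] at hz
    by_cases hwz : G.Adj w z
    · exact hz.2.2.2 (key z hz.1 v hv hwz hwv).symm
    · exact hz.2.1.2 (key u hu z hz.1 hwu hwz)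

theorem ne_of_mem_nb_of_mem_nn {u w : V} (hu : u ∈ nb G S x) (hw : w ∈ nn G S x) : u ≠ w :=
  fun e => disjoint_left.1 (disjoint_nb_nn x) hu (e ▸ hw)

variable [Fintype V]

theorem B_mul_B_split {P T U : Finset V} {y : V} {α β γ : ℝ} {c₁ c₂ : ℕ} {p : Prop}
    (h₁ : ∀ u ∈ T, #(nb G (nb G P y) u) = c₁) (h₂ : ∀ u ∈ T, #(nb G (nn G P y) u) = c₂)
    (hp : ∀ u ∈ T, ∀ w ∈ U, y ∈ P ∧ G.Adj u y ∧ G.Adj w y ↔ p)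
    (h : ∀ u ∈ T, ∀ w ∈ U, (cn G P u w : ℝ) = if u = w then γ else if G.Adj u w then α else β) :
    B G T (nb G P y) * B G (nb G P y) U + B G T (nn G P y) * B G (nn G P y) U =
      (α - β) • B G T U + (γ - β) • (E T * E U) := by
  have := B_mul_B_add h₁ h₂ (α := α - if p then 1 else 0) (β := β - if p then 1 else 0)
    (γ := γ - if p then 1 else 0) (U := U) fun u hu w hw => by
      have := h u hu w hw
      rw [cn_partition' P y u w, if_congr (hp u hu w hw) rfl rfl] at this
      push_cast at this
      split_ifs at this ⊢ <;> linarith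
  rw [this]
  congr 2 <;> ring

variable (D : Split G S x)

theorem Split.B_nb_mul_self : B G (nb G S x) (nb G S x) * B G (nb G S x) (nb G S x) =
    (D.a + D.p) • B G (nb G S x) (nb G S x) - (D.a * D.p) • E (nb G S x) := by
  rw [B_mul_B (fun u hu => D.srg_nb.card_nb hu) (α := D.n₃) (β := D.n₂) (γ := D.lam)
    (fun u hu w hw => by rw [D.srg_nb u hu w hw]; split_ifs <;> rfl), E_mul_E_self, D.a_add_p,
    D.a_mul_p]
  module

theorem Split.B_nn_mul_self : B G (nn G S x) (nn G S x) * B G (nn G S x) (nn G S x) =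
    (D.b + D.q) • B G (nn G S x) (nn G S x) - (D.b * D.q) • E (nn G S x) := by
  rw [B_mul_B (fun u hu => D.srg_nn.card_nb hu) (α := D.lamQ) (β := D.muQ) (γ := D.kQ)
    (fun u hu w hw => by rw [D.srg_nn u hu w hw]; split_ifs <;> rfl), E_mul_E_self, D.b_add_q,
    D.b_mul_q]
  module

theorem Split.B_nb_mul : B G (nb G S x) (nb G S x) * B G (nb G S x) (nn G S x) =
    D.a • B G (nb G S x) (nn G S x) := by
  rw [B_mul_B (fun u hu => D.srg_nb.card_nb hu) (α := D.αP) (β := D.βP) (γ := 0)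
    (fun u hu w hw => by
      rw [D.cross_nb u hu w hw, if_neg (ne_of_mem_nb_of_mem_nn hu hw)]; split_ifs <;> rfl),
    E_mul_E_of_disjoint (disjoint_nb_nn x), D.a_eq, smul_zero, add_zero]

theorem Split.B_nn_mul : B G (nn G S x) (nn G S x) * B G (nn G S x) (nb G S x) =
    D.b • B G (nn G S x) (nb G S x) := by
  rw [B_mul_B (fun u hu => D.srg_nn.card_nb hu) (α := D.αQ) (β := D.βQ) (γ := 0)
    (fun u hu w hw => by
      rw [cn_comm, D.cross_nn w hw u hu, if_neg (ne_of_mem_nb_of_mem_nn hw hu).symm]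
      simp only [G.adj_comm]
      split_ifs <;> rfl),
    E_mul_E_of_disjoint (disjoint_nb_nn x).symm, D.b_eq, smul_zero, add_zero]

end

section

open Classical Finset Function

variable {V : Type*} {G : SimpleGraph V} {S : Finset V} {x y : V}

theorem fib_pair (x y : V) (p q : Prop) : fib G S ![x, y] ![p, q] =
    {z ∈ S | (z ≠ x ∧ (G.Adj z x ↔ p)) ∧ z ≠ y ∧ (G.Adj z y ↔ q)} := by
  ext z
  simp [mem_fib, Fin.forall_fin_two]

theorem fib_true_true (x y : V) : fib G S ![x, y] ![True, True] = nb G (nb G S x) y := by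
  ext z
  simp only [fib_pair, mem_filter, mem_nb, G.adj_comm z, iff_true]
  have := fun h : G.Adj x z => h.ne'
  have := fun h : G.Adj y z => h.ne'
  tauto

theorem fib_true_false (x y : V) : fib G S ![x, y] ![True, False] = nn G (nb G S x) y := by
  ext z
  simp only [fib_pair, mem_filter, mem_nb, mem_nn, G.adj_comm z, iff_true, iff_false]
  have := fun h : G.Adj x z => h.ne'
  tauto

theorem fib_false_true (x y : V) : fib G S ![x, y] ![False, True] = nb G (nn G S x) y := by
  ext z
  simp only [fib_pair, mem_filter, mem_nb, mem_nn, G.adj_comm z, iff_true, iff_false]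
  have := fun h : G.Adj y z => h.ne'
  tauto

theorem fib_false_false (x y : V) : fib G S ![x, y] ![False, False] = nn G (nn G S x) y := by
  ext z
  simp only [fib_pair, mem_filter, mem_nn, G.adj_comm z, iff_false]
  tauto

theorem fib_true_false_swap (x y : V) :
    fib G S ![y, x] ![True, False] = fib G S ![x, y] ![False, True] := by
  ext z
  simp only [fib_pair, mem_filter]
  tauto

theorem fib_true_true_swap (x y : V) :
    fib G S ![y, x] ![True, True] = fib G S ![x, y] ![True, True] := by
  ext z
  simp only [fib_pair, mem_filter]
  tauto

/-- The four possible adjacency patterns to an ordered pair of vertices. -/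
def patterns : Fin 4 → Fin 2 → Prop :=
  ![![True, True], ![True, False], ![False, True], ![False, False]]

theorem patterns_injective : Injective patterns := by
  have : ∀ i j : Fin 2 → Bool, (fun n => i n = true) = (fun n => j n = true) → i = j := by
    intro i j h
    ext n
    exact Bool.eq_iff_iff.2 (iff_of_eq (congrFun h n))
  intro i j h
  have h0 := congrFun h 0
  have h1 := congrFun h 1
  fin_cases i <;> fin_cases j <;> simp_all [patterns]

theorem disjoint_fib {m : ℕ} (b : Fin m → V) {τ τ' : Fin m → Prop} (h : τ ≠ τ') :
    Disjoint (fib G S b τ) (fib G S b τ') := by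
  refine disjoint_left.2 fun z h1 h2 => h (funext fun i => propext ?_)
  rw [← ((mem_fib.1 h1).2 i).2, ((mem_fib.1 h2).2 i).2]

theorem Reg.cross_nb_nn (h : Reg G S 4) (hP : HasP3 Gᶜ (nb G S x)) (hQ : HasK3 G (nn G S x))
    (hx : x ∈ S) (hy : y ∈ nb G S x) :
    (∃ u ∈ nb G (nb G S x) y, ∃ v ∈ nn G (nn G S x) y, G.Adj u v) ∧
      ∃ u ∈ nb G (nb G S x) y, ∃ v ∈ nn G (nn G S x) y, ¬ G.Adj u v := by
  obtain ⟨hyS, hxy⟩ := mem_nb.1 hy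
  simp only [mem_nb, mem_nn]
  constructor
  · obtain ⟨a, ha, b, hb, c, hc, hab, hac, hbc, hn⟩ := hP
    rw [compl_adj'] at hab hac hn
    rw [mem_nb] at ha hb hc
    obtain ⟨c', hc', d', hd', h1, h2, h3, h4, h5, h6, h7, h8, h9⟩ := h.move_of_adj (by omega)
      hb.1 hc.1 hx ha.1 hx hyS (by tauto) hxy hb.2.ne hc.2.ne hab.1 hac.1 ha.2.ne'
    exact ⟨c', ⟨⟨hc', (h5.2 hb.2).symm⟩, (h6.2 hc.2).symm⟩, d', ⟨⟨hd', h3, fun e =>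
      hab.2 (h7.1 e.symm)⟩, h4, fun e => hac.2 (h8.1 e.symm)⟩, (h9.2 ha.2.symm).symm⟩
  · obtain ⟨a, ha, b, hb, c, hc, hab, hac, hbc⟩ := hQ
    rw [mem_nn] at ha hb hc
    obtain ⟨c', hc', d', hd', h1, h2, h3, h4, h5, h6, h7, h8, h9⟩ := h.move_of_adj (by omega)
      ha.1 hb.1 hc.1 hx hx hyS hab hxy hac.ne' hbc.ne' ha.2.1.symm hb.2.1.symm hc.2.1.symm
    exact ⟨c', ⟨⟨hc', (h5.2 hac.symm).symm⟩, (h6.2 hbc.symm).symm⟩, d', ⟨⟨hd', h3, fun e =>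
      ha.2.2 (h7.1 e.symm)⟩, h4, fun e => hb.2.2 (h8.1 e.symm)⟩, fun e => hc.2.2 (h9.1 e.symm)⟩

theorem Reg.swap_nb_nn (h : Reg G S 4) (hx : x ∈ S) (hy : y ∈ nb G S x) {u v : V}
    (hu : u ∈ nb G (nb G S x) y) (hv : v ∈ nn G (nb G S x) y) :
    ∃ u' ∈ nb G (nb G S x) y, ∃ v' ∈ nb G (nn G S x) y, G.Adj u' v' ↔ G.Adj u v := by
  have huv := ne_of_mem_nb_of_mem_nn hu hv
  simp only [mem_nb, mem_nn] at hy hu hv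
  obtain ⟨c', hc', d', hd', h1, h2, h3, h4, h5, h6, h7, h8, h9⟩ := h.move_of_adj (by omega)
    hx hy.1 hu.1.1 hv.1.1 hy.1 hx hy.2 hy.2.symm hu.1.2.ne' hu.2.ne' hv.1.2.ne' hv.2.1 huv.symm
  simp only [mem_nb, mem_nn]
  exact ⟨c', ⟨⟨hc', (h6.2 hu.2.symm).symm⟩, (h5.2 hu.1.2.symm).symm⟩, d',
    ⟨⟨hd', h4, fun e => hv.2.2 (h8.1 e.symm).symm⟩, (h7.2 hv.1.2.symm).symm⟩,
    by rw [G.adj_comm, h9, G.adj_comm]⟩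

theorem Reg.swap_nn_nn (h : Reg G S 4) (hx : x ∈ S) (hy : y ∈ nb G S x) {u v : V}
    (hu : u ∈ nn G (nb G S x) y) (hv : v ∈ nn G (nn G S x) y) :
    ∃ u' ∈ nb G (nn G S x) y, ∃ v' ∈ nn G (nn G S x) y, G.Adj u' v' ↔ G.Adj u v := by
  have huv := ne_of_mem_nb_of_mem_nn (nn_subset y hu) (nn_subset y hv)
  simp only [mem_nb, mem_nn] at hy hu hv
  obtain ⟨c', hc', d', hd', h1, h2, h3, h4, h5, h6, h7, h8, h9⟩ := h.move_of_adj (by omega)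
    hx hy.1 hu.1.1 hv.1.1 hy.1 hx hy.2 hy.2.symm hu.1.2.ne' hu.2.1 hv.1.2.1 hv.2.1 huv.symm
  simp only [mem_nb, mem_nn]
  exact ⟨c', ⟨⟨hc', h2, fun e => hu.2.2 (h6.1 e.symm).symm⟩, (h5.2 hu.1.2.symm).symm⟩, d',
    ⟨⟨hd', h4, fun e => hv.2.2 (h8.1 e.symm).symm⟩, h3, fun e => hv.1.2.2 (h7.1 e.symm).symm⟩,
    by rw [G.adj_comm, h9, G.adj_comm]⟩

theorem Reg.cross_nn_nn [Fintype V] (h : Reg G S 4) (hG : Good G S) (hQ : HasP3 G (nn G S x))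
    (hx : x ∈ S) (hy : y ∈ nb G S x) :
    (∃ u ∈ nn G (nb G S x) y, ∃ v ∈ nn G (nn G S x) y, G.Adj u v) ∧
      ∃ u ∈ nn G (nb G S x) y, ∃ v ∈ nn G (nn G S x) y, ¬ G.Adj u v := by
  obtain ⟨hyS, hxy⟩ := mem_nb.1 hy
  simp only [mem_nb, mem_nn]
  constructor
  · obtain ⟨u, hu, v, hv, w, hw, huv, hn, hwu, hwv⟩ := (h.mono (by omega)).exists_path hG hx
    have hvw := ne_of_mem_nb_of_mem_nn hv hw
    rw [mem_nb] at hu hv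
    rw [mem_nn] at hw
    obtain ⟨c', hc', d', hd', h1, h2, h3, h4, h5, h6, h7, h8, h9⟩ := h.move_of_adj (by omega)
      hx hv.1 hu.1 hw.1 hx hyS hv.2 hxy hu.2.ne' huv hw.2.1 hvw.symm hwu.ne
    exact ⟨c', ⟨⟨hc', (h5.2 hu.2.symm).symm⟩, h2, fun e => hn (h6.1 e.symm)⟩, d', ⟨⟨hd', h3,
      fun e => hw.2.2 (h7.1 e.symm).symm⟩, h4, fun e => hwv (h8.1 e.symm)⟩, (h9.2 hwu).symm⟩
  · obtain ⟨a, ha, b, hb, c, hc, hab, hac, hbc, hn⟩ := hQ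
    rw [mem_nn] at ha hb hc
    obtain ⟨c', hc', d', hd', h1, h2, h3, h4, h5, h6, h7, h8, h9⟩ := h.move_of_adj (by omega)
      ha.1 hb.1 hc.1 hx hx hyS hab hxy hac.ne' hbc.symm ha.2.1.symm hb.2.1.symm hc.2.1.symm
    exact ⟨c', ⟨⟨hc', (h5.2 hac.symm).symm⟩, h2, fun e => hn (h6.1 e.symm).symm⟩, d', ⟨⟨hd', h3,
      fun e => ha.2.2 (h7.1 e.symm)⟩, h4, fun e => hb.2.2 (h8.1 e.symm)⟩,
      fun e => hc.2.2 (h9.1 e.symm)⟩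

variable [Fintype V]

theorem Split.B_cross (D : Split G S x) {T U : Finset V} {y : V} (hT : T ⊆ nb G S x)
    (hU : U ⊆ nn G S x) {c₁ c₂ : ℕ} {p : Prop}
    (h₁ : ∀ u ∈ T, #(nb G (nb G (nb G S x) y) u) = c₁)
    (h₂ : ∀ u ∈ T, #(nb G (nn G (nb G S x) y) u) = c₂)
    (hp : ∀ u ∈ T, ∀ w ∈ U, y ∈ nb G S x ∧ G.Adj u y ∧ G.Adj w y ↔ p) :
    B G T (nb G (nb G S x) y) * B G (nb G (nb G S x) y) U +
      B G T (nn G (nb G S x) y) * B G (nn G (nb G S x) y) U = D.a • B G T U := by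
  rw [B_mul_B_split h₁ h₂ hp (α := D.αP) (β := D.βP) (γ := 0) fun u hu w hw => by
      rw [D.cross_nb u (hT hu) w (hU hw), if_neg (ne_of_mem_nb_of_mem_nn (hT hu) (hU hw))]
      split_ifs <;> rfl,
    E_mul_E_of_disjoint ((disjoint_nb_nn x).mono hT hU), D.a_eq, smul_zero, add_zero]

theorem Split.B_nn_split (D : Split G S x) (hx : x ∈ S) {T : Finset V} {y : V}
    (hT : T ⊆ nb G S x) (hy : y ∉ nn G S x) {c₁ c₂ : ℕ}
    (h₁ : ∀ u ∈ T, #(nb G (nb G (nn G S x) y) u) = c₁)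
    (h₂ : ∀ u ∈ T, #(nb G (nn G (nn G S x) y) u) = c₂) :
    B G T (nb G (nn G S x) y) * B G (nb G (nn G S x) y) T +
      B G T (nn G (nn G S x) y) * B G (nn G (nn G S x) y) T =
        (D.r - D.a) • (B G T T - D.p • E T) := by
  rw [B_mul_B_split h₁ h₂ (p := False) (by simp [hy]) (α := D.lam - D.n₃ - 1)
    (β := D.mu - D.n₂ - 1) (γ := D.k - D.lam - 1) fun u hu w hw => by
      have h1 := D.srg u (nb_subset x (hT hu)) w (nb_subset x (hT hw))
      rw [cn_partition hx, if_pos ⟨(mem_nb.1 (hT hu)).2.symm, (mem_nb.1 (hT hw)).2.symm⟩,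
        D.srg_nb u (hT hu) w (hT hw)] at h1
      have h1 := congrArg (Nat.cast (R := ℝ)) h1
      push_cast at h1
      split_ifs at h1 ⊢ <;> linarith,
    E_mul_E_self, D.mu_eq, D.lam_eq, D.n₂_eq, D.n₃_eq, D.lam_eq]
  module

/-- The subconstituents of a neighbourhood have an eigenvalue in common with it. -/
theorem Split.eq_p_of_nb (D : Split G S x) (h : Reg G S 4) (hG : Good G S) (hx : x ∈ S)
    (hP : Good G (nb G S x)) (hQ : Good G (nn G S x)) (hy : y ∈ nb G S x)
    (D' : Split G (nb G S x) y) : D'.p = D.p ∧ D'.q = D.p := by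
  have hyS := nb_subset x hy
  have hxy := (mem_nb.1 hy).2
  have hyQ : y ∉ nn G S x := disjoint_left.1 (disjoint_nb_nn x) hy
  have hRP := h.restrict_nb (t := 3) hx
  obtain ⟨u₁, hu₁, v₁, hv₁, huv₁⟩ := hRP.edge_nb (by omega) hP.1 hy
  obtain ⟨u₂, hu₂, v₂, hv₂, huv₂⟩ := hRP.nonedge_nb (by omega) hP.2.1 hy
  obtain ⟨u₃, hu₃, v₃, hv₃, huv₃⟩ := hRP.edge_nn (by omega) hP.2.2.2 hy
  obtain ⟨u₄, hu₄, v₄, hv₄, huv₄⟩ := hRP.nonedge_nn (by omega) hP.2.2.1 hy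
  obtain ⟨u₅, hu₅, v₅, hv₅, huv₅⟩ := hRP.edge_across (by omega) hP.2.1 hy
  obtain ⟨u₆, hu₆, v₆, hv₆, huv₆⟩ := hRP.nonedge_across (by omega) hP.2.2.2 hy
  obtain ⟨e1, e2, e3⟩ := D'.srg.unique D.srg_nb
    ((h.mono (by omega)).edge_nb (le_refl _) hG.1 hx)
    ((h.mono (by omega)).nonedge_nb (le_refl _) hG.2.1 hx)
  have hσ : ∀ i j, i ≠ j → Disjoint (fib G S ![x, y] (patterns i)) (fib G S ![x, y] (patterns j)) :=
    fun i j hij => disjoint_fib _ fun e => hij (patterns_injective e)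
  have hb : ∀ i, ![x, y] i ∈ S := by simp [Fin.forall_fin_two, hx, hyS]
  have ib : Injective ![x, y] := by simp [Injective, Fin.forall_fin_two, hxy.ne, hxy.ne']
  have hM := h.isBlockAlgebra (m := 2) (by omega) hb ib hσ
  have hc : ∀ i j, ∃ c, ∀ u ∈ fib G S ![x, y] (patterns i),
      #(nb G (fib G S ![x, y] (patterns j)) u) = c := fun i j =>
    h.card_nb_fib (by omega) hb ib _ _
  have hF : (fun i => fib G S ![x, y] (patterns i)) = ![nb G (nb G S x) y, nn G (nb G S x) y,
      nb G (nn G S x) y, nn G (nn G S x) y] := by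
    funext i
    fin_cases i
    exacts [fib_true_true x y, fib_true_false x y, fib_false_true x y, fib_false_false x y]
  obtain ⟨c, d, hcd⟩ := h.B_mul_B_fib (m := 2) (b := ![x, y]) (by omega) ![True, True]
    ![True, True] ![True, False]
  have hcd1 := hcd ![x, y] hb ib (by simp)
  have hcd2 := hcd ![y, x] (by simp [Fin.forall_fin_two, hx, hyS])
    (by simp [Injective, Fin.forall_fin_two, hxy.ne, hxy.ne'])
    (by simp [Fin.forall_fin_two, hxy, hxy.symm])
  rw [fib_true_true_swap, fib_true_false_swap, E_mul_E_of_disjoint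
    (show Disjoint (fib G S ![x, y] ![True, True])
    (fib G S ![x, y] ![False, True]) from hσ 0 2 (by decide)), smul_zero,
    add_zero] at hcd2
  rw [E_mul_E_of_disjoint (show Disjoint (fib G S ![x, y] ![True, True])
    (fib G S ![x, y] ![True, False]) from hσ 0 1 (by decide)), smul_zero, add_zero] at hcd1
  rw [fib_true_true, fib_true_false] at hcd1
  rw [fib_true_true, fib_false_true] at hcd2
  obtain ⟨F, hFe⟩ : ∃ F : Fin 4 → Finset V, F = fun i => fib G S ![x, y] (patterns i) := ⟨_, rfl⟩
  replace hc : ∀ i j, ∃ c, ∀ u ∈ F i, #(nb G (F j) u) = c := by rw [hFe]; exact hc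
  replace hM : IsBlockAlgebra (fun i j => B G (F i) (F j)) (fun i => E (F i)) := by
    rw [hFe]; exact hM
  rw [hF] at hFe
  have hB : ∀ i j, (∃ u ∈ F i, ∃ v ∈ F j, G.Adj u v) → (∃ u ∈ F i, ∃ v ∈ F j, ¬ G.Adj u v) →
      B G (F i) (F j) ≠ 0 := fun i j h1 h2 => by
    obtain ⟨c, hc1⟩ := hc i j
    obtain ⟨d, hd⟩ := hc j i
    exact B_ne_zero hc1 hd h1 h2
  subst hFe
  have n01 := hB 0 1 ⟨_, hu₅, _, hv₅, huv₅⟩ ⟨_, hu₆, _, hv₆, huv₆⟩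
  obtain rfl : c = D'.a := eig_unique (M := fun i j => B G (![nb G (nb G S x) y, nn G (nb G S x) y,
      nb G (nn G S x) y, nn G (nn G S x) y] i) (![nb G (nb G S x) y, nn G (nb G S x) y,
      nb G (nn G S x) y, nn G (nn G S x) y] j)) (i := 0) (j := 1) hcd1 D'.B_nb_mul n01
  have root : ∀ t : ℝ, t ^ 2 = (D'.lam - D'.mu) * t + (D'.k - D'.mu) → t = D.a ∨ t = D.p := by
    intro t ht
    rw [e1, e2, e3] at ht
    have : (t - D.a) * (t - D.p) = 0 := by
      linear_combination ht - t * D.a_add_p + D.a_mul_p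
    exact (mul_eq_zero.1 this).imp sub_eq_zero.1 sub_eq_zero.1
  have hs : D.r - D.a ≠ 0 := fun e => by
    have h1 := D.a_mul
    rw [← sub_eq_zero.1 e, D.lam_eq] at h1
    exact mul_ne_zero (mul_ne_zero D.r_ne D.p_ne) D.one_add_r_ne (by linear_combination -h1)
  have e13 := h.cross_nn_nn hG hQ.2.1 hx hy
  have e03 := h.cross_nb_nn hP.2.2.2 hQ.1 hx hy
  have n03 := hB 0 3 e03.1 e03.2
  have n13 := hB 1 3 e13.1 e13.2
  have n02 := hB 0 2
    (by
      obtain ⟨u, hu, v, hv, huv⟩ := h.swap_nb_nn hx hy hu₅ hv₅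
      exact ⟨u, hu, v, hv, huv.2 huv₅⟩)
    (by
      obtain ⟨u, hu, v, hv, huv⟩ := h.swap_nb_nn hx hy hu₆ hv₆
      exact ⟨u, hu, v, hv, fun e => huv₆ (huv.1 e)⟩)
  obtain ⟨⟨u₇, hu₇, v₇, hv₇, huv₇⟩, u₈, hu₈, v₈, hv₈, huv₈⟩ := e13
  have n23 := hB 2 3
    (by
      obtain ⟨u, hu, v, hv, huv⟩ := h.swap_nn_nn hx hy hu₇ hv₇
      exact ⟨u, hu, v, hv, huv.2 huv₇⟩)
    (by
      obtain ⟨u, hu, v, hv, huv⟩ := h.swap_nn_nn hx hy hu₈ hv₈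
      exact ⟨u, hu, v, hv, fun e => huv₈ (huv.1 e)⟩)
  have n0 := B_sub_smul_E_ne_zero (hc 0 0).choose_spec ⟨_, hu₁, _, hv₁, huv₁⟩
    ⟨_, hu₂, _, hv₂, huv₂⟩ D'.a
  have n1 := B_sub_smul_E_ne_zero (hc 1 1).choose_spec ⟨_, hu₃, _, hv₃, huv₃⟩
    ⟨_, hu₄, _, hv₄, huv₄⟩ D'.b
  have s0 := nb_subset (G := G) (S := nb G S x) y
  have s1 := nn_subset (G := G) (S := nb G S x) y
  have s2 := nb_subset (G := G) (S := nn G S x) y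
  have s3 := nn_subset (G := G) (S := nn G S x) y
  have yes : ∀ {T : Finset V}, ∀ u ∈ nb G T y, (G.Adj u y ↔ True) := fun u hu =>
    iff_true_intro (mem_nb.1 hu).2.symm
  have no : ∀ {T : Finset V}, ∀ u ∈ nn G T y, (G.Adj u y ↔ False) := fun u hu =>
    iff_false_intro fun e => (mem_nn.1 hu).2.2 e.symm
  refine eq_of_isBlockAlgebra hM (e := D'.a) (e' := D'.b) (a := D.a) (s := D.r - D.a) D'.B_nb_mul
    hcd2 D'.B_nn_mul D'.B_nb_mul_self D'.B_nn_mul_self ?_ ?_ ?_ ?_ ?_ ?_ hs n01 n02 n03 n13 n23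
    n0 n1 (root _ D'.p_root) (root _ D'.q_root)
  · exact D.B_cross s0 s2 (hc 0 0).choose_spec (hc 0 1).choose_spec (p := True)
      fun u hu w hw => by rw [yes u hu, yes w hw]; simp [hy]
  · exact D.B_cross s0 s3 (hc 0 0).choose_spec (hc 0 1).choose_spec (p := False)
      fun u hu w hw => by rw [no w hw]; simp
  · exact D.B_cross s1 s2 (hc 1 0).choose_spec (hc 1 1).choose_spec (p := False)
      fun u hu w hw => by rw [no u hu]; simp
  · exact D.B_cross s1 s3 (hc 1 0).choose_spec (hc 1 1).choose_spec (p := False)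
      fun u hu w hw => by rw [no w hw]; simp
  · exact D.B_nn_split hx s0 hyQ (hc 0 2).choose_spec (hc 0 3).choose_spec
  · exact D.B_nn_split hx s1 hyQ (hc 1 2).choose_spec (hc 1 3).choose_spec

end

section

theorem lt_of_shared_pos {u w : ℝ} (hu : 0 < u) (hw : 0 < w) (h1 : 3 ≤ w ^ 2 - 1 + u)
    (h2 : 3 ≤ u ^ 2 - 1 + w) :
    (w ^ 2 - 1 + u) * (u - w + 2) < (u + w - 1) * u * ((u + w - 1) * u + 2 * (u + w - 1) - u) := by
  rcases le_or_gt u 1 with hu1 | hu1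
  · have hw3 : 3 ≤ w := by nlinarith
    have e1 : (w ^ 2 - 1 + u) * (u - w + 2) ≤ 0 :=
      mul_nonpos_of_nonneg_of_nonpos (by linarith) (by linarith)
    have e2 : 0 < (u + w - 1) * u * ((u + w - 1) * u + 2 * (u + w - 1) - u) :=
      mul_pos (mul_pos (by linarith) hu) (by nlinarith)
    linarith
  rcases le_or_gt 1 w with hw1 | hw1
  · obtain ⟨U, rfl⟩ : ∃ U, u = U + 1 := ⟨u - 1, by ring⟩
    obtain ⟨W, rfl⟩ : ∃ W, w = W + 1 := ⟨w - 1, by ring⟩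
    have hU : 0 < U := by linarith
    have hW : 0 ≤ W := by linarith
    rw [← sub_pos]
    ring_nf
    positivity
  · have hu3 : 3 ≤ u := by nlinarith
    have e1 : (w ^ 2 - 1 + u) * (u - w + 2) ≤ u * (u + 2) :=
      mul_le_mul (by nlinarith) (by linarith) (by linarith) hu.le
    have e2 : (u - 1) * u * 7 ≤ (u + w - 1) * u * ((u + w - 1) * u + 2 * (u + w - 1) - u) := by
      refine mul_le_mul ?_ (by nlinarith) (by norm_num) ?_
      · nlinarith
      · exact (mul_pos (by linarith) hu).le
    nlinarith

theorem lt_of_shared_neg {u w : ℝ} (hu : 0 < u) (hw : 0 < w) (h1 : 3 ≤ w ^ 2 + 2 * w - 1 - u)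
    (h2 : 3 ≤ u ^ 2 + 2 * u - 1 - w) :
    (w ^ 2 + 2 * w - 1 - u) * (w - u + 2) <
      (u + w + 3) * (u + 1) * ((u + w + 3) * (u - 1) + u + 1) := by
  have hu1 : 1 < u := by nlinarith
  have e : 0 < (u + w + 3) * (u + 1) * ((u + w + 3) * (u - 1) + u + 1) := by
    have : 0 < u - 1 := by linarith
    positivity
  rcases le_or_gt (w - u + 2) 0 with h | h
  · have := mul_nonpos_of_nonneg_of_nonpos (by linarith : 0 ≤ w ^ 2 + 2 * w - 1 - u) h
    linarith
  rcases le_or_gt w u with hwu | hwu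
  · have e1 : (w ^ 2 + 2 * w - 1 - u) * (w - u + 2) ≤ (u ^ 2 + 2 * u) * 2 :=
      mul_le_mul (by nlinarith) (by linarith) h.le (by positivity)
    have e2 : (u + 3) * (u + 1) * (u + 1) ≤
        (u + w + 3) * (u + 1) * ((u + w + 3) * (u - 1) + u + 1) := by
      refine mul_le_mul ?_ (by nlinarith) (by positivity) (by positivity)
      nlinarith
    nlinarith
  · have e1 : (w ^ 2 + 2 * w - 1 - u) * (w - u + 2) ≤ (w ^ 2 + 2 * w) * ((u + 2) * (u - 1)) :=
      mul_le_mul (by linarith) (by linarith) h.le (by positivity)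
    have e2 : (w ^ 2 + 2 * w) * (u + 2) < (u + 1) * (u + w + 3) ^ 2 := by
      nlinarith [mul_le_mul_of_nonneg_left (by linarith : w ≤ u ^ 2 + 2 * u - 4) hw.le,
        mul_pos hu hw, mul_pos (mul_pos hu hw) hu, mul_pos hu hu, mul_pos (mul_pos hu hu) hu]
    have e3 := mul_lt_mul_of_pos_right e2 (by linarith : 0 < u - 1)
    have e4 : 0 ≤ (u + w + 3) * (u + 1) * (u + 1) := by positivity
    linarith

theorem shared_eq {k r s a lam : ℝ} (hN : k + r ≠ 0) (hr : r ≠ 0) (hs : s ≠ 0) (hs1 : 1 + s ≠ 0)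
    (hl : lam ≠ 0) (h_lam : lam = k + r + s + r * s) (ha : a * (k + r) = r * lam)
    (hK : k * (r - s ^ 2 - 2 * s) = r * (s ^ 2 - 2 * r * s - r))
    (hL : lam * (a - s ^ 2 - 2 * s) = a * (s ^ 2 - 2 * a * s - a)) :
    r = -s ^ 2 * (2 * s + 3) ∧ k = 2 * s ^ 3 * (2 * s + 3) ∧ a = -s * (s ^ 2 + s - 1) := by
  have h1 : r * lam * (k + r + 2 * s * r + r) =
      (k + r) * (s ^ 2 * (r + (k + r)) + 2 * s * (k + r)) := by
    refine mul_left_cancel₀ hl ?_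
    have := congrArg (· * (k + r) ^ 2) hL
    beta_reduce at this
    have e : lam * (a * (k + r) * (k + r) - s ^ 2 * (k + r) ^ 2 - 2 * s * (k + r) ^ 2) =
      a * (k + r) * (s ^ 2 * (k + r) - 2 * (a * (k + r)) * s - a * (k + r)) := by
      linear_combination this
    rw [ha] at e
    linear_combination e
  have hk : k = -2 * r * s := by
    have h2 : s * r * (1 + s) ^ 2 * (k + r) * (k + 2 * r * s) = 0 := by
      rw [h_lam] at h1
      linear_combination (k + r + 2 * s * r) * h1 -
        (k + r + s * r) * (k + r + 2 * s * r + r) * hK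
    simp only [mul_eq_zero, hs, hr, pow_eq_zero_iff, hs1, hN, false_or, ne_eq,
      OfNat.ofNat_ne_zero, not_false_eq_true] at h2
    linarith
  have hr' : r = -s ^ 2 * (2 * s + 3) := by
    refine mul_left_cancel₀ hr ?_
    rw [hk] at hK
    linear_combination hK
  have h12 : 1 - 2 * s ≠ 0 := fun e => hN (by rw [hk]; linear_combination r * e)
  refine ⟨hr', by rw [hk, hr']; ring, mul_right_cancel₀ h12 (mul_left_cancel₀ hr ?_)⟩
  rw [hk] at ha
  rw [hk] at h_lam
  rw [h_lam] at ha
  linear_combination ha + r * (1 - s) * hr'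

end

section

open Classical Finset Function

variable {V : Type*} {G : SimpleGraph V} {S : Finset V} {x y : V}

theorem two_lt_card {T : Finset V} (h1 : ∃ u ∈ T, ∃ v ∈ T, G.Adj u v)
    (h2 : ∃ u ∈ T, ∃ v ∈ T, u ≠ v ∧ ¬ G.Adj u v) : 2 < #T := by
  obtain ⟨u, hu, v, hv, huv⟩ := h1
  obtain ⟨u', hu', v', hv', hne, hn⟩ := h2
  rw [two_lt_card_iff]
  by_cases h : u' = u ∨ u' = v
  · refine ⟨u, v, v', hu, hv, hv', huv.ne, ?_, ?_⟩
    · rintro rfl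
      rcases h with rfl | rfl
      exacts [hne rfl, hn huv.symm]
    · rintro rfl
      rcases h with rfl | rfl
      exacts [hn huv, hne rfl]
  · push Not at h
    exact ⟨u, v, u', hu, hv, hu', huv.ne, h.1.symm, h.2.symm⟩

theorem Split.not_shared (D : Split G S x)
    (hL : D.lam * (D.a - D.p ^ 2 - 2 * D.p) = D.a * (D.p ^ 2 - 2 * D.a * D.p - D.a))
    (h1 : (3 : ℝ) ≤ D.lam) (h2 : (3 : ℝ) ≤ #S - 1 - D.k - 1 + D.r * D.p) :
    D.k ≠ -D.r * (D.p - D.r - 1) := by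
  intro hk
  have ha := D.a_mul
  have hl := D.lam_eq
  have h3 := D.mul_neg
  have h4 := D.one_add_mul_neg
  have h5 := D.identity'
  have hr := D.r_ne
  have hr1 := D.one_add_r_ne
  have hlam := D.lam_pos'
  generalize D.r = r at *
  generalize D.p = p at *
  generalize D.a = a at *
  generalize (D.k : ℝ) = k at *
  generalize (#S : ℝ) = n at *
  generalize (D.lam : ℝ) = lam at *
  subst hk
  have hl : lam = r ^ 2 + 2 * r + p := by linear_combination hl
  have ham : a * (p - r - 2) = -lam := mul_left_cancel₀ hr (by linear_combination -ha)
  have ha0 : a ≠ 0 := by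
    rintro rfl
    linarith
  have hL' : lam * (p + r + 3) = (p - r - 2) * p * ((p - r - 2) * p + 2 * (p - r - 2) - p) := by
    refine mul_left_cancel₀ ha0 ?_
    linear_combination -(p - r - 2) * hL +
      ((p - r - 2) * (a - p ^ 2 - 2 * p) + a * (p + r + 3)) * ham
  have hn : n - 1 - -r * (p - r - 1) = (p - r - 1) * (1 + p) :=
    mul_left_cancel₀ (mul_ne_zero hr hr1) (by linear_combination h5)
  rw [hn] at h2
  rcases mul_neg_iff.1 h3 with ⟨e1, e2⟩ | ⟨e1, e2⟩
  · have := lt_of_shared_neg (u := -p - 1) (w := r) (by nlinarith) e1 (by linarith) (by linarith)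
    rw [hl] at hL'
    linarith
  · have := lt_of_shared_pos (u := p) (w := -r - 1) e2 (by nlinarith) (by linarith) (by linarith)
    rw [hl] at hL'
    linarith

theorem exists_int_of_roots {r a s : ℝ} {m₁ n₁ m₂ n₂ : ℤ} (h1 : r + s = m₁) (h2 : r * s = n₁)
    (h3 : a + s = m₂) (h4 : a * s = n₂) (hra : r ≠ a) : ∃ z : ℤ, s = z := by
  have h5 : m₁ - m₂ ≠ 0 := fun e => hra (by
    have : ((m₁ - m₂ : ℤ) : ℝ) = 0 := by rw [e, Int.cast_zero]
    push_cast at this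
    linarith)
  have h5' : ((m₁ - m₂ : ℤ) : ℝ) ≠ 0 := by exact_mod_cast h5
  set t : ℚ := (n₁ - n₂ : ℤ) / (m₁ - m₂ : ℤ) with ht
  have hst : s = t := by
    rw [ht]
    push_cast at h5' ⊢
    rw [eq_div_iff h5', ← h1, ← h2, ← h3, ← h4]
    ring
  have hroot : t ^ 2 - m₂ * t + n₂ = 0 := by
    have : ((t ^ 2 - m₂ * t + n₂ : ℚ) : ℝ) = 0 := by
      push_cast
      rw [← hst, ← h3, ← h4]
      ring
    exact_mod_cast this
  have hint : IsIntegral ℤ t := by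
    refine ⟨Polynomial.X ^ 2 - Polynomial.C m₂ * Polynomial.X + Polynomial.C n₂, by monicity!, ?_⟩
    simpa [-map_intCast, -eq_intCast, Polynomial.eval₂_C] using hroot
  obtain ⟨z, hz⟩ := IsIntegrallyClosed.isIntegral_iff.1 hint
  exact ⟨z, by rw [hst, ← hz]; simp⟩

end

section

open Classical Finset Function

theorem not_split_parameters {z : ℤ} {e n p r : ℝ} (z0 : z ≠ 0) (z1 : z ≠ -1)
    (he : e = -(z * (z ^ 2 - 3)) / 2) (hn : n = z * (z - 1) * (z ^ 2 - 3)) (hn0 : n ≠ 0)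
    (hmu : n + e * z ≠ 0) (hadd : p + r = e + z) (hmul : p * r = e * z) :
    ¬ (n * (r - p ^ 2 - 2 * p) = r * (p ^ 2 - 2 * r * p - r) ∨ n = -r * (p - r - 1)) := by
  have z0' : (z : ℝ) ≠ 0 := by exact_mod_cast z0
  have z1' : (z : ℝ) + 1 ≠ 0 := by exact_mod_cast fun h : z + 1 = 0 => z1 (by omega)
  have zone : z ≠ 1 := fun h => hn0 (by rw [hn, h]; norm_num)
  have hne : n = -2 * (z - 1) * e := by rw [hn, he]; ring
  have e0 : e ≠ 0 := fun h => hn0 (by rw [hne, h]; ring)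
  have z2 : z ≠ 2 := fun h => hmu (by rw [hn, he, h]; norm_num)
  have hpr : (p = z ∧ r = e) ∨ (p = e ∧ r = z) := by
    have : (p - z) * (p - e) = 0 := by linear_combination p * hadd - hmul
    rcases mul_eq_zero.1 this with h | h
    · exact Or.inl ⟨sub_eq_zero.1 h, by linarith⟩
    · exact Or.inr ⟨sub_eq_zero.1 h, by linarith⟩
  rintro (h | h) <;> rcases hpr with ⟨rfl, rfl⟩ | ⟨rfl, rfl⟩
  · have h1 : 3 * r = -2 * z ^ 3 - z ^ 2 + 4 * z := by
      refine mul_left_cancel₀ e0 ?_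
      rw [hne] at h
      linear_combination h
    have : z * (z + 1) ^ 2 = (0 : ℝ) := by
      rw [he] at h1
      linear_combination 2 * h1
    simp [z0', z1'] at this
  · have h1 : (z - 1) * (z ^ 2 - 3) * (4 + 4 * (z ^ 2 - 3) - z * (z ^ 2 - 3) ^ 2) =
        (z * (z ^ 2 - 3) ^ 2 + 4 * z * (z ^ 2 - 3) - 4 : ℝ) := by
      refine mul_left_cancel₀ (pow_ne_zero 2 z0') ?_
      rw [hn, he] at h
      linear_combination 4 * h
    have h1 : (z - 1) * (z ^ 2 - 3) * (4 + 4 * (z ^ 2 - 3) - z * (z ^ 2 - 3) ^ 2) =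
        z * (z ^ 2 - 3) ^ 2 + 4 * z * (z ^ 2 - 3) - 4 := by exact_mod_cast h1
    have h2 : z ^ 2 - 3 ∣ 4 := ⟨z * (z ^ 2 - 3) + 4 * z -
      (z - 1) * (4 + 4 * (z ^ 2 - 3) - z * (z ^ 2 - 3) ^ 2), by linear_combination h1⟩
    have h3 := Int.le_of_dvd (by norm_num) h2
    have h4 : z ≤ 2 := by nlinarith
    have h5 : -2 ≤ z := by nlinarith
    interval_cases z <;> simp_all
  · have h1 : 2 * (z - 1) = z - r - 1 := by
      refine mul_left_cancel₀ e0 ?_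
      rw [hne] at h
      linear_combination -h
    have h2 : z ^ 3 - 5 * z + 2 = (0 : ℝ) := by
      rw [he] at h1
      linear_combination -2 * h1
    have h2 : z ^ 3 - 5 * z + 2 = 0 := by exact_mod_cast h2
    have h3 : z ∣ 2 := ⟨5 - z ^ 2, by linear_combination h2⟩
    have h4 := Int.le_of_dvd (by norm_num) h3
    have h5 := Int.le_of_dvd (by norm_num) ((neg_dvd (a := z)).2 h3)
    have h6 : -2 ≤ z := by omega
    interval_cases z <;> simp_all
  · have h1 : (z : ℝ) ^ 3 - 2 * z ^ 2 - 5 * z + 4 = 0 := by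
      refine mul_left_cancel₀ z0' ?_
      rw [hn, he] at h
      linear_combination 2 * h
    have h2 : z ^ 3 - 2 * z ^ 2 - 5 * z + 4 = 0 := by exact_mod_cast h1
    have h3 : z ∣ 4 := ⟨5 + 2 * z - z ^ 2, by linear_combination h2⟩
    have h4 := Int.le_of_dvd (by norm_num) h3
    have h5 := Int.le_of_dvd (by norm_num) ((neg_dvd (a := z)).2 h3)
    have h6 : -4 ≤ z := by omega
    interval_cases z <;> simp_all

variable {V : Type*} [Fintype V] {G : SimpleGraph V} {S : Finset V} {x y : V}

/-- A graph whose parameters are those forced by a neighbourhood with the same eigenvalues is not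
`4`-tuple regular. -/
theorem Split.not_parameters (D : Split G S x) (h : Reg G S 4) (hG : Good G S) (hx : x ∈ S) {z : ℤ}
    (hp : D.p = z) (hk : (D.k : ℝ) = z * (2 * z - 1) * (z ^ 2 + z - 1))
    (hr : D.r = -z * (z ^ 2 + z - 1)) (hS : (#S : ℝ) = 2 * z ^ 3 * (2 * z + 3)) : False := by
  have hlam := D.lam_eq
  have hmu := D.mu_eq
  have hn₃ := D.n₃_eq
  have hn₂ := D.n₂_eq
  have hmul := D.a_mul
  have hp0 := D.p_ne
  have hr0 := D.r_ne
  have hp1 := D.one_add_p_ne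
  have hlam0 := D.lam_pos'
  rw [hp] at hp0 hp1
  have z0 : z ≠ 0 := by exact_mod_cast hp0
  have z1 : z ≠ -1 := fun e => hp1 (by rw [e]; norm_num)
  have hlam' : (D.lam : ℝ) = z * (z - 1) * (z ^ 2 - 3) := by
    rw [hlam, hk, hr, hp]; ring
  have hz1 : z ≠ 1 := fun e => hlam0.ne' (by rw [hlam', e]; norm_num)
  have hz1' : (z : ℝ) - 1 ≠ 0 := sub_ne_zero.2 (by exact_mod_cast hz1)
  have ha : D.a = -(z * (z ^ 2 - 3)) / 2 := by
    refine mul_left_cancel₀ (mul_ne_zero hr0 hz1') ?_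
    rw [hk, hlam'] at hmul
    rw [hr] at hmul ⊢
    linear_combination -hmul / 2
  rw [hp] at hn₂ hn₃
  have hR := h.restrict_nb (t := 3) hx
  have hR3 := h.mono (by omega : 3 ≤ 4)
  have c3 : HasP3 Gᶜ (nb G S x) := hR3.hasP3_compl_nb hG hx
  obtain ⟨y, hy, y', hy', hyy⟩ := h.edge_nb (by omega) hG.1 hx
  obtain ⟨u, hu, v, hv, huv, hn⟩ := h.nonedge_nb (by omega) hG.2.1 hx
  by_cases c1 : HasP3 G (nb G S x)
  swap
  · have h1 := (D.of_not_hasP3_nb h hG.2.1 hx c1).1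
    rw [h1] at hlam'
    have h2 : 1 = z * (z - 1) * (z ^ 2 - 3) := by exact_mod_cast hlam'
    have h3 : z ∣ 1 := ⟨(z - 1) * (z ^ 2 - 3), by linear_combination h2⟩
    rcases Int.isUnit_iff.1 (isUnit_of_dvd_one h3) with h4 | h4
    exacts [hz1 h4, z1 h4]
  by_cases c2 : HasK3 G (nb G S x)
  swap
  · have h1 := D.srg_nb y hy y' hy'
    rw [if_neg hyy.ne, if_pos hyy, cn_eq_card, eq_comm, card_eq_zero.2] at h1
    · rw [h1, ha, hlam', Nat.cast_zero] at hn₃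
      have h2 : (z : ℝ) ^ 3 - 3 * z ^ 2 - 3 * z + 11 = 0 := by
        refine mul_left_cancel₀ hp0 ?_
        linear_combination -2 * hn₃
      have h2 : z ^ 3 - 3 * z ^ 2 - 3 * z + 11 = 0 := by exact_mod_cast h2
      have h3 := congrArg (Int.cast (R := ZMod 4)) h2
      push_cast at h3
      generalize (z : ZMod 4) = t at h3
      revert t
      decide
    · rw [eq_empty_iff_forall_notMem]
      intro w hw
      rw [mem_filter] at hw
      exact c2 ⟨y, hy, y', hy', w, hw.1, hyy, hw.2.1, hw.2.2⟩
  by_cases c4 : HasK3 Gᶜ (nb G S x)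
  swap
  · have h1 := card_eq (G := G) hu
    have hv' : v ∈ nn G (nb G S x) u := mem_nn.2 ⟨hv, huv.symm, hn⟩
    have h2 := card_eq (G := G) hv'
    have h3 := D.srg_nb.card_nn_nn hu hv'
    have h4 : #(nn G (nn G (nb G S x) u) v) = 0 := by
      rw [card_eq_zero, eq_empty_iff_forall_notMem]
      intro w hw
      obtain ⟨hw1, hw2, hw3⟩ := mem_nn.1 hw
      obtain ⟨hw4, hw5, hw6⟩ := mem_nn.1 hw1
      exact c4 ⟨u, hu, v, hv, w, hw4, compl_adj'.2 ⟨huv, hn⟩, compl_adj'.2 ⟨hw5.symm, hw6⟩,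
        compl_adj'.2 ⟨hw2.symm, hw3⟩⟩
    have h5 := D.srg.card_nb hx
    have h6 := D.srg_nb.card_nb hu
    have h7 : D.k + D.n₂ = 2 * D.lam + 2 := by omega
    have h7 : (D.k : ℝ) + D.n₂ = 2 * D.lam + 2 := by exact_mod_cast h7
    rw [hk, hn₂, ha, hlam'] at h7
    have h8 : ((z : ℝ) - 1) * ((z + 1) * (z + 2) ^ 2) = 0 := by linear_combination 2 * h7
    have h9 : (z - 1) * ((z + 1) * (z + 2) ^ 2) = 0 := by exact_mod_cast h8
    have h10 : z = -2 := by
      rcases mul_eq_zero.1 h9 with h | h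
      · omega
      rcases mul_eq_zero.1 h with h | h
      · omega
      · have := pow_eq_zero_iff (two_ne_zero) |>.1 h
        omega
    have h11 := D.kQ_eq'
    rw [hp, hr, h10] at h11
    rw [h10] at hk hS
    norm_num at hk hS h11
    have hk' : D.k = 10 := by exact_mod_cast hk
    have hS' : #S = 16 := by exact_mod_cast hS
    have hkQ : D.kQ = 4 := by exact_mod_cast h11
    obtain ⟨u, hu, v, hv, huv, hn⟩ := h.nonedge_nn (by omega) hG.2.2.1 hx
    have i1 := card_eq (G := G) hx
    have i2 := card_eq (G := G) hu
    have i3 := D.srg_nn.card_nb hu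
    have i4 : #(nn G (nn G S x) u) = 0 := by omega
    rw [card_eq_zero] at i4
    have : v ∈ nn G (nn G S x) u := mem_nn.2 ⟨hv, huv.symm, hn⟩
    simp [i4] at this
  obtain ⟨D'⟩ := hR.nonempty_split ⟨c2, c1, c4, c3⟩ hy
  obtain ⟨e1, e2, e3⟩ := D'.srg.unique D.srg_nb ⟨y, hy, y', hy', hyy⟩ ⟨u, hu, v, hv, huv, hn⟩
  have k1 := D'.mu_eq
  have k2 := D'.lam_eq
  have k3 := D'.mu_pos'
  rw [e1, e3] at k1
  rw [e1, e2] at k2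
  rw [e3] at k3
  have k4 := D'.types
  rw [e1] at k4
  refine not_split_parameters z0 z1 ha hlam' hlam0.ne' ?_ (by linarith) (by linarith)
    (k4.imp And.right And.right)
  rw [← hn₂]
  exact k3.ne'

end

section

open Classical Finset Function

variable {V : Type*} [Fintype V] {G : SimpleGraph V} {S : Finset V} {x : V}

/-- The two subconstituents of a `5`-tuple regular graph cannot both contain every graph on three
vertices. -/
theorem Reg.not_good (h : Reg G S 5) (hG : Good G S) (hx : x ∈ S) (hP : Good G (nb G S x))
    (hQ : Good G (nn G S x)) : False := by
  have h4 := h.mono (by omega : 4 ≤ 5)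
  have hRP := h.restrict_nb (t := 4) hx
  have hRQ := h.restrict_nn (t := 4) hx
  obtain ⟨D⟩ := (h.mono (by omega : 3 ≤ 5)).nonempty_split hG hx
  obtain ⟨y, hy, y', hy', hyy⟩ := h.edge_nb (by omega) hG.1 hx
  obtain ⟨D'⟩ := (hRP.mono (by omega : 3 ≤ 4)).nonempty_split hP hy
  obtain ⟨hp, hq⟩ := D.eq_p_of_nb h4 hG hx hP hQ hy D'
  obtain ⟨e1, e2, e3⟩ := D'.srg.unique D.srg_nb ⟨y, hy, y', hy', hyy⟩
    (h.nonedge_nb (by omega) hG.2.1 hx)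
  have hr : D'.r = D.a := by
    have := D.a_add_p
    rw [Split.r, e2, e3, hp]
    linarith
  have hL : D.lam * (D.a - D.p ^ 2 - 2 * D.p) = D.a * (D.p ^ 2 - 2 * D.a * D.p - D.a) := by
    rcases D'.types with ⟨-, ht⟩ | ⟨ht, -⟩
    · rwa [e1, hr, hp] at ht
    · have h1 := D'.mul_neg
      rw [← ht, hq, hp] at h1
      exact absurd h1 (mul_self_nonneg _).not_gt
  have hlam : 2 < D.lam := by
    rw [← D.srg_nb.card_nb hy]
    exact two_lt_card (hRP.edge_nb (by omega) hP.1 hy) (hRP.nonedge_nb (by omega) hP.2.1 hy)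
  have hco : (3 : ℝ) ≤ #S - 1 - D.k - 1 + D.r * D.p := by
    obtain ⟨w, hw, -⟩ := h.edge_nn (by omega) hG.2.2.2 hx
    have h1 := two_lt_card (hRQ.edge_nn (by omega) hQ.2.2.2 hw)
      (hRQ.nonedge_nn (by omega) hQ.2.2.1 hw)
    have h2 := card_eq (G := G) hx
    have h3 := card_eq (G := G) hw
    rw [D.srg.card_nb hx] at h2
    rw [D.srg_nn.card_nb hw] at h3
    have h4 : D.k + D.kQ + 5 ≤ #S := by omega
    have h4 : (D.k : ℝ) + D.kQ + 5 ≤ #S := by exact_mod_cast h4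
    rw [D.kQ_eq'] at h4
    linarith
  have hK : D.k * (D.r - D.p ^ 2 - 2 * D.p) = D.r * (D.p ^ 2 - 2 * D.r * D.p - D.r) := by
    rcases D.types with ⟨-, ht⟩ | ⟨-, ht⟩
    · exact ht
    · exact absurd ht (D.not_shared hL (by exact_mod_cast hlam) hco)
  obtain ⟨i1, i2, i3⟩ := shared_eq D.k_add_r_ne D.r_ne D.p_ne D.one_add_p_ne D.lam_pos'.ne' D.lam_eq
    D.a_mul hK hL
  have hra : D.r ≠ D.a := fun e => by
    have h1 := D.a_mul
    have h2 := D.lam_eq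
    rw [← e] at h1
    refine mul_ne_zero (mul_ne_zero D.r_ne D.p_ne) D.one_add_r_ne ?_
    linear_combination -h1 - D.r * h2
  obtain ⟨z, hz⟩ := exists_int_of_roots (r := D.r) (a := D.a) (s := D.p) (m₁ := D.lam - D.mu)
    (n₁ := D.mu - D.k) (m₂ := D.n₃ - D.n₂) (n₂ := D.n₂ - D.lam)
    (by push_cast; rw [Split.r]; ring) (by push_cast; rw [D.mu_eq]; ring)
    (by push_cast; exact D.a_add_p) (by push_cast; exact D.a_mul_p) hra
  rw [hz] at i1 i2 i3
  refine D'.not_parameters hRP hP hy (hp.trans hz) ?_ (hr.trans i3) ?_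
  · rw [e1, D.lam_eq, i1, i2, hz]; ring
  · rw [D.srg.card_nb hx, i2]

/-- A neighbourhood in a `5`-tuple regular graph is small, contains every graph on three vertices,
or has the parameters of a neighbourhood in the Schläfli graph. -/
theorem Reg.nb_cases (h : Reg G S 5) (hG : Good G S) (hx : x ∈ S) :
    #(nb G S x) ≤ 5 ∨ Good G (nb G S x) ∨
      #(nb G S x) = 10 ∧ #S = 27 ∧ ¬ HasK3 G (nn G S x) := by
  have h4 := h.mono (by omega : 4 ≤ 5)
  have h3 := h.mono (by omega : 3 ≤ 5)
  have hR := h.restrict_nb (t := 4) hx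
  have c4 := h3.hasP3_compl_nb hG hx
  by_cases c2 : HasP3 G (nb G S x)
  swap
  · obtain ⟨D⟩ := h3.nonempty_split hG hx
    rw [D.srg.card_nb hx]
    rcases (D.of_not_hasP3_nb h4 hG.2.1 hx c2).2 with e | e
    · exact Or.inl (by omega)
    · exact Or.inr (Or.inr e)
  by_cases c1 : HasK3 G (nb G S x)
  swap
  · exact Or.inl (hR.card_eq_five c1 c2 c4).le
  by_cases c3 : HasK3 Gᶜ (nb G S x)
  swap
  · exact Or.inl (hR.compl.card_eq_five c3 c4 (by rwa [compl_compl])).le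
  exact Or.inr (Or.inl ⟨c1, c2, c3, c4⟩)

theorem Reg.card_nb_le_or (h : Reg G S 5) (hG : Good G S) (hx : x ∈ S) :
    #(nb G S x) ≤ 5 ∨ #(nn G S x) ≤ 5 := by
  have h1 := h.nb_cases hG hx
  have h2 := h.compl.nb_cases hG.compl hx
  rw [nb_compl, nn_compl] at h2
  have h3 := card_eq (G := G) hx
  by_contra! hk
  rcases h1 with h1 | h1 | ⟨h1, h1', h1''⟩
  · omega
  · rcases h2 with h2 | h2 | ⟨h2, h2', h2''⟩
    · omega
    · refine h.not_good hG hx h1 ?_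
      simpa only [compl_compl] using h2.compl
    · exact h2'' h1.2.2.1
  · rcases h2 with h2 | h2 | ⟨h2, h2', h2''⟩
    · omega
    · refine h1'' ?_
      simpa only [compl_compl] using h2.2.2.1
    · omega

theorem isHomogeneous_of_good (h : Reg G univ 5) (hG : Good G univ) : G.IsHomogeneous := by
  obtain ⟨k, lam, mu, srg⟩ := (h.mono (by omega : 2 ≤ 5)).srg
  have hk : ∀ x, #(nb G univ x) = k := fun x => srg.card_nb (mem_univ x)
  obtain ⟨x, -⟩ := hG.1
  rcases h.card_nb_le_or hG (mem_univ x) with h1 | h1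
  · exact isHomogeneous_of_card_nb_le h fun y => by rwa [hk y, ← hk x]
  · refine isHomogeneous_of_compl (isHomogeneous_of_card_nb_le h.compl fun y => ?_)
    have h2 := card_eq (G := G) (mem_univ x)
    have h3 := card_eq (G := G) (mem_univ y)
    rw [hk] at h2 h3
    rw [nb_compl]
    omega

theorem hasP3_of_not_trans (h : ¬ ∀ a b c, G.Adj a b → G.Adj a c → b ≠ c → G.Adj b c) :
    HasP3 G univ := by
  push Not at h
  obtain ⟨a, b, c, h1, h2, h3, h4⟩ := h
  exact ⟨a, mem_univ _, b, mem_univ _, c, mem_univ _, h1, h2, h3, h4⟩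

theorem isHomogeneous_of_not_hasK3 (h : Reg G univ 5) (h1 : ¬ HasK3 G univ) (h2 : HasP3 G univ)
    (h3 : HasP3 Gᶜ univ) : G.IsHomogeneous :=
  isHomogeneous_of_card_nb_le h fun _ => by
    rw [← (h.mono (by omega : 4 ≤ 5)).card_eq_five h1 h2 h3]
    exact card_le_card (nb_subset _)

theorem isHomogeneous_of_reg (h : Reg G univ 5) : G.IsHomogeneous := by
  by_cases c2 : ∀ a b c, G.Adj a b → G.Adj a c → b ≠ c → G.Adj b c
  · exact isHomogeneous_of_trans h (by omega) c2
  by_cases c4 : ∀ a b c, Gᶜ.Adj a b → Gᶜ.Adj a c → b ≠ c → Gᶜ.Adj b c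
  · exact isHomogeneous_of_compl (isHomogeneous_of_trans h.compl (by omega) c4)
  replace c2 := hasP3_of_not_trans c2
  replace c4 := hasP3_of_not_trans c4
  by_cases c1 : HasK3 G univ
  swap
  · exact isHomogeneous_of_not_hasK3 h c1 c2 c4
  by_cases c3 : HasK3 Gᶜ univ
  swap
  · exact isHomogeneous_of_compl (isHomogeneous_of_not_hasK3 h.compl c3 c4 (by rwa [compl_compl]))
  exact isHomogeneous_of_good h ⟨c1, c2, c3, c4⟩

end

end TupleRegular

/-- **Cameron's theorem**: every finite 5-tuple regular graph is homogeneous. -/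
theorem five_tuple_regular_is_homogeneous {V : Type} [Fintype V]
    (Γ : SimpleGraph V) (hΓ : Γ.IsTupleRegular 5) : Γ.IsHomogeneous := by
  exact TupleRegular.isHomogeneous_of_reg (TupleRegular.reg_of_isTupleRegular hΓ)
end

section
/- Let G be a countably infinite group which cannot be written as the union of finitely many left translates of non-principal square-root sets together with a finite set; that is, there do not exist elements g_1,…,g_m ∈ G, elements a_1,…,a_m ∈ G with each a_i ≠ 1, and a finite set F ⊆ G with G = F ∪ g_1·√a_1 ∪ … ∪ g_m·√a_m, where √a = {x ∈ G : x² = a}. Then there exists S ⊆ G with 1 ∉ S and S = S^{-1} such that the Cayley graph of G with connection set S has the extension property; hence G embeds as a regular subgroup of the automorphism group of the random graph R. -/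
/-- The extension property characterising the random graph `R`. -/
def SimpleGraph.HasExtensionProperty {V : Type*} (Γ : SimpleGraph V) : Prop :=
  ∀ U W : Finset V, Disjoint U W →
    ∃ z, z ∉ U ∧ z ∉ W ∧ (∀ u ∈ U, Γ.Adj z u) ∧ (∀ w ∈ W, ¬ Γ.Adj z w)

/-- A point outside finitely many left translates of non-principal square-root sets, whose
quotients by `U ∪ W` avoid a given finite set. -/
theorem exists_avoiding_of_not_covered_by_square_roots {G : Type*} [Group G]
    (h : ¬ ∃ (m : ℕ) (g a : Fin m → G) (F : Finset G), (∀ i, a i ≠ 1) ∧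
      ∀ x : G, x ∈ F ∨ ∃ i, x ∈ (fun t => g i * t) '' {u : G | u ^ 2 = a i})
    (U W : Finset G) (hUW : Disjoint U W) (A : Finset G) :
    ∃ z, z ∉ U ∧ z ∉ W ∧ (∀ v, v ∈ U ∨ v ∈ W → z * v⁻¹ ∉ A) ∧
      ∀ u ∈ U, ∀ w ∈ W, z * u⁻¹ * z ≠ w := by
  classical
  by_contra hz
  let e := (U ×ˢ W).equivFin.symm
  refine h ⟨(U ×ˢ W).card, fun i => (e i).1.1, fun i => (e i).1.1⁻¹ * (e i).1.2,
    U ∪ W ∪ (A ×ˢ (U ∪ W)).image (fun q => q.1 * q.2), fun i hi => ?_, fun x => ?_⟩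
  · obtain ⟨hu, hw⟩ := Finset.mem_product.1 (e i).2
    exact Finset.disjoint_left.1 hUW hu (inv_mul_eq_one.1 hi ▸ hw)
  · by_contra hx
    rw [not_or] at hx
    obtain ⟨hxF, hxr⟩ := hx
    simp only [Finset.mem_union, not_or] at hxF
    refine hz ⟨x, hxF.1.1, hxF.1.2, fun v hv hA => hxF.2 ?_, fun u hu w hw hxw => hxr ?_⟩
    · exact Finset.mem_image.2 ⟨(x * v⁻¹, v),
        Finset.mem_product.2 ⟨hA, Finset.mem_union.2 hv⟩, by simp⟩
    · refine ⟨e.symm ⟨(u, w), Finset.mem_product.2 ⟨hu, hw⟩⟩, u⁻¹ * x, ?_, ?_⟩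
      · simp [pow_two, ← hxw, mul_assoc]
      · simp

/-- If suitable points always exist, they can be chosen successively so that the quotients of each
one by its pair of sets are distinct from those of the earlier ones and from their inverses. -/
theorem exists_seq_separated_quotients {G : Type*} [Group G] (U W : ℕ → Finset G)
    (h : ∀ (n : ℕ) (A : Finset G), ∃ z, z ∉ U n ∧ z ∉ W n ∧
      (∀ v, v ∈ U n ∨ v ∈ W n → z * v⁻¹ ∉ A) ∧ ∀ u ∈ U n, ∀ w ∈ W n, z * u⁻¹ * z ≠ w) :
    ∃ z : ℕ → G, (∀ n, z n ∉ U n ∧ z n ∉ W n ∧ ∀ u ∈ U n, ∀ w ∈ W n, z n * u⁻¹ * z n ≠ w) ∧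
      ∀ m n, m < n → ∀ v, v ∈ U m ∨ v ∈ W m → ∀ v', v' ∈ U n ∨ v' ∈ W n →
        z n * v'⁻¹ ≠ z m * v⁻¹ ∧ z n * v'⁻¹ ≠ (z m * v⁻¹)⁻¹ := by
  classical
  choose g hgU hgW hgA hgR using h
  let T : ℕ → Finset G → Finset G := fun n A => (U n ∪ W n).image (fun v => g n A * v⁻¹)
  let used : ℕ → Finset G := fun n => n.rec ∅ (fun n A => A ∪ (T n A ∪ (T n A).image (·⁻¹)))
  have hmono : Monotone used := monotone_nat_of_le_succ fun n => Finset.subset_union_left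
  refine ⟨fun n => g n (used n), fun n => ⟨hgU _ _, hgW _ _, hgR _ _⟩, ?_⟩
  intro m n hmn v hv v' hv'
  have hT : g m (used m) * v⁻¹ ∈ T m (used m) :=
    Finset.mem_image.2 ⟨v, Finset.mem_union.2 hv, rfl⟩
  have hsub : T m (used m) ∪ (T m (used m)).image (·⁻¹) ⊆ used n :=
    Finset.subset_union_right.trans (hmono (Nat.succ_le_of_lt hmn))
  have hn := hgA n (used n) v' hv'
  refine ⟨fun he => hn ?_, fun he => hn ?_⟩ <;> rw [he]
  · exact hsub (Finset.mem_union_left _ hT)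
  · exact hsub (Finset.mem_union_right _ (Finset.mem_image_of_mem _ hT))

/-- **Cameron–Johnson**: if a countably infinite group `G` is not the union of finitely
many left translates of non-principal square-root sets `√a = {x : x² = a}` (`a ≠ 1`)
together with a finite set, then some Cayley graph of `G` has the extension property;
hence `G` embeds as a regular subgroup of the automorphism group of the random graph. -/
theorem cayley_random_graph (G : Type) [Group G] [Countable G] [Infinite G]
    (h : ¬ ∃ (m : ℕ) (g a : Fin m → G) (F : Finset G), (∀ i, a i ≠ 1) ∧
      ∀ x : G, x ∈ F ∨ ∃ i, x ∈ (fun t => g i * t) '' {u : G | u ^ 2 = a i}) :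
    ∃ (S : Set G) (Γ : SimpleGraph G), (1 : G) ∉ S ∧ S⁻¹ = S ∧
      (∀ x y : G, Γ.Adj x y ↔ x ≠ y ∧ x * y⁻¹ ∈ S) ∧ Γ.HasExtensionProperty := by
  classical
  have : Nonempty {p : Finset G × Finset G // Disjoint p.1 p.2} :=
    ⟨⟨(∅, ∅), Finset.disjoint_empty_left _⟩⟩
  obtain ⟨p, hp⟩ := exists_surjective_nat {p : Finset G × Finset G // Disjoint p.1 p.2}
  obtain ⟨z, hz, hsep⟩ := exists_seq_separated_quotients (fun n => (p n).1.1)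
    (fun n => (p n).1.2)
    fun n A => exists_avoiding_of_not_covered_by_square_roots h _ _ (p n).2 A
  let S : Set G := {s | ∃ n, ∃ u ∈ (p n).1.1, s = z n * u⁻¹ ∨ s = (z n * u⁻¹)⁻¹}
  have hinv : ∀ s ∈ S, s⁻¹ ∈ S := by
    rintro s ⟨n, u, hu, rfl | rfl⟩
    · exact ⟨n, u, hu, Or.inr rfl⟩
    · exact ⟨n, u, hu, Or.inl (inv_inv _)⟩
  let Γ : SimpleGraph G :=
    { Adj := fun x y => x ≠ y ∧ x * y⁻¹ ∈ S
      symm := ⟨fun x y hxy => ⟨hxy.1.symm, by simpa using hinv _ hxy.2⟩⟩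
      loopless := ⟨fun x hx => hx.1 rfl⟩ }
  refine ⟨S, Γ, ?_, ?_, fun x y => Iff.rfl, ?_⟩
  · rintro ⟨n, u, hu, hs | hs⟩
    · exact (hz n).1 (mul_inv_eq_one.1 hs.symm ▸ hu)
    · exact (hz n).1 (mul_inv_eq_one.1 (inv_eq_one.1 hs.symm) ▸ hu)
  · ext s
    exact ⟨fun hs => by simpa using hinv _ hs, fun hs => hinv s hs⟩
  · intro U W hUW
    obtain ⟨n, hn⟩ := hp ⟨(U, W), hUW⟩
    have hU : (p n).1.1 = U := by rw [hn]
    have hW : (p n).1.2 = W := by rw [hn]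
    subst hU hW
    refine ⟨z n, (hz n).1, (hz n).2.1, fun u hu => ⟨?_, n, u, hu, Or.inl rfl⟩, ?_⟩
    · rintro rfl
      exact (hz n).1 hu
    · rintro w hw ⟨-, m, u, hu, hs⟩
      rcases lt_trichotomy m n with hmn | rfl | hmn
      · have := hsep m n hmn u (Or.inl hu) w (Or.inr hw)
        exact hs.elim this.1 this.2
      · rcases hs with hs | hs
        · have hwu : w = u := inv_injective (mul_left_cancel hs)
          exact Finset.disjoint_left.1 hUW hu (hwu ▸ hw)
        · refine (hz m).2.2 u hu w hw ?_
          rw [← inv_inj, inv_inv, mul_inv_rev, inv_inv] at hs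
          rw [← hs, inv_mul_cancel_right]
      · have := hsep n m hmn w (Or.inr hw) u (Or.inl hu)
        exact hs.elim (fun e => this.1 e.symm) (fun e => this.2 (by rw [e, inv_inv]))
end
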